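/- arXiv:2105.08029 — 2 statements merged into one kernel-verified Lean document; each statement's English description precedes it below -/
import Mathlib

section
/- Let 1 < p < ∞, −1 < α < ∞, let ω be a radial weight in the class D̂, and let ν(s) = ω(s) ω̂₁(s)^α. Then the maximal Bergman projection P⁺_ω is bounded on L^p_ν if and only if A_p(ω,ν) < ∞ and ω ∈ 𝒟. -/
open MeasureTheory Set Metric
open scoped ENNReal NNReal

noncomputable section

/-- `ω̂(r) = ∫_r^1 ω(s) ds`. -/
def hatw (w : ℝ → ℝ) (r : ℝ) : ℝ := ∫ s in Set.Ioo r 1, w s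

/-- `ω̂₁(r) = ∫_r^1 s ω(s) ds`. -/
def hat1 (w : ℝ → ℝ) (r : ℝ) : ℝ := ∫ s in Set.Ioo r 1, s * w s

/-- A radial weight: nonnegative, integrable on `[0,1)`, with `ω̂(r) > 0` for `0 ≤ r < 1`. -/
def IsRadialWeight (w : ℝ → ℝ) : Prop :=
  (∀ r ∈ Set.Ico (0:ℝ) 1, 0 ≤ w r) ∧ MeasureTheory.IntegrableOn w (Set.Ico (0:ℝ) 1) ∧
    ∀ r ∈ Set.Ico (0:ℝ) 1, 0 < hatw w r

/-- The class `D̂`: `sup_{0 ≤ r < 1} ω̂(r)/ω̂((1+r)/2) < ∞`. -/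
def Dhat (w : ℝ → ℝ) : Prop :=
  ∃ C : ℝ, ∀ r ∈ Set.Ico (0:ℝ) 1, hatw w r ≤ C * hatw w ((1 + r) / 2)

/-- The class `Ď`: there are `K > 1` and `C > 1` with `ω̂(r) ≥ C ω̂(1-(1-r)/K)`. -/
def Dcheck (w : ℝ → ℝ) : Prop :=
  ∃ K > (1:ℝ), ∃ C > (1:ℝ), ∀ r ∈ Set.Ico (0:ℝ) 1, C * hatw w (1 - (1 - r) / K) ≤ hatw w r

/-- The odd moment `ω_{2n+1} = ∫₀¹ r^{2n+1} ω(r) dr`. -/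
def moment (w : ℝ → ℝ) (n : ℕ) : ℝ := ∫ r in Set.Ioo (0:ℝ) 1, r ^ (2 * n + 1) * w r

/-- The Bergman reproducing kernel `B_z^ω(ζ) = Σ_n (conj z · ζ)^n / (2 ω_{2n+1})`. -/
def Bker (w : ℝ → ℝ) (z ζ : ℂ) : ℂ :=
  ∑' n : ℕ, ((starRingEnd ℂ) z * ζ) ^ n / ((2 * moment w n : ℝ) : ℂ)

/-- The `L^p_ν` norm (with `dA` = area measure divided by `π`) of a complex-valued
function on the unit disc. -/
def LpC (p : ℝ) (v : ℝ → ℝ) (f : ℂ → ℂ) : ℝ≥0∞ :=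
  ((∫⁻ z in Metric.ball (0:ℂ) 1, ENNReal.ofReal (‖f z‖ ^ p * v ‖z‖)) /
    ENNReal.ofReal Real.pi) ^ (1 / p)

/-- The Bergman projection `P_ω(f)(z) = ∫_𝔻 f(ζ) conj(B_z^ω(ζ)) ω(ζ) dA(ζ)`. -/
def Pw (w : ℝ → ℝ) (f : ℂ → ℂ) (z : ℂ) : ℂ :=
  (∫ ζ in Metric.ball (0:ℂ) 1, f ζ * (starRingEnd ℂ) (Bker w z ζ) * ((w ‖ζ‖ : ℝ) : ℂ)) /
    ((Real.pi : ℝ) : ℂ)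

/-- `P_ω` is bounded on `L^p_ν`: for every `f ∈ L^p_ν` the defining integral converges
absolutely for a.e. `z ∈ 𝔻` and `‖P_ω f‖_{L^p_ν} ≤ C ‖f‖_{L^p_ν}`. -/
def PwBounded (p : ℝ) (w v : ℝ → ℝ) : Prop :=
  ∃ C > (0:ℝ), ∀ f : ℂ → ℂ, Measurable f → LpC p v f < ⊤ →
    (∀ᵐ z ∂(volume.restrict (Metric.ball (0:ℂ) 1)),
      (∫⁻ ζ in Metric.ball (0:ℂ) 1, ENNReal.ofReal (‖f ζ‖ * ‖Bker w z ζ‖ * w ‖ζ‖)) < ⊤) ∧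
    LpC p v (Pw w f) ≤ ENNReal.ofReal C * LpC p v f

/-- `σ(s) = (ω(s)/ν(s)^{1/p})^{p'}`, as an extended nonnegative real (so `σ(s) = ∞`
when `ν(s) = 0 < ω(s)`). -/
def sigmaE (p : ℝ) (w v : ℝ → ℝ) (s : ℝ) : ℝ≥0∞ :=
  (ENNReal.ofReal (w s) / ENNReal.ofReal (v s) ^ (1 / p)) ^ (p / (p - 1))

/-- The Muckenhoupt-type quantity
`A_p(ω,ν) = sup_{0 ≤ r < 1} ν̂₁(r)^{1/p} σ̂₁(r)^{1/p'} / ω̂₁(r)` (note `1/p' = 1 - 1/p`). -/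
def ApE (p : ℝ) (w v : ℝ → ℝ) : ℝ≥0∞ :=
  ⨆ r ∈ Set.Ico (0:ℝ) 1,
    (∫⁻ s in Set.Ioo r 1, ENNReal.ofReal (s * v s)) ^ (1 / p) *
      (∫⁻ s in Set.Ioo r 1, ENNReal.ofReal s * sigmaE p w v s) ^ (1 - 1 / p) /
      ENNReal.ofReal (hat1 w r)

/-- The `L^p_ν` norm of a real-valued function on the disc. -/
def LpR (p : ℝ) (v : ℝ → ℝ) (f : ℂ → ℝ) : ℝ≥0∞ :=
  ((∫⁻ z in Metric.ball (0:ℂ) 1, ENNReal.ofReal (|f z| ^ p * v ‖z‖)) /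
    ENNReal.ofReal Real.pi) ^ (1 / p)

/-- The maximal Bergman projection `P⁺_ω(f)(z) = ∫_𝔻 f(ζ) |B_z^ω(ζ)| ω(ζ) dA(ζ)`. -/
def Pplus (w : ℝ → ℝ) (f : ℂ → ℂ) (z : ℂ) : ℝ :=
  (∫ ζ in Metric.ball (0:ℂ) 1, ‖f ζ‖ * ‖Bker w z ζ‖ * w ‖ζ‖) / Real.pi

/-- `P⁺_ω` is bounded on `L^p_ν`. -/
def PplusBounded (p : ℝ) (w v : ℝ → ℝ) : Prop :=
  ∃ C > (0:ℝ), ∀ f : ℂ → ℂ, Measurable f → LpC p v f < ⊤ →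
    (∀ᵐ z ∂(volume.restrict (Metric.ball (0:ℂ) 1)),
      (∫⁻ ζ in Metric.ball (0:ℂ) 1, ENNReal.ofReal (‖f ζ‖ * ‖Bker w z ζ‖ * w ‖ζ‖)) < ⊤) ∧
    LpR p v (Pplus w f) ≤ ENNReal.ofReal C * LpC p v f

/-- Tail of a measure on the line. -/
def FF (μ : Measure ℝ) (r : ℝ) : ℝ := μ.real (Ioi r)

/-- Moments `∫ s^(2n) dμ`. -/
def mom (μ : Measure ℝ) (n : ℕ) : ℝ := ∫ s, s ^ (2 * n) ∂μ

/-- The basic properties of the measure `s ω(s) ds`. -/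
structure Good (μ : Measure ℝ) : Prop where
  fin : IsFiniteMeasure μ
  supp : ∀ᵐ s ∂μ, s ∈ Ioo (0:ℝ) 1
  noatom : ∀ x, μ {x} = 0
  pos : ∀ r < 1, 0 < FF μ r

lemma FF_anti {μ : Measure ℝ} (h : Good μ) : Antitone (FF μ) := by
  intro a b hab
  haveI := h.fin
  exact measureReal_mono (Ioi_subset_Ioi hab)

lemma FF_nonneg {μ : Measure ℝ} (r : ℝ) : 0 ≤ FF μ r := measureReal_nonneg

lemma integrable_pow {μ : Measure ℝ} (h : Good μ) (n : ℕ) : Integrable (fun s => s ^ n) μ := by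
  haveI := h.fin
  refine Integrable.mono' (integrable_const (1:ℝ)) (by fun_prop) ?_
  filter_upwards [h.supp] with s hs
  rw [Real.norm_eq_abs, abs_of_nonneg (pow_nonneg hs.1.le _)]
  exact pow_le_one₀ hs.1.le hs.2.le

lemma mom_anti {μ : Measure ℝ} (h : Good μ) : Antitone (mom μ) := by
  intro a b hab
  refine integral_mono_ae (integrable_pow h _) (integrable_pow h _) ?_
  filter_upwards [h.supp] with s hs
  exact pow_le_pow_of_le_one hs.1.le hs.2.le (by omega)

/-- `t^(2n) F(t) ≤ m_n`. -/
lemma mom_ge {μ : Measure ℝ} (h : Good μ) (n : ℕ) {t : ℝ} (ht : 0 ≤ t) :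
    t ^ (2 * n) * FF μ t ≤ mom μ n := by
  haveI := h.fin
  have : t ^ (2 * n) * FF μ t = ∫ s, (Ioi t).indicator (fun _ => t ^ (2 * n)) s ∂μ := by
    rw [integral_indicator measurableSet_Ioi, setIntegral_const, FF, smul_eq_mul, mul_comm]
  rw [this]
  refine integral_mono_ae ((integrable_const _).indicator measurableSet_Ioi) (integrable_pow h _) ?_
  filter_upwards [h.supp] with s hs
  by_cases hst : s ∈ Ioi t
  · simp only [indicator_of_mem hst]
    exact pow_le_pow_left₀ ht (le_of_lt hst) _
  · simp only [indicator_of_notMem hst]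
    exact pow_nonneg hs.1.le _

lemma mom_pos {μ : Measure ℝ} (h : Good μ) (n : ℕ) : 0 < mom μ n := by
  have := mom_ge h n (t := 1/2) (by norm_num)
  have h2 := h.pos (1/2) (by norm_num)
  exact lt_of_lt_of_le (by positivity) this

lemma mom_lower {μ : Measure ℝ} (h : Good μ) (n : ℕ) (hn : 1 ≤ n) :
    FF μ (1 - 1 / (4 * n)) ≤ 2 * mom μ n := by
  have hn' : (1:ℝ) ≤ n := by exact_mod_cast hn
  have ht : (1:ℝ) / (4 * n) ≤ 1/4 := by
    rw [div_le_div_iff₀ (by positivity) (by norm_num)]; linarith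
  have := mom_ge h n (t := 1 - 1 / (4 * n)) (by linarith)
  have h2 : (1:ℝ)/2 ≤ (1 - 1 / (4 * n)) ^ (2 * n) := by
    have := one_add_mul_le_pow (a := -(1 / (4 * n) : ℝ)) (by linarith) (2 * n)
    have e : (1:ℝ) + ((2 * n : ℕ) : ℝ) * (-(1 / (4 * n))) = 1/2 := by
      push_cast; field_simp; norm_num
    rw [e] at this
    rwa [← sub_eq_add_neg] at this
  nlinarith [FF_nonneg (μ := μ) (1 - 1 / (4 * n))]

/-- superexponential summability -/
lemma summable_superexp (D : ℝ) (hD : 0 ≤ D) :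
    Summable (fun j : ℕ => D ^ j * Real.exp (-(2:ℝ) ^ j)) := by
  obtain ⟨m, hm⟩ := pow_unbounded_of_one_lt D (one_lt_two)
  have hs : Summable (fun j : ℕ => (m.factorial : ℝ) * (D / 2 ^ m) ^ j) := by
    refine Summable.mul_left _ (summable_geometric_of_lt_one (by positivity) ?_)
    rw [div_lt_one (by positivity)]; exact hm
  refine Summable.of_nonneg_of_le (fun j => by positivity) (fun j => ?_) hs
  have := Real.pow_div_factorial_le_exp ((2:ℝ)^j) (by positivity) m
  rw [Real.exp_neg, div_pow]
  have h3 : (Real.exp ((2:ℝ)^j))⁻¹ ≤ m.factorial / ((2:ℝ)^j)^m := by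
    rw [← inv_div]
    exact inv_anti₀ (by positivity) this
  calc D ^ j * (Real.exp ((2:ℝ)^j))⁻¹ ≤ D ^ j * (m.factorial / ((2:ℝ)^j)^m) := by gcongr
    _ = _ := by rw [← pow_mul, ← pow_mul, mul_comm j m]; ring

lemma FF_doubling_iter {μ : Measure ℝ} {D : ℝ} (hD0 : 0 ≤ D)
    (hD : ∀ r < 1, FF μ r ≤ D * FF μ ((1 + r) / 2)) (j : ℕ) :
    ∀ t > 0, FF μ (1 - 2 ^ j * t) ≤ D ^ j * FF μ (1 - t) := by
  induction j with
  | zero => intro t ht; simp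
  | succ j ih =>
    intro t ht
    have h1 := hD (1 - 2 ^ (j+1) * t) (by have : 0 < 2 ^ (j+1) * t := by positivity
                                          linarith)
    have e : (1 + (1 - 2 ^ (j+1) * t)) / 2 = 1 - 2 ^ j * t := by ring
    rw [e] at h1
    calc _ ≤ _ := h1
      _ ≤ D * (D ^ j * FF μ (1 - t)) := by gcongr; exact ih t ht
      _ = _ := by ring

lemma exp_bound_aux {s : ℝ} (hs0 : 0 < s) (hs : s < 1) (n : ℕ) (hn : 1 ≤ n) :
    ∃ j : ℕ, 1 - 2 ^ j * (1 / n : ℝ) < s ∧ s ^ (2 * n) ≤ Real.exp 1 * Real.exp (-(2:ℝ)^j) := by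
  have hn' : (0:ℝ) < n := by exact_mod_cast hn
  classical
  have hex : ∃ j : ℕ, 1 - 2 ^ j * (1 / n : ℝ) < s := by
    obtain ⟨m, hm⟩ := pow_unbounded_of_one_lt (n:ℝ) (one_lt_two)
    refine ⟨m, ?_⟩
    have : 1 < 2 ^ m * (1 / n : ℝ) := by
      rw [mul_one_div, lt_div_iff₀ hn']; linarith
    linarith
  refine ⟨Nat.find hex, Nat.find_spec hex, ?_⟩
  rcases Nat.eq_zero_or_pos (Nat.find hex) with h0 | h0
  · rw [h0, ← Real.exp_add]; simp
    exact pow_le_one₀ hs0.le hs.le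
  · obtain ⟨i, hi⟩ := Nat.exists_eq_succ_of_ne_zero h0.ne'
    have h1 := Nat.find_min hex (m := i) (by omega)
    rw [not_lt] at h1
    rw [hi]
    have h2 : s ≤ Real.exp (-(2 ^ i * (1 / n : ℝ))) :=
      h1.trans (Real.one_sub_le_exp_neg _)
    have h3 : s ^ (2 * n) ≤ Real.exp (-(2:ℝ) ^ (i+1)) := by
      calc s ^ (2 * n) ≤ Real.exp (-(2 ^ i * (1 / n : ℝ))) ^ (2 * n) :=
            pow_le_pow_left₀ hs0.le h2 _
        _ = Real.exp (-(2:ℝ) ^ (i+1)) := by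
            rw [← Real.exp_nat_mul]; congr 1; push_cast; field_simp; ring
    have : 1 ≤ Real.exp 1 := Real.one_le_exp (by norm_num)
    calc _ ≤ 1 * Real.exp (-(2:ℝ) ^ (i+1)) := by simpa using h3
      _ ≤ _ := by gcongr; 

lemma mom_upper {μ : Measure ℝ} (h : Good μ) {D : ℝ} (hD0 : 0 ≤ D)
    (hD : ∀ r < 1, FF μ r ≤ D * FF μ ((1 + r) / 2)) :
    ∃ C > 0, ∀ n : ℕ, 1 ≤ n → mom μ n ≤ C * FF μ (1 - 1 / n) := by
  haveI := h.fin
  have hS := (summable_superexp D hD0).mul_left (Real.exp 1)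
  refine ⟨∑' j : ℕ, Real.exp 1 * (D ^ j * Real.exp (-(2:ℝ) ^ j)), ?_, fun n hn => ?_⟩
  · refine hS.tsum_pos (fun j => by positivity) 0 (by positivity)
  have hn' : (0:ℝ) < n := by exact_mod_cast hn
  have key : ENNReal.ofReal (mom μ n) ≤
      ∑' j : ℕ, ENNReal.ofReal (Real.exp 1 * (D ^ j * Real.exp (-(2:ℝ) ^ j)) * FF μ (1 - 1 / n)) := by
    rw [mom, ofReal_integral_eq_lintegral_ofReal (integrable_pow h _)
      (by filter_upwards [h.supp] with s hs; exact pow_nonneg hs.1.le _)]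
    calc ∫⁻ s, ENNReal.ofReal (s ^ (2 * n)) ∂μ
        ≤ ∫⁻ s, ∑' j : ℕ, (Ioi (1 - 2 ^ j * (1 / n : ℝ))).indicator
            (fun _ => ENNReal.ofReal (Real.exp 1 * Real.exp (-(2:ℝ)^j))) s ∂μ := by
          refine lintegral_mono_ae ?_
          filter_upwards [h.supp] with s hs
          obtain ⟨j, hj1, hj2⟩ := exp_bound_aux hs.1 hs.2 n hn
          refine le_trans ?_ (ENNReal.le_tsum j)
          rw [indicator_of_mem (by exact hj1)]
          exact ENNReal.ofReal_le_ofReal hj2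
      _ = ∑' j : ℕ, ENNReal.ofReal (Real.exp 1 * Real.exp (-(2:ℝ)^j)) *
            μ (Ioi (1 - 2 ^ j * (1 / n : ℝ))) := by
          rw [lintegral_tsum (fun j => (measurable_const.indicator measurableSet_Ioi).aemeasurable)]
          congr 1; ext j
          rw [lintegral_indicator measurableSet_Ioi, setLIntegral_const]
      _ ≤ _ := by
          refine ENNReal.tsum_le_tsum fun j => ?_
          have e : μ (Ioi (1 - 2 ^ j * (1 / n : ℝ))) = ENNReal.ofReal (FF μ (1 - 2 ^ j * (1 / n : ℝ))) := by
            rw [FF, ofReal_measureReal]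
          rw [e, ← ENNReal.ofReal_mul (by positivity)]
          apply ENNReal.ofReal_le_ofReal
          have := FF_doubling_iter hD0 hD j (1 / n) (by positivity)
          calc _ ≤ Real.exp 1 * Real.exp (-(2:ℝ)^j) * (D ^ j * FF μ (1 - 1 / n)) := by gcongr
            _ = _ := by ring
  rw [← ENNReal.ofReal_tsum_of_nonneg (fun j => by have := FF_nonneg (μ := μ) (1 - 1 / n); positivity)
    (hS.mul_right _)] at key
  rw [tsum_mul_right] at key
  exact (ENNReal.ofReal_le_ofReal_iff (mul_nonneg (tsum_nonneg fun j => by positivity) (FF_nonneg _))).1 key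

lemma mom_doubling {μ : Measure ℝ} (h : Good μ) {D : ℝ} (hD0 : 0 ≤ D)
    (hD : ∀ r < 1, FF μ r ≤ D * FF μ ((1 + r) / 2)) :
    ∃ E > 0, ∀ n : ℕ, 1 ≤ n → mom μ n ≤ E * mom μ (8 * n) := by
  obtain ⟨C, hC, hu⟩ := mom_upper h hD0 hD
  refine ⟨C * (D ^ 5 * 2) + 1, by positivity, fun n hn => ?_⟩
  have hn' : (0:ℝ) < n := by exact_mod_cast hn
  have h1 := FF_doubling_iter hD0 hD 5 (1 / (4 * ((8 * n : ℕ) : ℝ))) (by positivity)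
  have e : (2:ℝ) ^ 5 * (1 / (4 * ((8 * n : ℕ) : ℝ))) = 1 / n := by push_cast; field_simp; norm_num
  rw [e] at h1
  have h2 := mom_lower h (8 * n) (by omega)
  have h3 := mom_pos h (8 * n)
  calc mom μ n ≤ _ := hu n hn
    _ ≤ C * (D ^ 5 * (2 * mom μ (8 * n))) := by gcongr; exact h1.trans (by gcongr)
    _ ≤ _ := by nlinarith

/-- `e^{iθ}` -/
def ee (θ : ℝ) : ℂ := Complex.exp (θ * Complex.I)

@[fun_prop] lemma continuous_ee : Continuous ee := by unfold ee; fun_prop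

lemma norm_ee (θ : ℝ) : ‖ee θ‖ = 1 := Complex.norm_exp_ofReal_mul_I θ

lemma conj_ee (θ : ℝ) : (starRingEnd ℂ) (ee θ) = (ee θ)⁻¹ :=
  (Complex.inv_eq_conj (norm_ee θ)).symm

lemma ee_zpow (θ : ℝ) (k : ℤ) : ee θ ^ k = Complex.exp ((k * Complex.I) * θ) := by
  rw [ee, ← Complex.exp_int_mul]; congr 1; ring

lemma ee_ne (θ : ℝ) : ee θ ≠ 0 := Complex.exp_ne_zero _

lemma ee_periodic : Function.Periodic ee (2 * Real.pi) := by
  intro θ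
  unfold ee
  push_cast
  rw [add_mul, Complex.exp_add, Complex.exp_two_pi_mul_I, mul_one]

lemma integral_ee_zpow (k : ℤ) (hk : k ≠ 0) : ∫ θ in (-Real.pi)..Real.pi, ee θ ^ k = 0 := by
  have hc : ((k : ℂ) * Complex.I) ≠ 0 := by simp [hk]
  simp_rw [ee_zpow]
  rw [integral_exp_mul_complex hc, div_eq_zero_iff]
  left
  rw [sub_eq_zero, Complex.exp_eq_exp_iff_exists_int]
  exact ⟨k, by push_cast; ring⟩

lemma parseval (d : ℕ → ℝ) (L : ℕ) :
    ∫ θ in (-Real.pi)..Real.pi, ‖∑ n ∈ Finset.range L, (d n : ℂ) * ee θ ^ n‖ ^ 2 =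
      2 * Real.pi * ∑ n ∈ Finset.range L, d n ^ 2 := by
  apply Complex.ofReal_injective
  rw [← intervalIntegral.integral_ofReal]
  have e : ∀ θ : ℝ, (((‖∑ n ∈ Finset.range L, (d n : ℂ) * ee θ ^ n‖ ^ 2 : ℝ)) : ℂ) =
      ∑ n ∈ Finset.range L, ∑ m ∈ Finset.range L, ((d n : ℂ) * d m) * ee θ ^ ((n : ℤ) - m) := by
    intro θ
    rw [Complex.ofReal_pow, ← Complex.mul_conj', map_sum, Finset.sum_mul_sum]
    refine Finset.sum_congr rfl fun n _ => Finset.sum_congr rfl fun m _ => ?_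
    rw [map_mul, map_pow, conj_ee, Complex.conj_ofReal, zpow_sub₀ (ee_ne θ)]
    simp only [zpow_natCast, inv_pow]
    field_simp [ee_ne θ]
  have hcont : ∀ k : ℤ, Continuous (fun θ => ee θ ^ k) := by
    intro k; exact continuous_ee.zpow₀ k (fun θ => Or.inl (ee_ne θ))
  simp_rw [e]
  rw [intervalIntegral.integral_finsetSum]
  swap
  · intro n _
    exact (continuous_finsetSum _ fun m _ => continuous_const.mul (hcont _)).intervalIntegrable _ _
  push_cast
  rw [Finset.mul_sum]
  refine Finset.sum_congr rfl fun n hn => ?_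
  rw [intervalIntegral.integral_finsetSum]
  swap
  · intro m _
    exact (continuous_const.mul (hcont _)).intervalIntegrable _ _
  rw [Finset.sum_eq_single n]
  · simp only [sub_self, zpow_zero, mul_one, intervalIntegral.integral_const, Complex.real_smul]
    push_cast; ring
  · intro m _ hm
    rw [intervalIntegral.integral_const_mul, integral_ee_zpow _ (by omega), mul_zero]
  · intro h; exact absurd hn h

lemma norm_sub_ee (θ : ℝ) (h : |θ| ≤ Real.pi) : 4 / Real.pi ^ 2 * θ ^ 2 ≤ ‖ee θ - 1‖ ^ 2 := by
  have h1 := Real.cos_le_one_sub_mul_cos_sq h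
  have : ‖ee θ - 1‖ ^ 2 = 2 - 2 * Real.cos θ := by
    rw [← Complex.normSq_eq_norm_sq, ee, Complex.exp_mul_I, Complex.normSq_apply]
    simp [← Complex.ofReal_cos, ← Complex.ofReal_sin]
    nlinarith [Real.sin_sq_add_cos_sq θ]
  rw [this]
  have e : 4 / Real.pi ^ 2 * θ ^ 2 = 2 * (2 / Real.pi ^ 2 * θ ^ 2) := by ring
  rw [e]; linarith

lemma integral_W (N : ℝ) (hN : 0 < N) :
    ∫ θ in (-Real.pi)..Real.pi, (1 + N ^ 2 * ‖ee θ - 1‖ ^ 2)⁻¹ ≤ Real.pi ^ 2 / (2 * N) := by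
  have hpi := Real.pi_pos
  set c : ℝ := 2 / Real.pi * N with hc
  have hc0 : c ≠ 0 := by positivity
  calc ∫ θ in (-Real.pi)..Real.pi, (1 + N ^ 2 * ‖ee θ - 1‖ ^ 2)⁻¹
      ≤ ∫ θ in (-Real.pi)..Real.pi, (1 + (c * θ) ^ 2)⁻¹ := by
        apply intervalIntegral.integral_mono_on (by linarith)
        · apply Continuous.intervalIntegrable
          refine Continuous.inv₀ (by fun_prop) (fun θ => by positivity)
        · apply Continuous.intervalIntegrable
          refine Continuous.inv₀ (by fun_prop) (fun θ => by positivity)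
        · intro θ hθ
          apply inv_anti₀ (by positivity)
          have := norm_sub_ee θ (abs_le.2 hθ)
          have e : (c * θ) ^ 2 = N ^ 2 * (4 / Real.pi ^ 2 * θ ^ 2) := by rw [hc]; ring
          rw [e]; gcongr
    _ = c⁻¹ * (Real.arctan (c * Real.pi) - Real.arctan (c * -Real.pi)) := by
        rw [intervalIntegral.integral_comp_mul_left (fun x => (1 + x ^ 2)⁻¹) hc0,
          integral_inv_one_add_sq, smul_eq_mul]
    _ ≤ c⁻¹ * Real.pi := by
        gcongr
        have := Real.arctan_lt_pi_div_two (c * Real.pi)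
        have := Real.neg_pi_div_two_lt_arctan (c * -Real.pi)
        linarith
    _ = _ := by rw [hc]; field_simp

lemma L1_block (d : ℕ → ℝ) (L : ℕ) (A N c : ℝ) (hA : 0 < A) (hN : 0 < N)
    (hd0 : d 0 = 0) (hdL : d L = 0)
    (h1 : ∑ n ∈ Finset.range L, d n ^ 2 ≤ c * (N * A ^ 2))
    (h2 : ∑ n ∈ Finset.range L, (d n - d (n+1)) ^ 2 ≤ c * (A ^ 2 / N)) :
    ∫ θ in (-Real.pi)..Real.pi, ‖∑ n ∈ Finset.range L, (d n : ℂ) * ee θ ^ n‖ ≤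
      (2 * Real.pi * c + Real.pi ^ 2 / 4) * A := by
  have hpi := Real.pi_pos
  set P : ℝ → ℂ := fun θ => ∑ n ∈ Finset.range L, (d n : ℂ) * ee θ ^ n with hP
  have hPc : Continuous P := by
    rw [hP]; fun_prop
  have hdiff : ∀ θ, ‖(ee θ - 1) * P θ‖ =
      ‖∑ n ∈ Finset.range L, ((d n - d (n+1) : ℝ) : ℂ) * ee θ ^ n‖ := by
    intro θ
    have hs : P θ = ∑ n ∈ Finset.range L, (d (n+1) : ℂ) * ee θ ^ (n+1) := by
      have a := Finset.sum_range_succ (fun n => (d n : ℂ) * ee θ ^ n) L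
      have b := Finset.sum_range_succ' (fun n => (d n : ℂ) * ee θ ^ n) L
      simp only [hdL, hd0, Complex.ofReal_zero, zero_mul, add_zero] at a b
      rw [hP]; simp only []; rw [← a, b]
    have : (ee θ - 1) * P θ =
        ee θ * ∑ n ∈ Finset.range L, ((d n - d (n+1) : ℝ) : ℂ) * ee θ ^ n := by
      rw [sub_mul, one_mul]
      nth_rewrite 2 [hs]
      rw [hP]; simp only []
      rw [Finset.mul_sum, Finset.mul_sum, ← Finset.sum_sub_distrib]
      refine Finset.sum_congr rfl fun n _ => ?_
      push_cast; ring
    rw [this, norm_mul, norm_ee, one_mul]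
  have hI1 : ∫ θ in (-Real.pi)..Real.pi, ‖P θ‖ ^ 2 ≤ 2 * Real.pi * (c * (N * A ^ 2)) := by
    rw [hP, parseval]; gcongr
  have hI2 : ∫ θ in (-Real.pi)..Real.pi, ‖(ee θ - 1) * P θ‖ ^ 2 ≤ 2 * Real.pi * (c * (A ^ 2 / N)) := by
    simp_rw [hdiff]
    rw [parseval]; gcongr
  have hW := integral_W N hN
  have hWc : Continuous (fun θ => (1 + N ^ 2 * ‖ee θ - 1‖ ^ 2)⁻¹) :=
    Continuous.inv₀ (by fun_prop) (fun θ => by positivity)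
  calc ∫ θ in (-Real.pi)..Real.pi, ‖P θ‖
      ≤ ∫ θ in (-Real.pi)..Real.pi, ((1 / (2 * N * A)) * ‖P θ‖ ^ 2 +
          (N / (2 * A)) * ‖(ee θ - 1) * P θ‖ ^ 2 +
          (N * A / 2) * (1 + N ^ 2 * ‖ee θ - 1‖ ^ 2)⁻¹) := by
        apply intervalIntegral.integral_mono_on (by linarith)
        · exact hPc.norm.intervalIntegrable _ _
        · apply Continuous.intervalIntegrable
          fun_prop
        · intro θ _
          rw [norm_mul, mul_pow]
          have hWp : 0 < 1 + N ^ 2 * ‖ee θ - 1‖ ^ 2 := by positivity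
          set W := 1 + N ^ 2 * ‖ee θ - 1‖ ^ 2 with hWd
          have e : 1 / (2 * N * A) * ‖P θ‖ ^ 2 + N / (2 * A) * (‖ee θ - 1‖ ^ 2 * ‖P θ‖ ^ 2)
            + N * A / 2 * W⁻¹ = ((W * ‖P θ‖ - N * A) ^ 2) / (2 * N * A * W) + ‖P θ‖ := by
            have : ‖ee θ - 1‖ ^ 2 = (W - 1) / N ^ 2 := by rw [hWd]; field_simp; ring
            rw [this]; field_simp; ring
          rw [e]
          have : 0 ≤ ((W * ‖P θ‖ - N * A) ^ 2) / (2 * N * A * W) := by positivity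
          linarith
    _ = (1 / (2 * N * A)) * (∫ θ in (-Real.pi)..Real.pi, ‖P θ‖ ^ 2) +
          (N / (2 * A)) * (∫ θ in (-Real.pi)..Real.pi, ‖(ee θ - 1) * P θ‖ ^ 2) +
          (N * A / 2) * ∫ θ in (-Real.pi)..Real.pi, (1 + N ^ 2 * ‖ee θ - 1‖ ^ 2)⁻¹ := by
        rw [intervalIntegral.integral_add, intervalIntegral.integral_add]
        · simp only [intervalIntegral.integral_const_mul]
        all_goals apply Continuous.intervalIntegrable; fun_prop
    _ ≤ (1 / (2 * N * A)) * (2 * Real.pi * (c * (N * A ^ 2))) +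
          (N / (2 * A)) * (2 * Real.pi * (c * (A ^ 2 / N))) +
          (N * A / 2) * (Real.pi ^ 2 / (2 * N)) := by gcongr
    _ = _ := by field_simp; ring

/-- Coefficients of the kernel. -/
def ac (μ : Measure ℝ) (n : ℕ) : ℝ := (2 * mom μ n)⁻¹

/-- The kernel as a function of one variable. -/
def bk (μ : Measure ℝ) (ξ : ℂ) : ℂ := ∑' n : ℕ, (ac μ n : ℂ) * ξ ^ n

/-- Circle means of the kernel. -/
def IM (μ : Measure ℝ) (x : ℝ) : ℝ := ∫ θ in (-Real.pi)..Real.pi, ‖bk μ (x * ee θ)‖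

lemma ac_pos {μ : Measure ℝ} (h : Good μ) (n : ℕ) : 0 < ac μ n := by
  have := mom_pos h n
  unfold ac; positivity

lemma ac_mono {μ : Measure ℝ} (h : Good μ) : Monotone (ac μ) := by
  intro a b hab
  have := mom_pos h b
  exact inv_anti₀ (by positivity) (by have := mom_anti h hab; linarith)

lemma summable_ac {μ : Measure ℝ} (h : Good μ) {x : ℝ} (hx0 : 0 ≤ x) (hx : x < 1) :
    Summable (fun n => ac μ n * x ^ n) := by
  obtain ⟨y, hy1, hy2⟩ := exists_between hx
  have hy0 : 0 < y := hx0.trans_lt hy1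
  set t := Real.sqrt y with ht
  have ht0 : 0 < t := Real.sqrt_pos.2 hy0
  have htt : t ^ 2 = y := Real.sq_sqrt hy0.le
  have ht1 : t < 1 := by nlinarith
  have hF := h.pos t ht1
  have hs : Summable (fun n : ℕ => (2 * FF μ t)⁻¹ * (x / y) ^ n) := by
    refine Summable.mul_left _ (summable_geometric_of_lt_one (by positivity) ?_)
    rwa [div_lt_one hy0]
  refine Summable.of_nonneg_of_le (fun n => mul_nonneg (ac_pos h n).le (by positivity)) (fun n => ?_) hs
  have h1 := mom_ge h n ht0.le
  rw [pow_mul, htt] at h1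
  have h2 : ac μ n ≤ (2 * (y ^ n * FF μ t))⁻¹ := inv_anti₀ (by positivity) (by linarith)
  calc ac μ n * x ^ n ≤ (2 * (y ^ n * FF μ t))⁻¹ * x ^ n := by gcongr
    _ = _ := by rw [div_pow]; field_simp

lemma norm_term {μ : Measure ℝ} (h : Good μ) (n : ℕ) (ξ : ℂ) :
    ‖(ac μ n : ℂ) * ξ ^ n‖ = ac μ n * ‖ξ‖ ^ n := by
  rw [norm_mul, norm_pow, Complex.norm_real, Real.norm_eq_abs, abs_of_pos (ac_pos h n)]

lemma continuousOn_bk {μ : Measure ℝ} (h : Good μ) : ContinuousOn (bk μ) (ball 0 1) := by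
  intro ξ hξ
  rw [mem_ball_zero_iff] at hξ
  obtain ⟨R, hR1, hR2⟩ := exists_between hξ
  have hR0 : 0 ≤ R := (norm_nonneg _).trans hR1.le
  have : ContinuousOn (bk μ) (ball 0 R) := by
    refine continuousOn_tsum (u := fun n => ac μ n * R ^ n) (fun n => by fun_prop)
      (summable_ac h hR0 hR2) ?_
    intro n z hz
    rw [mem_ball_zero_iff] at hz
    rw [norm_term h]
    have := (ac_pos h n).le
    gcongr
  exact (this.continuousAt (isOpen_ball.mem_nhds (by rwa [mem_ball_zero_iff]))).continuousWithinAt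

lemma mul_ee_mem {x : ℝ} (hx0 : 0 ≤ x) (hx : x < 1) (θ : ℝ) : (x : ℂ) * ee θ ∈ ball (0:ℂ) 1 := by
  rw [mem_ball_zero_iff, norm_mul, norm_ee, mul_one, Complex.norm_real, Real.norm_eq_abs,
    abs_of_nonneg hx0]; exact hx

lemma continuous_bk_circle {μ : Measure ℝ} (h : Good μ) {x : ℝ} (hx0 : 0 ≤ x) (hx : x < 1) :
    Continuous (fun θ => bk μ (x * ee θ)) := by
  refine (continuousOn_bk h).comp_continuous (by fun_prop) (mul_ee_mem hx0 hx)

lemma IM_nonneg {μ : Measure ℝ} (x : ℝ) : 0 ≤ IM μ x :=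
  intervalIntegral.integral_nonneg (by linarith [Real.pi_pos]) (fun _ _ => norm_nonneg _)

lemma IM_shift {μ : Measure ℝ} (x a : ℝ) :
    ∫ θ in a..(a + 2 * Real.pi), ‖bk μ (x * ee θ)‖ = IM μ x := by
  have hper : Function.Periodic (fun θ => ‖bk μ (x * ee θ)‖) (2 * Real.pi) := by
    intro θ; simp only [ee_periodic θ]
  have := hper.intervalIntegral_add_eq a (-Real.pi)
  rw [this, IM]; congr 1; ring

lemma hasSum_test {μ : Measure ℝ} (h : Good μ) {x : ℝ} (hx0 : 0 ≤ x) (hx : x < 1)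
    (ψ : ℝ → ℝ) (hψ : Continuous ψ) (M : ℝ) (a b : ℝ) (hM : ∀ θ ∈ uIoc a b, |ψ θ| ≤ M) :
    HasSum (fun n : ℕ => ((ac μ n * x ^ n : ℝ) : ℂ) * ∫ θ in a..b, (ψ θ : ℂ) * ee θ ^ n)
      (∫ θ in a..b, (ψ θ : ℂ) * bk μ (x * ee θ)) := by
  have key := intervalIntegral.hasSum_integral_of_dominated_convergence (μ := volume) (a := a) (b := b)
    (F := fun (n : ℕ) θ => (ψ θ : ℂ) * ((ac μ n : ℂ) * (x * ee θ) ^ n))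
    (f := fun θ => (ψ θ : ℂ) * bk μ (x * ee θ)) (fun n _ => M * (ac μ n * x ^ n))
    (fun n => (by fun_prop : Continuous _).aestronglyMeasurable) ?_ ?_ ?_ ?_
  · have e : (fun n : ℕ => ((ac μ n * x ^ n : ℝ) : ℂ) * ∫ θ in a..b, (ψ θ : ℂ) * ee θ ^ n) =
        fun n : ℕ => ∫ θ in a..b, (ψ θ : ℂ) * ((ac μ n : ℂ) * (x * ee θ) ^ n) := by
      funext n
      rw [← intervalIntegral.integral_const_mul]
      congr 1; ext θ; push_cast; rw [mul_pow]; ring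
    rw [e]; exact key
  · intro n
    refine Filter.Eventually.of_forall fun θ hθ => ?_
    rw [norm_mul, norm_term h, norm_mul, norm_ee, mul_one, Complex.norm_real, Complex.norm_real,
      Real.norm_eq_abs, Real.norm_eq_abs, abs_of_nonneg hx0]
    have := (ac_pos h n).le
    have := hM θ hθ
    gcongr
  · exact Filter.Eventually.of_forall fun θ _ => (summable_ac h hx0 hx).mul_left M
  · exact intervalIntegrable_const
  · refine Filter.Eventually.of_forall fun θ hθ => HasSum.mul_left _ ?_
    have : Summable (fun n : ℕ => (ac μ n : ℂ) * (x * ee θ) ^ n) := by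
      apply Summable.of_norm
      simp_rw [norm_term h, norm_mul, norm_ee, mul_one, Complex.norm_real, Real.norm_eq_abs,
        abs_of_nonneg hx0]
      exact summable_ac h hx0 hx
    exact this.hasSum

lemma IM_ge_zero {μ : Measure ℝ} (h : Good μ) {x : ℝ} (hx0 : 0 ≤ x) (hx : x < 1) :
    2 * Real.pi * ac μ 0 ≤ IM μ x := by
  have hpi := Real.pi_pos
  have hs := hasSum_test h hx0 hx (fun _ => 1) continuous_const 1 (-Real.pi) Real.pi (by simp)
  have hs2 := hasSum_single (f := fun n : ℕ => ((ac μ n * x ^ n : ℝ) : ℂ) *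
    ∫ θ in (-Real.pi)..Real.pi, ((1:ℝ) : ℂ) * ee θ ^ n) 0 (by
      intro n hn
      have := integral_ee_zpow n (by exact_mod_cast hn)
      simp only [zpow_natCast] at this
      simp only [Complex.ofReal_one, one_mul]
      rw [this, mul_zero])
  have e := hs.unique hs2
  have h1 := intervalIntegral.norm_integral_le_integral_norm (μ := volume)
    (f := fun θ => ((1:ℝ) : ℂ) * bk μ (x * ee θ)) (a := -Real.pi) (b := Real.pi) (by linarith)
  rw [e] at h1
  simp only [Complex.ofReal_one, one_mul] at h1
  refine le_trans (le_of_eq ?_) h1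
  rw [norm_mul]
  simp only [pow_zero, mul_one, intervalIntegral.integral_const, Complex.norm_real, norm_smul,
    Real.norm_eq_abs, norm_one]
  rw [abs_of_pos (ac_pos h 0), abs_of_pos (by linarith)]; ring

lemma integral_hardy (n : ℕ) :
    ∫ θ in (0:ℝ)..(2 * Real.pi), ((Real.pi - θ : ℝ) : ℂ) * ee θ ^ n =
      (2 * Real.pi * Complex.I) * ((1 / n : ℝ) : ℂ) := by
  rcases Nat.eq_zero_or_pos n with rfl | hn
  · simp only [pow_zero, mul_one]
    rw [intervalIntegral.integral_ofReal]
    rw [intervalIntegral.integral_sub (by simp) (by simp), integral_id]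
    simp; ring
  set c : ℂ := n * Complex.I with hc
  have hc0 : c ≠ 0 := by
    have : (n : ℂ) ≠ 0 := by exact_mod_cast hn.ne'
    simp [hc, this]
  have hee : ∀ θ : ℝ, ee θ ^ n = Complex.exp (c * θ) := by
    intro θ; have := ee_zpow θ n; simpa using this
  simp_rw [hee]
  have hder : ∀ θ ∈ uIcc 0 (2 * Real.pi), HasDerivAt
      (fun θ : ℝ => ((Real.pi : ℂ) - θ) * Complex.exp (c * θ) / c + Complex.exp (c * θ) / c ^ 2)
      (((Real.pi - θ : ℝ) : ℂ) * Complex.exp (c * θ)) θ := by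
    intro θ _
    have h1 : HasDerivAt (fun θ : ℝ => (θ : ℂ)) 1 θ := Complex.ofRealCLM.hasDerivAt
    have h2 : HasDerivAt (fun θ : ℝ => Complex.exp (c * θ)) (Complex.exp (c * θ) * (c * 1)) θ :=
      (h1.const_mul c).cexp
    have h3 := (((h1.const_sub (Real.pi : ℂ)).mul h2).div_const c).add (h2.div_const (c ^ 2))
    refine h3.congr_deriv ?_
    push_cast
    field_simp
    ring
  rw [intervalIntegral.integral_eq_sub_of_hasDerivAt hder
    ((by fun_prop : Continuous _).intervalIntegrable _ _)]
  have e1 : Complex.exp (c * ((2 * Real.pi : ℝ) : ℂ)) = 1 := by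
    rw [Complex.exp_eq_one_iff]; exact ⟨n, by rw [hc]; push_cast; ring⟩
  rw [e1]
  have hn' : (n : ℂ) ≠ 0 := by exact_mod_cast hn.ne'
  simp only [Complex.ofReal_zero, mul_zero, Complex.exp_zero]
  rw [hc]
  have hI : Complex.I ^ 2 = -1 := Complex.I_sq
  push_cast
  field_simp
  rw [show Complex.I ^ 3 = -Complex.I by rw [pow_succ, hI]; ring]; ring

lemma IM_hardy {μ : Measure ℝ} (h : Good μ) {x : ℝ} (hx0 : 0 ≤ x) (hx : x < 1) (s : Finset ℕ) :
    2 * ∑ n ∈ s, ac μ n * x ^ n * (1 / n) ≤ IM μ x := by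
  have hpi := Real.pi_pos
  have hs := hasSum_test h hx0 hx (fun θ => Real.pi - θ) (by fun_prop) Real.pi 0 (2 * Real.pi) (by
    intro θ hθ
    rw [uIoc_of_le (by positivity)] at hθ
    rw [abs_le]; constructor <;> linarith [hθ.1, hθ.2])
  simp_rw [integral_hardy] at hs
  have hsum : Summable (fun n : ℕ => ac μ n * x ^ n * (1 / n)) := by
    refine Summable.of_nonneg_of_le (fun n => ?_) (fun n => ?_) (summable_ac h hx0 hx)
    · have := ac_pos h n; positivity
    · have := ac_pos h n
      refine mul_le_of_le_one_right (by positivity) ?_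
      rcases Nat.eq_zero_or_pos n with rfl | hn
      · simp
      · rw [div_le_one (by exact_mod_cast hn)]; exact_mod_cast hn
  have hs2 : HasSum (fun n : ℕ => ((ac μ n * x ^ n : ℝ) : ℂ) * ((2 * Real.pi * Complex.I) * ((1 / n : ℝ) : ℂ)))
      ((2 * Real.pi * Complex.I) * ((∑' n : ℕ, ac μ n * x ^ n * (1 / n) : ℝ) : ℂ)) := by
    have := (Complex.hasSum_ofReal.2 hsum.hasSum).mul_left (2 * Real.pi * Complex.I)
    refine this.congr_fun fun n => ?_
    push_cast; ring
  have e := hs.unique hs2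
  have h1 := intervalIntegral.norm_integral_le_integral_norm (μ := volume)
    (f := fun θ => ((Real.pi - θ : ℝ) : ℂ) * bk μ (x * ee θ)) (a := 0) (b := 2 * Real.pi) (by positivity)
  rw [e] at h1
  have h2 : ∫ θ in (0:ℝ)..(2 * Real.pi), ‖((Real.pi - θ : ℝ) : ℂ) * bk μ (x * ee θ)‖ ≤
      ∫ θ in (0:ℝ)..(2 * Real.pi), Real.pi * ‖bk μ (x * ee θ)‖ := by
    have hc := continuous_bk_circle h hx0 hx
    apply intervalIntegral.integral_mono_on (by positivity)
    · exact (by fun_prop : Continuous _).intervalIntegrable _ _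
    · exact (by fun_prop : Continuous _).intervalIntegrable _ _
    · intro θ hθ
      rw [norm_mul, Complex.norm_real, Real.norm_eq_abs]
      gcongr
      rw [abs_le]; constructor <;> linarith [hθ.1, hθ.2]
  have h3 := IM_shift (μ := μ) x 0
  rw [zero_add] at h3
  rw [intervalIntegral.integral_const_mul, h3] at h2
  have hnn : 0 ≤ ∑' n : ℕ, ac μ n * x ^ n * (1 / n) :=
    tsum_nonneg fun n => by have := ac_pos h n; positivity
  rw [norm_mul, Complex.norm_real, Real.norm_eq_abs, abs_of_nonneg hnn] at h1
  have e3 : ‖(2 * Real.pi * Complex.I : ℂ)‖ = 2 * Real.pi := by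
    simp [abs_of_pos hpi]
  rw [e3] at h1
  have h4 := hsum.sum_le_tsum s (fun n _ => by have := ac_pos h n; positivity)
  have h5 := h1.trans h2
  have h6 : 2 * ∑' n : ℕ, ac μ n * x ^ n * (1 / n) ≤ IM μ x := by
    refine le_of_mul_le_mul_left ?_ hpi
    linarith
  linarith

/-- Piecewise linear cut-off. -/
def Vc (y : ℝ) : ℝ := max 0 (min 1 (2 - y))

lemma Vc_nonneg (y : ℝ) : 0 ≤ Vc y := le_max_left _ _
lemma Vc_le_one (y : ℝ) : Vc y ≤ 1 := max_le zero_le_one (min_le_left _ _)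
lemma Vc_one {y : ℝ} (h : y ≤ 1) : Vc y = 1 := by
  unfold Vc; rw [min_eq_left (by linarith), max_eq_right zero_le_one]
lemma Vc_zero {y : ℝ} (h : 2 ≤ y) : Vc y = 0 := by
  unfold Vc; rw [max_eq_left]; exact (min_le_right _ _).trans (by linarith)
lemma Vc_lip (y z : ℝ) : |Vc y - Vc z| ≤ |y - z| := by
  unfold Vc
  calc _ ≤ |min 1 (2 - y) - min 1 (2 - z)| := by
        have := abs_max_sub_max_le_abs (min 1 (2 - y)) (min 1 (2 - z)) 0
        simpa [max_comm] using this
    _ ≤ |(2 - y) - (2 - z)| := by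
        have := abs_min_sub_min_le_max 1 (2 - y) 1 (2 - z)
        simpa using this
    _ = _ := by rw [abs_sub_comm]; congr 1; ring

/-- Dyadic block multiplier. -/
def phi (k n : ℕ) : ℝ := Vc (n / (4 * 2 ^ k)) - Vc (n / (2 * 2 ^ k))

lemma phi_low {k n : ℕ} (h : n ≤ 2 * 2 ^ k) : phi k n = 0 := by
  have h' : (n:ℝ) ≤ 2 * 2 ^ k := by exact_mod_cast h
  have hp : (0:ℝ) < 2 ^ k := by positivity
  unfold phi
  rw [Vc_one, Vc_one, sub_self]
  · rw [div_le_one (by positivity)]; exact h'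
  · rw [div_le_one (by positivity)]; linarith

lemma phi_high {k n : ℕ} (h : 8 * 2 ^ k ≤ n) : phi k n = 0 := by
  have h' : (8:ℝ) * 2 ^ k ≤ n := by exact_mod_cast h
  have hp : (0:ℝ) < 2 ^ k := by positivity
  unfold phi
  rw [Vc_zero, Vc_zero, sub_self]
  · rw [le_div_iff₀ (by positivity)]; linarith
  · rw [le_div_iff₀ (by positivity)]; linarith

lemma phi_abs (k n : ℕ) : |phi k n| ≤ 1 := by
  unfold phi
  have := Vc_nonneg (n / (4 * 2 ^ k))
  have := Vc_nonneg (n / (2 * 2 ^ k))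
  have := Vc_le_one (n / (4 * 2 ^ k))
  have := Vc_le_one (n / (2 * 2 ^ k))
  rw [abs_le]; constructor <;> linarith

lemma phi_lip (k n : ℕ) : |phi k n - phi k (n+1)| ≤ 1 / 2 ^ k := by
  have hp : (0:ℝ) < 2 ^ k := by positivity
  have h1 := Vc_lip (n / (4 * 2 ^ k)) ((n+1:ℕ) / (4 * 2 ^ k))
  have h2 := Vc_lip (n / (2 * 2 ^ k)) ((n+1:ℕ) / (2 * 2 ^ k))
  have e1 : |(n:ℝ) / (4 * 2 ^ k) - (n+1:ℕ) / (4 * 2 ^ k)| = 1 / 4 * (1 / 2 ^ k) := by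
    rw [← sub_div]; push_cast; rw [show (n:ℝ) - (n+1) = -1 by ring, neg_div, abs_neg,
      abs_of_pos (by positivity)]; field_simp
  have e2 : |(n:ℝ) / (2 * 2 ^ k) - (n+1:ℕ) / (2 * 2 ^ k)| = 1 / 2 * (1 / 2 ^ k) := by
    rw [← sub_div]; push_cast; rw [show (n:ℝ) - (n+1) = -1 by ring, neg_div, abs_neg,
      abs_of_pos (by positivity)]; field_simp
  rw [e1] at h1; rw [e2] at h2
  have hq : (0:ℝ) < 1 / 2 ^ k := by positivity
  unfold phi
  rw [abs_le] at *
  constructor <;> linarith [h1.1, h1.2, h2.1, h2.2]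

lemma geom_aux {y : ℝ} (hy0 : 0 ≤ y) (hy : y ≤ 1) (N : ℕ) (hN : 1 ≤ N) :
    y ^ N * (1 - y) ≤ 1 / N := by
  have hN' : (0:ℝ) < N := by exact_mod_cast hN
  rw [le_div_iff₀ hN']
  have h1 := geom_sum_mul_neg y N
  have h2 : (N:ℝ) * y ^ N ≤ ∑ i ∈ Finset.range N, y ^ i := by
    have : ∑ i ∈ Finset.range N, y ^ N ≤ ∑ i ∈ Finset.range N, y ^ i :=
      Finset.sum_le_sum fun i hi => pow_le_pow_of_le_one hy0 hy (Finset.mem_range.1 hi).le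
    simpa using this
  have h3 : 0 ≤ y ^ N := by positivity
  nlinarith

lemma mom_diff {μ : Measure ℝ} (h : Good μ) (N n : ℕ) (hN : 1 ≤ N) (hn : 2 * N ≤ n) :
    mom μ n - mom μ (n+1) ≤ mom μ N / N := by
  have e : mom μ n - mom μ (n+1) = ∫ s, (s ^ (2 * n) - s ^ (2 * (n+1))) ∂μ := by
    rw [integral_sub (integrable_pow h _) (integrable_pow h _)]; rfl
  have e2 : mom μ N / N = ∫ s, s ^ (2 * N) * (1 / N) ∂μ := by
    rw [integral_mul_const]; rw [mom]; ring
  rw [e, e2]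
  refine integral_mono_ae ((integrable_pow h _).sub (integrable_pow h _))
    ((integrable_pow h _).mul_const _) ?_
  filter_upwards [h.supp] with s hs
  have hs1 : s ^ 2 ≤ 1 := pow_le_one₀ hs.1.le hs.2.le
  have h1 := geom_aux (y := s ^ 2) (by positivity) hs1 N hN
  calc s ^ (2 * n) - s ^ (2 * (n+1)) = s ^ (2 * n) * (1 - s ^ 2) := by ring
    _ ≤ s ^ (2 * N + 2 * N) * (1 - s ^ 2) := by
        refine mul_le_mul_of_nonneg_right ?_ (by linarith)
        exact pow_le_pow_of_le_one hs.1.le hs.2.le (by omega)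
    _ = s ^ (2 * N) * ((s ^ 2) ^ N * (1 - s ^ 2)) := by rw [pow_add, ← pow_mul]; ring
    _ ≤ _ := by
        have : 0 ≤ s ^ (2 * N) := pow_nonneg hs.1.le _
        gcongr

lemma ac_diff {μ : Measure ℝ} (h : Good μ) {E : ℝ} (hE : 0 < E)
    (hEm : ∀ n : ℕ, 1 ≤ n → mom μ n ≤ E * mom μ (8 * n))
    (N n : ℕ) (hN : 1 ≤ N) (hn : 2 * N ≤ n) (hn2 : n + 1 ≤ 8 * N) :
    ac μ (n+1) - ac μ n ≤ E * ac μ (8 * N) / N := by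
  have hN' : (0:ℝ) < N := by exact_mod_cast hN
  have p0 := mom_pos h n
  have p1 := mom_pos h (n+1)
  have p8 := mom_pos h (8 * N)
  have h1 := mom_diff h N n hN hn
  have h2 := hEm N hN
  have h3 : mom μ (8 * N) ≤ mom μ n := mom_anti h (by omega)
  have h4 : mom μ (8 * N) ≤ mom μ (n+1) := mom_anti h hn2
  have e : ac μ (n+1) - ac μ n = (mom μ n - mom μ (n+1)) / (2 * mom μ n * mom μ (n+1)) := by
    unfold ac; field_simp
  rw [e]
  have h5 : mom μ N / N ≤ E * mom μ (8 * N) / N := by gcongr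
  calc (mom μ n - mom μ (n+1)) / (2 * mom μ n * mom μ (n+1))
      ≤ (E * mom μ (8 * N) / N) / (2 * mom μ (8 * N) * mom μ (8 * N)) := by
        have : mom μ n - mom μ (n+1) ≤ E * mom μ (8 * N) / N := h1.trans h5
        have hd : 0 ≤ mom μ n - mom μ (n+1) := sub_nonneg.2 (mom_anti h (by omega))
        gcongr
    _ = _ := by unfold ac; field_simp

lemma block_bound {μ : Measure ℝ} (h : Good μ) {E : ℝ} (hE : 0 < E)
    (hEm : ∀ n : ℕ, 1 ≤ n → mom μ n ≤ E * mom μ (8 * n)) :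
    ∃ C > 0, ∀ (k : ℕ) (x : ℝ), 0 ≤ x → x < 1 →
      ∫ θ in (-Real.pi)..Real.pi,
        ‖∑ n ∈ Finset.range (8 * 2 ^ k), ((phi k n * (ac μ n * x ^ n) : ℝ) : ℂ) * ee θ ^ n‖ ≤
      C * (ac μ (8 * 2 ^ k) * x ^ (2 ^ k)) := by
  have hpi := Real.pi_pos
  refine ⟨2 * Real.pi * (8 * (2 + E) ^ 2) + Real.pi ^ 2 / 4, by positivity, ?_⟩
  intro k x hx0 hx
  rcases hx0.eq_or_lt with rfl | hxp
  · have : ∀ n : ℕ, phi k n * (ac μ n * 0 ^ n) = 0 := by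
      intro n
      rcases Nat.eq_zero_or_pos n with rfl | hn
      · rw [phi_low (by positivity), zero_mul]
      · rw [zero_pow hn.ne']; ring
    simp [this]
  set N : ℕ := 2 ^ k with hNdef
  have hN : 1 ≤ N := Nat.one_le_two_pow
  have hN' : (0:ℝ) < N := by exact_mod_cast hN
  have hNc : (N : ℝ) = 2 ^ k := by rw [hNdef]; push_cast; rfl
  have hac := ac_pos h (8 * N)
  set A : ℝ := ac μ (8 * N) * x ^ N with hA
  have hApos : 0 < A := by positivity
  have hcA : ∀ n, N ≤ n → n ≤ 8 * N → ac μ n * x ^ n ≤ A := by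
    intro n h1 h2
    have h3 : ac μ n ≤ ac μ (8 * N) := ac_mono h h2
    have h4 : x ^ n ≤ x ^ N := pow_le_pow_of_le_one hx0 hx.le h1
    rw [hA]; gcongr
  have hcp : ∀ n, 0 ≤ ac μ n * x ^ n := fun n => by have := ac_pos h n; positivity
  apply L1_block (fun n => phi k n * (ac μ n * x ^ n)) (8 * N) A N (8 * (2 + E) ^ 2) hApos hN'
  · rw [phi_low (by positivity), zero_mul]
  · rw [phi_high le_rfl, zero_mul]
  · calc ∑ n ∈ Finset.range (8 * N), (phi k n * (ac μ n * x ^ n)) ^ 2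
        ≤ ∑ n ∈ Finset.range (8 * N), A ^ 2 := by
          refine Finset.sum_le_sum fun n hn => ?_
          rw [Finset.mem_range] at hn
          rw [← sq_abs]
          refine pow_le_pow_left₀ (abs_nonneg _) ?_ 2
          by_cases hl : n ≤ 2 * N
          · rw [phi_low hl, zero_mul, abs_zero]; exact hApos.le
          · rw [abs_mul, abs_of_nonneg (hcp n)]
            calc _ ≤ 1 * A := mul_le_mul (phi_abs k n) (hcA n (by omega) hn.le) (hcp n) zero_le_one
              _ = A := one_mul _
      _ = 8 * (N * A ^ 2) := by simp; ring
      _ ≤ _ := by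
          have : (1:ℝ) ≤ (2 + E) ^ 2 := by nlinarith
          have : 0 ≤ N * A ^ 2 := by positivity
          nlinarith
  · calc ∑ n ∈ Finset.range (8 * N), (phi k n * (ac μ n * x ^ n) -
            phi k (n+1) * (ac μ (n+1) * x ^ (n+1))) ^ 2
        ≤ ∑ n ∈ Finset.range (8 * N), ((2 + E) * A / N) ^ 2 := by
          refine Finset.sum_le_sum fun n hn => ?_
          rw [Finset.mem_range] at hn
          rw [← sq_abs]
          refine pow_le_pow_left₀ (abs_nonneg _) ?_ 2
          by_cases hl : n + 1 ≤ 2 * N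
          · rw [phi_low (by omega), phi_low hl]; simp; positivity
          · have hl' : 2 * N ≤ n := by omega
            have e : phi k n * (ac μ n * x ^ n) - phi k (n+1) * (ac μ (n+1) * x ^ (n+1)) =
              (phi k n - phi k (n+1)) * (ac μ n * x ^ n) +
              phi k (n+1) * (ac μ n * x ^ n * (1 - x) - (ac μ (n+1) - ac μ n) * x ^ (n+1)) := by
              rw [pow_succ]; ring
            have t1 : |(phi k n - phi k (n+1)) * (ac μ n * x ^ n)| ≤ A / N := by
              rw [abs_mul, abs_of_nonneg (hcp n)]
              calc _ ≤ (1 / 2 ^ k) * A :=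
                    mul_le_mul (phi_lip k n) (hcA n (by omega) hn.le) (hcp n) (by positivity)
                _ = _ := by rw [hNc]; ring
            have b1 : ac μ n * x ^ n * (1 - x) ≤ A / N := by
              have g := geom_aux hx0 hx.le N hN
              calc ac μ n * x ^ n * (1 - x) ≤ ac μ (8 * N) * x ^ (N + N) * (1 - x) := by
                    have h3 : ac μ n ≤ ac μ (8 * N) := ac_mono h hn.le
                    have h4 : x ^ n ≤ x ^ (N + N) := pow_le_pow_of_le_one hx0 hx.le (by omega)
                    have h5 : 0 ≤ 1 - x := by linarith
                    gcongr
                _ = A * (x ^ N * (1 - x)) := by rw [hA, pow_add]; ring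
                _ ≤ A * (1 / N) := by gcongr
                _ = _ := by ring
            have b1' : 0 ≤ ac μ n * x ^ n * (1 - x) := mul_nonneg (hcp n) (by linarith)
            have b2' : 0 ≤ (ac μ (n+1) - ac μ n) * x ^ (n+1) :=
              mul_nonneg (sub_nonneg.2 (ac_mono h (by omega))) (by positivity)
            have b2 : (ac μ (n+1) - ac μ n) * x ^ (n+1) ≤ E * A / N := by
              have g := ac_diff h hE hEm N n hN hl' (by omega)
              calc _ ≤ (E * ac μ (8 * N) / N) * x ^ N := by
                    have h4 : x ^ (n+1) ≤ x ^ N := pow_le_pow_of_le_one hx0 hx.le (by omega)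
                    gcongr
                _ = _ := by rw [hA]; ring
            have t2 : |phi k (n+1) * (ac μ n * x ^ n * (1 - x) - (ac μ (n+1) - ac μ n) * x ^ (n+1))|
                ≤ A / N + E * A / N := by
              rw [abs_mul]
              have : |ac μ n * x ^ n * (1 - x) - (ac μ (n+1) - ac μ n) * x ^ (n+1)| ≤ A / N + E * A / N := by
                have q1 : 0 ≤ A / N := by positivity
                have q2 : 0 ≤ E * A / N := by positivity
                rw [abs_le]; constructor <;> linarith
              calc _ ≤ 1 * _ := mul_le_mul (phi_abs k (n+1)) this (abs_nonneg _) zero_le_one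
                _ = _ := one_mul _
            rw [e]
            calc _ ≤ _ := abs_add_le _ _
              _ ≤ A / N + (A / N + E * A / N) := add_le_add t1 t2
              _ = _ := by ring
      _ = _ := by simp; field_simp

lemma phi_sum (K n : ℕ) : ∑ k ∈ Finset.range K, phi k n =
    Vc (n / (2 * 2 ^ K)) - Vc (n / 2) := by
  induction K with
  | zero => simp
  | succ K ih =>
    rw [Finset.sum_range_succ, ih, phi]
    have : (4:ℝ) * 2 ^ K = 2 * 2 ^ (K+1) := by ring
    rw [this]; ring

lemma bk_approx {μ : Measure ℝ} (h : Good μ) {x : ℝ} (hx0 : 0 ≤ x) (hx : x < 1) (K : ℕ) (θ : ℝ) :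
    ‖bk μ (x * ee θ)‖ ≤ (∑' n : ℕ, (1 - Vc (n / (2 * 2 ^ K))) * (ac μ n * x ^ n)) +
      (∑' n : ℕ, Vc (n / 2) * (ac μ n * x ^ n)) +
      ∑ k ∈ Finset.range K,
        ‖∑ n ∈ Finset.range (8 * 2 ^ k), ((phi k n * (ac μ n * x ^ n) : ℝ) : ℂ) * ee θ ^ n‖ := by
  have hsum := summable_ac h hx0 hx
  have hcp : ∀ n, 0 ≤ ac μ n * x ^ n := fun n => by have := ac_pos h n; positivity
  have hmult : ∀ u : ℕ → ℝ, (∀ n, |u n| ≤ 1) →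
      Summable (fun n => u n * (ac μ n * x ^ n)) := by
    intro u hu
    refine Summable.of_norm_bounded hsum fun n => ?_
    rw [Real.norm_eq_abs, abs_mul, abs_of_nonneg (hcp n)]
    exact mul_le_of_le_one_left (hcp n) (hu n)
  have hmultC : ∀ u : ℕ → ℝ, (∀ n, |u n| ≤ 1) →
      Summable (fun n => ((u n * (ac μ n * x ^ n) : ℝ) : ℂ) * ee θ ^ n) := by
    intro u hu
    refine Summable.of_norm_bounded hsum fun n => ?_
    rw [norm_mul, norm_pow, norm_ee, one_pow, mul_one, Complex.norm_real, Real.norm_eq_abs, abs_mul,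
      abs_of_nonneg (hcp n)]
    exact mul_le_of_le_one_left (hcp n) (hu n)
  have hblk : ∀ k, ∑ n ∈ Finset.range (8 * 2 ^ k), ((phi k n * (ac μ n * x ^ n) : ℝ) : ℂ) * ee θ ^ n =
      ∑' n : ℕ, ((phi k n * (ac μ n * x ^ n) : ℝ) : ℂ) * ee θ ^ n := by
    intro k
    rw [tsum_eq_sum]
    intro n hn
    rw [Finset.mem_range, not_lt] at hn
    rw [phi_high hn]; simp
  have hV1 : ∀ n : ℕ, |1 - Vc (n / (2 * 2 ^ K))| ≤ 1 := by
    intro n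
    have := Vc_nonneg (n / (2 * 2 ^ K))
    have := Vc_le_one (n / (2 * 2 ^ K))
    rw [abs_le]; constructor <;> linarith
  have hV2 : ∀ n : ℕ, |Vc (n / 2)| ≤ 1 := by
    intro n
    have := Vc_nonneg (n / 2)
    have := Vc_le_one (n / 2)
    rw [abs_le]; constructor <;> linarith
  have key : bk μ (x * ee θ) =
      (∑' n : ℕ, (((1 - Vc (n / (2 * 2 ^ K))) * (ac μ n * x ^ n) : ℝ) : ℂ) * ee θ ^ n) +
      (∑' n : ℕ, ((Vc (n / 2) * (ac μ n * x ^ n) : ℝ) : ℂ) * ee θ ^ n) +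
      ∑ k ∈ Finset.range K, ∑' n : ℕ, ((phi k n * (ac μ n * x ^ n) : ℝ) : ℂ) * ee θ ^ n := by
    rw [← Summable.tsum_finsetSum (fun k _ => hmultC _ (phi_abs k)),
      ← (hmultC _ hV1).tsum_add (hmultC _ hV2),
      ← ((hmultC _ hV1).add (hmultC _ hV2)).tsum_add (summable_sum fun k _ => hmultC _ (phi_abs k)), bk]
    congr 1; ext n
    rw [← Finset.sum_mul, ← Complex.ofReal_sum, ← Finset.sum_mul, phi_sum, mul_pow]
    push_cast; ring
  rw [key]
  refine (norm_add₃_le).trans ?_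
  have hn : ∀ u : ℕ → ℝ, (∀ n, |u n| ≤ 1) → (∀ n, 0 ≤ u n) →
      ‖∑' n : ℕ, ((u n * (ac μ n * x ^ n) : ℝ) : ℂ) * ee θ ^ n‖ ≤ ∑' n, u n * (ac μ n * x ^ n) := by
    intro u hu hu0
    refine tsum_of_norm_bounded (hmult u hu).hasSum fun n => ?_
    rw [norm_mul, norm_pow, norm_ee, one_pow, mul_one, Complex.norm_real, Real.norm_eq_abs,
      abs_of_nonneg (mul_nonneg (hu0 n) (hcp n))]
  refine add_le_add (add_le_add (hn _ hV1 fun n => ?_) (hn _ hV2 fun n => Vc_nonneg _)) ?_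
  · have := Vc_le_one (n / (2 * 2 ^ K)); linarith
  · refine (norm_sum_le _ _).trans (le_of_eq ?_)
    refine Finset.sum_congr rfl fun k _ => ?_
    rw [hblk]

lemma IM_le_sum {μ : Measure ℝ} (h : Good μ) {E : ℝ} (hE : 0 < E)
    (hEm : ∀ n : ℕ, 1 ≤ n → mom μ n ≤ E * mom μ (8 * n)) :
    ∃ C > 0, ∀ (x S : ℝ), 0 ≤ x → x < 1 →
      (∀ K, ∑ k ∈ Finset.range K, ac μ (8 * 2 ^ k) * x ^ (2 ^ k) ≤ S) → IM μ x ≤ C * (1 + S) := by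
  obtain ⟨C, hC, hb⟩ := block_bound h hE hEm
  have hpi := Real.pi_pos
  set c4 := ∑ n ∈ Finset.range 4, ac μ n with hc4
  have hc4p : 0 ≤ c4 := Finset.sum_nonneg fun n _ => (ac_pos h n).le
  refine ⟨2 * Real.pi * c4 + C, by positivity, ?_⟩
  intro x S hx0 hx hS
  have hS0 : 0 ≤ S := by simpa using hS 0
  have hsum := summable_ac h hx0 hx
  have hcp : ∀ n, 0 ≤ ac μ n * x ^ n := fun n => by have := ac_pos h n; positivity
  have h4 : ∑' n : ℕ, Vc (n / 2) * (ac μ n * x ^ n) ≤ c4 := by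
    rw [tsum_eq_sum (s := Finset.range 4)]
    · refine Finset.sum_le_sum fun n _ => ?_
      have := ac_pos h n
      calc _ ≤ 1 * (ac μ n * 1) := by
            gcongr
            · exact Vc_le_one _
            · exact pow_le_one₀ hx0 hx.le
        _ = _ := by ring
    · intro n hn
      rw [Finset.mem_range, not_lt] at hn
      have : (4:ℝ) ≤ n := by exact_mod_cast hn
      rw [Vc_zero (by linarith), zero_mul]
  have hτ : Filter.Tendsto (fun K : ℕ => ∑' n : ℕ, (1 - Vc (n / (2 * 2 ^ K))) * (ac μ n * x ^ n))
      Filter.atTop (nhds 0) := by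
    have := tendsto_tsum_of_dominated_convergence (𝓕 := Filter.atTop)
      (f := fun (K n : ℕ) => (1 - Vc (n / (2 * 2 ^ K))) * (ac μ n * x ^ n)) (g := fun _ => (0:ℝ))
      (bound := fun n => ac μ n * x ^ n) hsum ?_ ?_
    · simpa using this
    · intro n
      refine tendsto_const_nhds.congr' ?_
      filter_upwards [Filter.eventually_ge_atTop n] with K hK
      rw [Vc_one, sub_self, zero_mul]
      rw [div_le_one (by positivity)]
      have h1 : (n:ℝ) ≤ K := by exact_mod_cast hK
      have h2 : (K:ℝ) < 2 ^ K := by exact_mod_cast Nat.lt_two_pow_self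
      have : (0:ℝ) < 2 ^ K := by positivity
      linarith
    · refine Filter.Eventually.of_forall fun K n => ?_
      have := Vc_nonneg (n / (2 * 2 ^ K))
      have := Vc_le_one (n / (2 * 2 ^ K))
      rw [Real.norm_eq_abs, abs_of_nonneg (mul_nonneg (by linarith) (hcp n))]
      exact mul_le_of_le_one_left (hcp n) (by linarith)
  have hK : ∀ K : ℕ, IM μ x ≤ 2 * Real.pi *
      (∑' n : ℕ, (1 - Vc (n / (2 * 2 ^ K))) * (ac μ n * x ^ n)) + (2 * Real.pi * c4 + C * S) := by
    intro K
    set τ := ∑' n : ℕ, (1 - Vc (n / (2 * 2 ^ K))) * (ac μ n * x ^ n) with hτd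
    have hcont : ∀ k : ℕ, Continuous (fun θ : ℝ =>
        ‖∑ n ∈ Finset.range (8 * 2 ^ k), ((phi k n * (ac μ n * x ^ n) : ℝ) : ℂ) * ee θ ^ n‖) := by
      intro k; fun_prop
    calc IM μ x ≤ ∫ θ in (-Real.pi)..Real.pi, ((τ + c4) + ∑ k ∈ Finset.range K,
        ‖∑ n ∈ Finset.range (8 * 2 ^ k), ((phi k n * (ac μ n * x ^ n) : ℝ) : ℂ) * ee θ ^ n‖) := by
          apply intervalIntegral.integral_mono_on (by linarith)
          · exact (continuous_bk_circle h hx0 hx).norm.intervalIntegrable _ _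
          · apply Continuous.intervalIntegrable
            exact continuous_const.add (continuous_finsetSum _ fun k _ => hcont k)
          · intro θ _
            have := bk_approx h hx0 hx K θ
            rw [← hτd] at this
            linarith
      _ = 2 * Real.pi * (τ + c4) + ∑ k ∈ Finset.range K, ∫ θ in (-Real.pi)..Real.pi,
          ‖∑ n ∈ Finset.range (8 * 2 ^ k), ((phi k n * (ac μ n * x ^ n) : ℝ) : ℂ) * ee θ ^ n‖ := by
          rw [intervalIntegral.integral_add intervalIntegrable_const
            ((continuous_finsetSum _ fun k _ => hcont k).intervalIntegrable _ _),
            intervalIntegral.integral_finsetSum (fun k _ => (hcont k).intervalIntegrable _ _)]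
          rw [intervalIntegral.integral_const, smul_eq_mul]; ring
      _ ≤ 2 * Real.pi * (τ + c4) + ∑ k ∈ Finset.range K, C * (ac μ (8 * 2 ^ k) * x ^ (2 ^ k)) := by
          gcongr with k _
          exact hb k x hx0 hx
      _ ≤ _ := by
          rw [← Finset.mul_sum]
          have := hS K
          nlinarith
  have hlim := (hτ.const_mul (2 * Real.pi)).add_const (2 * Real.pi * c4 + C * S)
  have := ge_of_tendsto' hlim hK
  have q : 0 ≤ 2 * Real.pi * c4 * S := by positivity
  nlinarith

/-- Geometric summation from the class `Ď`. -/
lemma dcheck_sum (H : ℝ → ℝ) (hpos : ∀ r ∈ Ico (0:ℝ) 1, 0 < H r)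
    (hanti : ∀ r ∈ Ico (0:ℝ) 1, ∀ s ∈ Ico (0:ℝ) 1, r ≤ s → H s ≤ H r)
    (K : ℝ) (hK : 1 < K) (C : ℝ) (hC : 1 < C)
    (hH : ∀ r ∈ Ico (0:ℝ) 1, C * H (1 - (1 - r) / K) ≤ H r) :
    ∃ A > 0, ∀ m : ℕ, ∑ k ∈ Finset.range (m+1), (H (1 - 1 / 2 ^ k))⁻¹ ≤ A * (H (1 - 1 / 2 ^ m))⁻¹ := by
  have hmem : ∀ k : ℕ, (1 - 1 / 2 ^ k : ℝ) ∈ Ico (0:ℝ) 1 := by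
    intro k
    have h1 : (1:ℝ) / 2 ^ k ≤ 1 := by
      rw [div_le_one (by positivity)]; exact one_le_pow₀ (by norm_num)
    have h2 : (0:ℝ) < 1 / 2 ^ k := by positivity
    constructor <;> linarith
  have hGm : ∀ k m : ℕ, k ≤ m → (H (1 - 1 / 2 ^ k))⁻¹ ≤ (H (1 - 1 / 2 ^ m))⁻¹ := by
    intro k m hkm
    apply inv_anti₀ (hpos _ (hmem m))
    apply hanti _ (hmem k) _ (hmem m)
    have : (1:ℝ) / 2 ^ m ≤ 1 / 2 ^ k := by
      apply one_div_le_one_div_of_le (by positivity)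
      exact pow_le_pow_right₀ (by norm_num) hkm
    linarith
  obtain ⟨j, hj⟩ := pow_unbounded_of_one_lt K (one_lt_two)
  have hj0 : 1 ≤ j := by
    rcases Nat.eq_zero_or_pos j with rfl | h
    · simp at hj; linarith
    · exact h
  have hstep : ∀ k : ℕ, (H (1 - 1 / 2 ^ k))⁻¹ ≤ C⁻¹ * (H (1 - 1 / 2 ^ (k + j)))⁻¹ := by
    intro k
    rw [← mul_inv]
    have hp := hpos _ (hmem (k + j))
    apply inv_anti₀ (by positivity)
    refine le_trans ?_ (hH _ (hmem k))
    gcongr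
    have hp2 : (0:ℝ) < 2 ^ k := by positivity
    have e : (1 - (1 - 1 / 2 ^ k : ℝ)) / K = 1 / (2 ^ k * K) := by
      rw [sub_sub_cancel, div_div]
    rw [e]
    have h1 : (1:ℝ) / (2 ^ k * K) ≤ 1 := by
      rw [div_le_one (by positivity)]
      have : (1:ℝ) ≤ 2 ^ k := one_le_pow₀ (by norm_num)
      nlinarith
    have h2 : (0:ℝ) < 1 / (2 ^ k * K) := by positivity
    apply hanti _ ⟨by linarith, by linarith⟩ _ (hmem _)
    have : (1:ℝ) / 2 ^ (k + j) ≤ 1 / (2 ^ k * K) := by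
      apply one_div_le_one_div_of_le (by positivity)
      rw [pow_add]; gcongr
    linarith
  have hC1 : 0 < C - 1 := by linarith
  refine ⟨j * C / (C - 1), by have : (0:ℝ) < j := by exact_mod_cast hj0
                              positivity, ?_⟩
  have hA : (j:ℝ) + (j * C / (C - 1)) * C⁻¹ = j * C / (C - 1) := by field_simp; ring
  have hA2 : (j:ℝ) ≤ j * C / (C - 1) := by
    have : 0 ≤ (j * C / (C - 1)) * C⁻¹ := by positivity
    linarith
  intro m
  induction m using Nat.strong_induction_on with
  | _ m ih =>
    have hGp := inv_pos.2 (hpos _ (hmem m))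
    by_cases hm : m < j
    · calc _ ≤ ∑ k ∈ Finset.range (m+1), (H (1 - 1 / 2 ^ m))⁻¹ :=
            Finset.sum_le_sum fun k hk => hGm k m (by rw [Finset.mem_range] at hk; omega)
        _ = (m+1) * (H (1 - 1 / 2 ^ m))⁻¹ := by simp
        _ ≤ j * (H (1 - 1 / 2 ^ m))⁻¹ := by gcongr; exact_mod_cast hm
        _ ≤ _ := by gcongr
    · obtain ⟨i, rfl⟩ := Nat.exists_eq_add_of_le (not_lt.1 hm)
      have h1 := ih i (by omega)
      have e : j + i + 1 = (i + 1) + j := by omega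
      have h2 := hstep i
      rw [e, Finset.sum_range_add]
      rw [Nat.add_comm i j] at h2
      calc _ ≤ (j * C / (C - 1)) * (C⁻¹ * (H (1 - 1 / 2 ^ (j + i)))⁻¹) +
            ∑ k ∈ Finset.range j, (H (1 - 1 / 2 ^ (j + i)))⁻¹ := by
              refine add_le_add (h1.trans ?_) ?_
              · gcongr
              · exact Finset.sum_le_sum fun k hk => hGm _ _ (by rw [Finset.mem_range] at hk; omega)
        _ = (j + (j * C / (C - 1)) * C⁻¹) * (H (1 - 1 / 2 ^ (j + i)))⁻¹ := by
              simp; ring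
        _ ≤ _ := by rw [hA]

lemma IM_upper {μ : Measure ℝ} (h : Good μ) {D : ℝ} (hD0 : 0 ≤ D)
    (hD : ∀ r < 1, FF μ r ≤ D * FF μ ((1 + r) / 2)) (A : ℝ) (hA0 : 0 < A)
    (hA : ∀ m : ℕ, ∑ k ∈ Finset.range (m+1), (FF μ (1 - 1 / 2 ^ k))⁻¹ ≤ A * (FF μ (1 - 1 / 2 ^ m))⁻¹) :
    ∃ C > 0, ∀ x : ℝ, 0 ≤ x → x < 1 → IM μ x ≤ C * (FF μ x)⁻¹ := by
  obtain ⟨E, hE, hEm⟩ := mom_doubling h hD0 hD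
  obtain ⟨C, hC, hI⟩ := IM_le_sum h hE hEm
  have hS := summable_superexp D hD0
  set S0 := ∑' j : ℕ, D ^ j * Real.exp (-(2:ℝ) ^ j) with hS0
  have hS0p : 0 ≤ S0 := tsum_nonneg fun j => by positivity
  have hF0 := h.pos 0 zero_lt_one
  refine ⟨C * (FF μ 0 + D ^ 5 * (A + D * S0)), by positivity, ?_⟩
  intro x hx0 hx
  have hFx := h.pos x hx
  have hfac : ∀ k : ℕ, ac μ (8 * 2 ^ k) ≤ D ^ 5 * (FF μ (1 - 1 / 2 ^ k))⁻¹ := by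
    intro k
    have h1 := FF_doubling_iter hD0 hD 5 (1 / (4 * ((8 * 2 ^ k : ℕ) : ℝ))) (by positivity)
    have e : (2:ℝ) ^ 5 * (1 / (4 * ((8 * 2 ^ k : ℕ) : ℝ))) = 1 / 2 ^ k := by
      push_cast; field_simp; norm_num
    rw [e] at h1
    have h2 := mom_lower h (8 * 2 ^ k) (by have : 0 < 2 ^ k := by positivity
                                           omega)
    have hp : 0 < FF μ (1 - 1 / 2 ^ k) := h.pos _ (by
      have : (0:ℝ) < 1 / 2 ^ k := by positivity
      linarith)
    have hm := mom_pos h (8 * 2 ^ k)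
    have h3 : FF μ (1 - 1 / 2 ^ k) ≤ D ^ 5 * (2 * mom μ (8 * 2 ^ k)) := h1.trans (by gcongr)
    unfold ac
    rw [← div_eq_mul_inv, le_div_iff₀ hp, inv_mul_le_iff₀ (by positivity)]
    linarith
  -- dyadic position of x
  obtain ⟨m, hm1, hm2⟩ := exists_nat_pow_near (x := 1 / (1 - x)) (y := (2:ℝ))
    (by rw [le_div_iff₀ (by linarith)]; linarith) (by norm_num)
  have hxm : 1 - 1 / 2 ^ m ≤ x := by
    have : 1 - x ≤ 1 / 2 ^ m := by
      rw [le_div_iff₀ (by linarith)] at hm1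
      rw [le_div_iff₀ (by positivity)]; linarith
    linarith
  have hxm2 : x ≤ 1 - 1 / 2 ^ (m+1) := by
    have : 1 / 2 ^ (m+1) ≤ 1 - x := by
      rw [div_lt_iff₀ (by linarith)] at hm2
      rw [div_le_iff₀ (by positivity)]; linarith
    linarith
  have hGm : (FF μ (1 - 1 / 2 ^ m))⁻¹ ≤ (FF μ x)⁻¹ := inv_anti₀ hFx (FF_anti h hxm)
  have hGp : 0 < FF μ (1 - 1 / 2 ^ m) := lt_of_lt_of_le hFx (FF_anti h hxm)
  have hbig : ∀ j : ℕ, (FF μ (1 - 1 / 2 ^ (m + 1 + j)))⁻¹ * x ^ (2 ^ (m + 1 + j)) ≤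
      (D * (D ^ j * Real.exp (-(2:ℝ) ^ j))) * (FF μ (1 - 1 / 2 ^ m))⁻¹ := by
    intro j
    have hp : 0 < FF μ (1 - 1 / 2 ^ (m + 1 + j)) := h.pos _ (by
      have : (0:ℝ) < 1 / 2 ^ (m + 1 + j) := by positivity
      linarith)
    have h1 := FF_doubling_iter hD0 hD (j+1) (1 / 2 ^ (m + 1 + j)) (by positivity)
    have e : (2:ℝ) ^ (j+1) * (1 / 2 ^ (m + 1 + j)) = 1 / 2 ^ m := by
      rw [show m + 1 + j = (j + 1) + m by omega, pow_add _ (j+1) m]; field_simp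
    rw [e] at h1
    have h2 : (FF μ (1 - 1 / 2 ^ (m + 1 + j)))⁻¹ ≤ D ^ (j+1) * (FF μ (1 - 1 / 2 ^ m))⁻¹ := by
      rw [← div_eq_mul_inv, le_div_iff₀ hGp, inv_mul_le_iff₀ hp]; linarith
    have h3 : x ^ (2 ^ (m + 1 + j)) ≤ Real.exp (-(2:ℝ) ^ j) := by
      have h4 : x ≤ Real.exp (-(1 / 2 ^ (m+1))) := hxm2.trans (Real.one_sub_le_exp_neg _)
      calc x ^ (2 ^ (m + 1 + j)) ≤ (Real.exp (-(1 / 2 ^ (m+1)))) ^ (2 ^ (m + 1 + j)) :=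
            pow_le_pow_left₀ hx0 h4 _
        _ = _ := by
            rw [← Real.exp_nat_mul]; congr 1; push_cast; rw [pow_add _ (m+1) j]; field_simp
    calc _ ≤ (D ^ (j+1) * (FF μ (1 - 1 / 2 ^ m))⁻¹) * Real.exp (-(2:ℝ) ^ j) := by gcongr
      _ = _ := by ring
  have hsum : ∀ K : ℕ, ∑ k ∈ Finset.range K, ac μ (8 * 2 ^ k) * x ^ (2 ^ k) ≤
      D ^ 5 * ((A + D * S0) * (FF μ x)⁻¹) := by
    intro K
    have hGpos : ∀ k : ℕ, 0 < FF μ (1 - 1 / 2 ^ k) := fun k => h.pos _ (by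
      have : (0:ℝ) < 1 / 2 ^ k := by positivity
      linarith)
    have hterm : ∀ k : ℕ, 0 ≤ (FF μ (1 - 1 / 2 ^ k))⁻¹ * x ^ (2 ^ k) := fun k => by
      have := hGpos k; positivity
    calc _ ≤ ∑ k ∈ Finset.range K, D ^ 5 * ((FF μ (1 - 1 / 2 ^ k))⁻¹ * x ^ (2 ^ k)) := by
          refine Finset.sum_le_sum fun k _ => ?_
          rw [← mul_assoc]; gcongr; exact hfac k
      _ ≤ D ^ 5 * ∑ k ∈ Finset.range (m + 1 + K), (FF μ (1 - 1 / 2 ^ k))⁻¹ * x ^ (2 ^ k) := by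
          rw [← Finset.mul_sum]
          gcongr
          · exact fun k _ _ => hterm k
          · omega
      _ ≤ D ^ 5 * ((A + D * S0) * (FF μ (1 - 1 / 2 ^ m))⁻¹) := by
          gcongr
          rw [Finset.sum_range_add, add_mul]
          refine add_le_add ?_ ?_
          · refine le_trans (Finset.sum_le_sum fun k _ => ?_) (hA m)
            have := hGpos k
            exact mul_le_of_le_one_right (by positivity) (pow_le_one₀ hx0 hx.le)
          · refine (Finset.sum_le_sum fun j _ => hbig j).trans ?_
            rw [← Finset.sum_mul, ← Finset.mul_sum]
            gcongr
            exact hS.sum_le_tsum _ (fun j _ => by positivity)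
      _ ≤ _ := by gcongr
  have h1 := hI x _ hx0 hx hsum
  have h2 : 1 ≤ FF μ 0 * (FF μ x)⁻¹ := by
    rw [← div_eq_mul_inv, le_div_iff₀ hFx, one_mul]; exact FF_anti h hx0
  calc _ ≤ _ := h1
    _ ≤ C * (FF μ 0 * (FF μ x)⁻¹ + D ^ 5 * ((A + D * S0) * (FF μ x)⁻¹)) := by gcongr
    _ = _ := by ring

lemma FF_one {μ : Measure ℝ} (h : Good μ) {r : ℝ} (hr : 1 ≤ r) : FF μ r = 0 := by
  have : μ (Ioi r) = 0 := by
    rw [measure_eq_zero_iff_ae_notMem]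
    filter_upwards [h.supp] with s hs hs'
    exact absurd (lt_of_le_of_lt hr hs') (not_lt.2 hs.2.le)
  simp [FF, Measure.real, this]

lemma FF_neg {μ : Measure ℝ} (h : Good μ) {r : ℝ} (hr : r ≤ 0) : FF μ r = FF μ 0 := by
  unfold FF
  refine measureReal_congr ?_
  filter_upwards [h.supp] with s hs
  exact propext ⟨fun _ => hs.1, fun _ => lt_of_le_of_lt hr hs.1⟩

lemma FF_contOn {μ : Measure ℝ} (h : Good μ) : ContinuousOn (FF μ) (Icc 0 1) := by
  haveI := h.fin
  haveI : NullSingletonClass μ := ⟨h.noatom⟩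
  have hc : Continuous fun r => ∫ x in (0:ℝ)..r, (1:ℝ) ∂μ :=
    intervalIntegral.continuous_primitive (fun a b => (integrable_const _).intervalIntegrable) 0
  have : ContinuousOn (fun r => FF μ 0 - ∫ x in (0:ℝ)..r, (1:ℝ) ∂μ) (Icc 0 1) :=
    (continuous_const.sub hc).continuousOn
  refine this.congr ?_
  intro r hr
  simp only
  rw [intervalIntegral.integral_of_le hr.1]
  simp only [integral_const, smul_eq_mul, mul_one, measureReal_restrict_apply_univ]
  unfold FF
  have := measureReal_union (μ := μ) (s₁ := Ioc 0 r) (s₂ := Ioi r)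
    (by rw [Set.disjoint_left]; intro a ha hb; exact absurd ha.2 (not_le.2 hb)) measurableSet_Ioi
  rw [Ioc_union_Ioi_eq_Ioi hr.1] at this
  linarith

lemma FF_surj {μ : Measure ℝ} (h : Good μ) {t : ℝ} (ht0 : 0 ≤ t) (ht : t ≤ FF μ 0) :
    ∃ r ∈ Icc (0:ℝ) 1, FF μ r = t := by
  have := intermediate_value_Icc' (zero_le_one) (FF_contOn h)
  rw [FF_one h le_rfl] at this
  exact this ⟨ht0, ht⟩

lemma FF_measurable {μ : Measure ℝ} (h : Good μ) : Measurable (FF μ) := (FF_anti h).measurable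

lemma FF_ofReal {μ : Measure ℝ} (h : Good μ) (r : ℝ) : ENNReal.ofReal (FF μ r) = μ (Ioi r) := by
  haveI := h.fin
  exact ofReal_measureReal

lemma mu_univ {μ : Measure ℝ} (h : Good μ) : μ univ = ENNReal.ofReal (FF μ 0) := by
  rw [FF_ofReal h]
  refine measure_congr ?_
  filter_upwards [h.supp] with s hs
  exact propext ⟨fun _ => hs.1, fun _ => trivial⟩

lemma map_FF {μ : Measure ℝ} (h : Good μ) :
    Measure.map (FF μ) μ = volume.restrict (Ioc 0 (FF μ 0)) := by
  haveI := h.fin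
  haveI : IsFiniteMeasure (Measure.map (FF μ) μ) := Measure.isFiniteMeasure_map μ _
  refine Measure.ext_of_Iic _ _ ?_
  intro t
  rw [Measure.map_apply (FF_measurable h) measurableSet_Iic,
    Measure.restrict_apply measurableSet_Iic, inter_comm, Ioc_inter_Iic, Real.volume_Ioc, sub_zero]
  rcases lt_or_ge t 0 with ht | ht
  · rw [ENNReal.ofReal_of_nonpos (le_trans (min_le_right _ _) ht.le)]
    convert measure_empty (μ := μ)
    ext s
    simp only [mem_preimage, mem_Iic, mem_empty_iff_false, iff_false, not_le]
    exact lt_of_lt_of_le ht (FF_nonneg s)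
  rcases le_or_gt (FF μ 0) t with ht2 | ht2
  · rw [min_eq_left ht2, ← mu_univ h]
    refine measure_congr ?_
    filter_upwards [h.supp] with s hs
    exact propext ⟨fun _ => trivial, fun _ => (FF_anti h hs.1.le).trans ht2⟩
  rw [min_eq_right ht2.le]
  apply le_antisymm
  · have key : ∀ t', t < t' → t' ≤ FF μ 0 → μ (FF μ ⁻¹' Iic t) ≤ ENNReal.ofReal t' := by
      intro t' h1 h2
      obtain ⟨r, hr, hrt⟩ := FF_surj h (ht.trans h1.le) h2
      rw [← hrt, FF_ofReal h]
      refine measure_mono ?_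
      intro s hs
      by_contra hcon
      have := FF_anti h (not_lt.1 hcon)
      rw [hrt] at this
      exact absurd (this.trans hs) (not_le.2 h1)
    have hlim : Filter.Tendsto ENNReal.ofReal (nhdsWithin t (Ioi t)) (nhds (ENNReal.ofReal t)) :=
      (ENNReal.continuous_ofReal.tendsto t).mono_left nhdsWithin_le_nhds
    refine ge_of_tendsto hlim ?_
    filter_upwards [Ioc_mem_nhdsGT ht2] with t' ht'
    exact key t' ht'.1 ht'.2
  · obtain ⟨r, hr, hrt⟩ := FF_surj h ht ht2.le
    conv_lhs => rw [← hrt, FF_ofReal h]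
    refine measure_mono ?_
    intro s hs
    simp only [mem_preimage, mem_Iic]
    rw [← hrt]
    exact FF_anti h (le_of_lt hs)

lemma lint_FF {μ : Measure ℝ} (h : Good μ) {G : ℝ → ℝ≥0∞} (hG : Measurable G) :
    ∫⁻ s, G (FF μ s) ∂μ = ∫⁻ y in Ioc 0 (FF μ 0), G y := by
  rw [← map_FF h, lintegral_map hG (FF_measurable h)]

/-- Tail version, using the indicator of `{y ≤ FF r}`. -/
lemma lint_FF_tail {μ : Measure ℝ} (h : Good μ) {G : ℝ → ℝ≥0∞} (hG : Measurable G) {r : ℝ}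
    (hr0 : 0 ≤ r) :
    ∫⁻ s in Ioi r, G (FF μ s) ∂μ = ∫⁻ y in Ioc 0 (FF μ r), G y := by
  haveI := h.fin
  have h1 := lint_FF h (hG.indicator (measurableSet_Iic (a := FF μ r)))
  have hX : FF μ r ≤ FF μ 0 := FF_anti h hr0
  have hae : FF μ ⁻¹' (Iic (FF μ r)) =ᵐ[μ] Ioi r := by
    symm
    refine ae_eq_of_subset_of_measure_ge ?_ ?_ measurableSet_Ioi.nullMeasurableSet (measure_ne_top _ _)
    · intro s hs
      exact FF_anti h (le_of_lt hs)
    · rw [← FF_ofReal h, ← Measure.map_apply (FF_measurable h) measurableSet_Iic, map_FF h,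
        Measure.restrict_apply measurableSet_Iic, inter_comm, Ioc_inter_Iic, Real.volume_Ioc, sub_zero,
        min_eq_right hX]
  rw [← Measure.restrict_congr_set hae, ← lintegral_indicator (FF_measurable h measurableSet_Iic)]
  have h2 : ∀ s, (FF μ ⁻¹' (Iic (FF μ r))).indicator (fun s => G (FF μ s)) s =
    (Iic (FF μ r)).indicator G (FF μ s) := fun s => rfl
  simp only [h2]
  rw [h1, lintegral_indicator measurableSet_Iic, Measure.restrict_restrict measurableSet_Iic, inter_comm,
    Ioc_inter_Iic, min_eq_right hX]

lemma lint_pow {a x : ℝ} (ha : -1 < a) (hx : 0 ≤ x) :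
    ∫⁻ y in Ioc 0 x, ENNReal.ofReal (y ^ a) = ENNReal.ofReal (x ^ (a + 1) / (a + 1)) := by
  have hi : IntervalIntegrable (fun y : ℝ => y ^ a) volume 0 x := intervalIntegral.intervalIntegrable_rpow' ha
  have hi2 : IntegrableOn (fun y : ℝ => y ^ a) (Ioc 0 x) := (intervalIntegrable_iff_integrableOn_Ioc_of_le hx).1 hi
  rw [← ofReal_integral_eq_lintegral_ofReal hi2]
  · rw [← intervalIntegral.integral_of_le hx, integral_rpow (Or.inl ha), Real.zero_rpow (by linarith), sub_zero]
  · filter_upwards [ae_restrict_mem measurableSet_Ioc] with y hy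
    exact Real.rpow_nonneg hy.1.le _

lemma lint_pow_top {a x : ℝ} (ha : a ≤ -1) (hx : 0 < x) :
    ∫⁻ y in Ioc 0 x, ENNReal.ofReal (y ^ a) = ⊤ := by
  by_contra hcon
  have : IntegrableOn (fun y : ℝ => y ^ a) (Ioo 0 x) := by
    refine ⟨by fun_prop, ?_⟩
    rw [hasFiniteIntegral_iff_ofReal]
    · refine lt_of_le_of_lt (lintegral_mono_set Ioo_subset_Ioc_self) (lt_top_iff_ne_top.2 hcon)
    · filter_upwards [ae_restrict_mem measurableSet_Ioo] with y hy
      exact Real.rpow_nonneg hy.1.le _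
  rw [intervalIntegral.integrableOn_Ioo_rpow_iff hx] at this
  linarith

lemma lint_pow_Ioi {a x : ℝ} (ha : a < -1) (hx : 0 < x) :
    ∫⁻ y in Ioi x, ENNReal.ofReal (y ^ a) = ENNReal.ofReal (x ^ (a + 1) / (-(a + 1))) := by
  have hi2 := integrableOn_Ioi_rpow_of_lt ha hx
  rw [← ofReal_integral_eq_lintegral_ofReal hi2]
  · rw [integral_Ioi_rpow_of_lt ha hx]
    congr 1
    rw [div_neg, neg_div]
  · filter_upwards [ae_restrict_mem measurableSet_Ioi] with y hy
    exact Real.rpow_nonneg (hx.trans hy).le _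

/-- Hardy type estimate. -/
lemma hardy_max {μ : Measure ℝ} (h : Good μ) {β : ℝ} (hb0 : 0 < β) (hb1 : β < 1) {x : ℝ} (hx : 0 < x) :
    ∫⁻ s, ENNReal.ofReal (FF μ s ^ (-β) * (max x (FF μ s))⁻¹) ∂μ ≤
      ENNReal.ofReal (x ^ (-β) * (1 / (1 - β) + 1 / β)) := by
  rw [lint_FF h (G := fun y => ENNReal.ofReal (y ^ (-β) * (max x y)⁻¹)) (by fun_prop)]
  have hsub : Ioc 0 (FF μ 0) ⊆ Ioc 0 x ∪ Ioi x := by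
    intro y hy
    rcases le_or_gt y x with h1 | h1
    · exact Or.inl ⟨hy.1, h1⟩
    · exact Or.inr h1
  refine (lintegral_mono_set hsub).trans ?_
  refine (lintegral_union_le _ _ _).trans ?_
  have h1 : ∫⁻ y in Ioc 0 x, ENNReal.ofReal (y ^ (-β) * (max x y)⁻¹) =
      ENNReal.ofReal (x ^ (-β) * (1 / (1 - β))) := by
    have : ∀ y ∈ Ioc 0 x, ENNReal.ofReal (y ^ (-β) * (max x y)⁻¹) =
        ENNReal.ofReal (y ^ (-β)) * ENNReal.ofReal x⁻¹ := by
      intro y hy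
      rw [max_eq_left hy.2, ENNReal.ofReal_mul (Real.rpow_nonneg hy.1.le _)]
    rw [setLIntegral_congr_fun measurableSet_Ioc this, lintegral_mul_const _ (by fun_prop),
      lint_pow (by linarith) hx.le, ← ENNReal.ofReal_mul (by have : 0 < -β + 1 := by linarith
                                                             positivity)]
    congr 1
    rw [Real.rpow_add_one hx.ne']
    have : -β + 1 ≠ 0 := by linarith
    have : 1 - β ≠ 0 := by linarith
    field_simp
    ring
  have h2 : ∫⁻ y in Ioi x, ENNReal.ofReal (y ^ (-β) * (max x y)⁻¹) =
      ENNReal.ofReal (x ^ (-β) * (1 / β)) := by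
    have : ∀ y ∈ Ioi x, ENNReal.ofReal (y ^ (-β) * (max x y)⁻¹) =
        ENNReal.ofReal (y ^ (-β - 1)) := by
      intro y hy
      rw [max_eq_right (le_of_lt hy), Real.rpow_sub_one (hx.trans hy).ne', div_eq_mul_inv]
    rw [setLIntegral_congr_fun measurableSet_Ioi this, lint_pow_Ioi (by linarith) hx]
    congr 1
    rw [show -β - 1 + 1 = -β by ring, neg_neg, mul_one_div]
  rw [h1, h2, ← ENNReal.ofReal_add, mul_add]
  · have : 0 < 1 - β := by linarith
    positivity
  · positivity

/-- The measure `s ω(s) ds` on `(0,1)`. -/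
def muw (w : ℝ → ℝ) : Measure ℝ :=
  (volume.restrict (Ioo (0:ℝ) 1)).withDensity (fun r => ENNReal.ofReal (r * w r))

lemma w_aem {w : ℝ → ℝ} (hw : IsRadialWeight w) : AEMeasurable w (volume.restrict (Ioo (0:ℝ) 1)) :=
  (hw.2.1.mono_set Ioo_subset_Ico_self).aestronglyMeasurable.aemeasurable

lemma w_int {w : ℝ → ℝ} (hw : IsRadialWeight w) {r : ℝ} (hr : 0 ≤ r) : IntegrableOn w (Ioo r 1) :=
  hw.2.1.mono_set (fun _ hs => ⟨hr.trans hs.1.le, hs.2⟩)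

lemma sw_int {w : ℝ → ℝ} (hw : IsRadialWeight w) {r : ℝ} (hr : 0 ≤ r) :
    IntegrableOn (fun s => s * w s) (Ioo r 1) := by
  refine Integrable.mono' (g := fun s => w s) (w_int hw hr) ?_ ?_
  · exact aestronglyMeasurable_id.mul (w_int hw hr).aestronglyMeasurable
  · filter_upwards [ae_restrict_mem measurableSet_Ioo] with s hs
    have h0 := hw.1 s ⟨hr.trans hs.1.le, hs.2⟩
    rw [Real.norm_eq_abs, abs_of_nonneg (mul_nonneg (hr.trans hs.1.le) h0)]
    exact mul_le_of_le_one_left h0 hs.2.le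

lemma dens_aem {w : ℝ → ℝ} (hw : IsRadialWeight w) :
    AEMeasurable (fun r => ENNReal.ofReal (r * w r)) (volume.restrict (Ioo (0:ℝ) 1)) :=
  (aemeasurable_id.mul (w_aem hw)).ennreal_ofReal

lemma muw_Ioi {w : ℝ → ℝ} (hw : IsRadialWeight w) {r : ℝ} (hr : 0 ≤ r) :
    muw w (Ioi r) = ENNReal.ofReal (hat1 w r) := by
  unfold muw hat1
  rw [withDensity_apply _ measurableSet_Ioi, Measure.restrict_restrict measurableSet_Ioi]
  have : Ioi r ∩ Ioo (0:ℝ) 1 = Ioo r 1 := by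
    ext s; constructor
    · rintro ⟨h1, h2⟩; exact ⟨h1, h2.2⟩
    · rintro ⟨h1, h2⟩; exact ⟨h1, ⟨lt_of_le_of_lt hr h1, h2⟩⟩
  rw [this, ofReal_integral_eq_lintegral_ofReal (sw_int hw hr)]
  filter_upwards [ae_restrict_mem measurableSet_Ioo] with s hs
  exact mul_nonneg (hr.trans hs.1.le) (hw.1 s ⟨hr.trans hs.1.le, hs.2⟩)

lemma hat1_nonneg {w : ℝ → ℝ} (hw : IsRadialWeight w) {r : ℝ} (hr : 0 ≤ r) : 0 ≤ hat1 w r := by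
  refine setIntegral_nonneg measurableSet_Ioo fun s hs => ?_
  exact mul_nonneg (hr.trans hs.1.le) (hw.1 s ⟨hr.trans hs.1.le, hs.2⟩)

lemma FF_muw {w : ℝ → ℝ} (hw : IsRadialWeight w) {r : ℝ} (hr : 0 ≤ r) :
    FF (muw w) r = hat1 w r := by
  rw [FF, Measure.real, muw_Ioi hw hr, ENNReal.toReal_ofReal (hat1_nonneg hw hr)]

lemma hat1_le {w : ℝ → ℝ} (hw : IsRadialWeight w) {r : ℝ} (hr : 0 ≤ r) : hat1 w r ≤ hatw w r := by
  refine setIntegral_mono_on (sw_int hw hr) (w_int hw hr) measurableSet_Ioo fun s hs => ?_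
  exact mul_le_of_le_one_left (hw.1 s ⟨hr.trans hs.1.le, hs.2⟩) hs.2.le

lemma hat1_ge {w : ℝ → ℝ} (hw : IsRadialWeight w) {r : ℝ} (hr : 0 ≤ r) :
    r * hatw w r ≤ hat1 w r := by
  unfold hatw hat1
  rw [← integral_const_mul]
  refine setIntegral_mono_on ((w_int hw hr).const_mul _) (sw_int hw hr) measurableSet_Ioo fun s hs => ?_
  exact mul_le_mul_of_nonneg_right hs.1.le (hw.1 s ⟨hr.trans hs.1.le, hs.2⟩)

lemma hatw_anti {w : ℝ → ℝ} (hw : IsRadialWeight w) {r s : ℝ} (hr : 0 ≤ r) (hrs : r ≤ s) :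
    hatw w s ≤ hatw w r := by
  refine setIntegral_mono_set (w_int hw hr) ?_ (Ioo_subset_Ioo_left hrs).eventuallyLE
  filter_upwards [ae_restrict_mem measurableSet_Ioo] with t ht
  exact hw.1 t ⟨hr.trans ht.1.le, ht.2⟩

lemma good_muw {w : ℝ → ℝ} (hw : IsRadialWeight w) : Good (muw w) := by
  have hsupp : ∀ᵐ s ∂(muw w), s ∈ Ioo (0:ℝ) 1 := by
    refine (withDensity_absolutelyContinuous _ _).ae_le ?_
    exact ae_restrict_mem measurableSet_Ioo
  have hfin : IsFiniteMeasure (muw w) := by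
    refine ⟨?_⟩
    have : muw w univ = muw w (Ioi 0) := by
      refine measure_congr ?_
      filter_upwards [hsupp] with s hs
      exact propext ⟨fun _ => hs.1, fun _ => trivial⟩
    rw [this, muw_Ioi hw le_rfl]
    exact ENNReal.ofReal_lt_top
  refine ⟨hfin, hsupp, ?_, ?_⟩
  · intro x
    refine (withDensity_absolutelyContinuous _ _) ?_
    simp
  · have key : ∀ r, 0 < r → r < 1 → 0 < FF (muw w) r := by
      intro r h0 h1
      rw [FF_muw hw h0.le]
      exact lt_of_lt_of_le (mul_pos h0 (hw.2.2 r ⟨h0.le, h1⟩)) (hat1_ge hw h0.le)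
    intro r hr
    rcases lt_or_ge 0 r with h0 | h0
    · exact key r h0 hr
    · refine lt_of_lt_of_le (key (1/2) (by norm_num) (by norm_num)) ?_
      exact measureReal_mono (Ioi_subset_Ioi (by linarith))

lemma mom_muw {w : ℝ → ℝ} (hw : IsRadialWeight w) (n : ℕ) : mom (muw w) n = moment w n := by
  unfold mom moment muw
  rw [integral_withDensity_eq_integral_toReal_smul₀ (dens_aem hw) (by simp)]
  refine setIntegral_congr_fun measurableSet_Ioo fun s hs => ?_
  simp only [smul_eq_mul]
  rw [ENNReal.toReal_ofReal (mul_nonneg hs.1.le (hw.1 s ⟨hs.1.le, hs.2⟩))]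
  ring

lemma Bker_eq {w : ℝ → ℝ} (hw : IsRadialWeight w) (z ζ : ℂ) :
    Bker w z ζ = bk (muw w) ((starRingEnd ℂ) z * ζ) := by
  unfold Bker bk
  refine tsum_congr fun n => ?_
  rw [ac, mom_muw hw, div_eq_inv_mul, Complex.ofReal_inv]

/-- `hatw` and `FF` are comparable. -/
lemma hatw_comp {w : ℝ → ℝ} (hw : IsRadialWeight w) (hwD : Dhat w) :
    ∃ C > 0, (∀ r ∈ Ico (0:ℝ) 1, hatw w r ≤ C * FF (muw w) ((1 + r) / 2)) ∧
      (∀ r ∈ Ico (0:ℝ) 1, hatw w r ≤ C * FF (muw w) r) ∧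
      (∀ r < 1, FF (muw w) r ≤ C * FF (muw w) ((1 + r) / 2)) := by
  obtain ⟨C, hC⟩ := hwD
  have hg := good_muw hw
  have h1 : ∀ r ∈ Ico (0:ℝ) 1, hatw w r ≤ (2 * max C 1) * FF (muw w) ((1 + r) / 2) := by
    intro r hr
    have hm : (1 + r) / 2 ∈ Ico (0:ℝ) 1 := ⟨by linarith [hr.1], by linarith [hr.2]⟩
    have a1 := hC r hr
    have a2 := hat1_ge hw hm.1
    have a3 := hw.2.2 _ hm
    have a4 : C * hatw w ((1 + r) / 2) ≤ max C 1 * hatw w ((1 + r) / 2) :=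
      mul_le_mul_of_nonneg_right (le_max_left _ _) a3.le
    rw [FF_muw hw hm.1]
    have a5 : hatw w ((1 + r) / 2) ≤ 2 * hat1 w ((1 + r) / 2) := by nlinarith [hr.1]
    have a6 : (0:ℝ) < max C 1 := lt_of_lt_of_le one_pos (le_max_right _ _)
    nlinarith [mul_le_mul_of_nonneg_left a5 a6.le]
  have hpos : (0:ℝ) < 2 * max C 1 := by have := le_max_right C 1; linarith
  refine ⟨2 * max C 1, hpos, h1, ?_, ?_⟩
  · intro r hr
    exact (h1 r hr).trans (mul_le_mul_of_nonneg_left (FF_anti hg (by linarith [hr.2])) hpos.le)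
  · have key : ∀ r ∈ Ico (0:ℝ) 1, FF (muw w) r ≤ (2 * max C 1) * FF (muw w) ((1 + r) / 2) := by
      intro r hr
      refine le_trans ?_ (h1 r hr)
      rw [FF_muw hw hr.1]; exact hat1_le hw hr.1
    intro r hr
    rcases lt_or_ge r 0 with h0 | h0
    · rw [FF_neg hg h0.le]
      refine (key 0 ⟨le_rfl, one_pos⟩).trans (mul_le_mul_of_nonneg_left (FF_anti hg (by linarith)) hpos.le)
    · exact key r ⟨h0, hr⟩

/-- The measure `ω dA` on the disc (without the factor `1/π`). -/
def lamw (w : ℝ → ℝ) : Measure ℂ :=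
  (volume.restrict (ball (0:ℂ) 1)).withDensity (fun z => ENNReal.ofReal (w ‖z‖))

lemma polar_ball {H : ℂ → ℝ≥0∞} (hH : Measurable H) :
    ∫⁻ z in ball (0:ℂ) 1, H z =
      ∫⁻ r in Ioo (0:ℝ) 1, ENNReal.ofReal r * ∫⁻ θ in Ioo (-Real.pi) Real.pi, H (r * ee θ) := by
  rw [← lintegral_indicator measurableSet_ball, ← Complex.lintegral_comp_polarCoord_symm, polarCoord_target]
  have hs : ∀ p : ℝ × ℝ, Complex.polarCoord.symm p = p.1 * ee p.2 := by
    intro p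
    rw [Complex.polarCoord_symm_apply, ee, Complex.exp_mul_I]
    push_cast; rfl
  simp only [hs, smul_eq_mul]
  have hmeas : Measurable (fun p : ℝ × ℝ => ENNReal.ofReal p.1 * (ball (0:ℂ) 1).indicator H (p.1 * ee p.2)) := by
    refine Measurable.mul (by fun_prop) ?_
    refine (hH.indicator measurableSet_ball).comp ?_
    have : Continuous (fun p : ℝ × ℝ => (p.1:ℂ) * ee p.2) := by fun_prop
    exact this.measurable
  rw [Measure.volume_eq_prod, ← Measure.prod_restrict, lintegral_prod _ hmeas.aemeasurable]
  have h1 : Ioo (0:ℝ) 1 = Iio 1 ∩ Ioi 0 := by ext; simp [and_comm]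
  rw [h1, ← Measure.restrict_restrict measurableSet_Iio, ← lintegral_indicator measurableSet_Iio]
  refine setLIntegral_congr_fun measurableSet_Ioi ?_
  intro r hr
  have hr : (0:ℝ) < r := hr
  simp only
  rw [lintegral_const_mul' _ _ ENNReal.ofReal_ne_top]
  by_cases h1 : r < 1
  · rw [indicator_of_mem (by exact h1)]
    congr 1
    refine lintegral_congr fun θ => ?_
    rw [indicator_of_mem (mul_ee_mem hr.le h1 θ)]
  · rw [indicator_of_notMem (by exact h1)]
    have : ∀ θ, (ball (0:ℂ) 1).indicator H (r * ee θ) = 0 := by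
      intro θ
      refine indicator_of_notMem ?_ _
      rw [mem_ball_zero_iff, norm_mul, norm_ee, mul_one, Complex.norm_real, Real.norm_eq_abs, abs_of_pos hr]
      exact h1
    simp [this]

lemma norm_mul_ee {r : ℝ} (hr : 0 ≤ r) (θ : ℝ) : ‖(r:ℂ) * ee θ‖ = r := by
  rw [norm_mul, norm_ee, mul_one, Complex.norm_real, Real.norm_eq_abs, abs_of_nonneg hr]

lemma ae_ball_of_ae {P : ℝ → Prop} (hP : ∀ᵐ r ∂(volume.restrict (Ioo (0:ℝ) 1)), P r) :
    ∀ᵐ z ∂(volume.restrict (ball (0:ℂ) 1)), P ‖z‖ := by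
  set N := toMeasurable (volume.restrict (Ioo (0:ℝ) 1)) {r | ¬ P r} with hN
  have hN0 : (volume.restrict (Ioo (0:ℝ) 1)) N = 0 := by rw [hN, measure_toMeasurable]; exact hP
  have hNm : MeasurableSet N := measurableSet_toMeasurable _ _
  have hmeas : Measurable (fun z : ℂ => N.indicator (fun _ => (1:ℝ≥0∞)) ‖z‖) :=
    (measurable_const.indicator hNm).comp measurable_norm
  have h0 : ∫⁻ z in ball (0:ℂ) 1, N.indicator (fun _ => (1:ℝ≥0∞)) ‖z‖ = 0 := by
    rw [polar_ball hmeas]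
    have hae : ∀ᵐ r ∂(volume.restrict (Ioo (0:ℝ) 1)), r ∉ N := measure_eq_zero_iff_ae_notMem.1 hN0
    rw [lintegral_congr_ae (g := fun _ => 0)]
    · simp
    · filter_upwards [hae, ae_restrict_mem measurableSet_Ioo] with r hr hr2
      simp only [norm_mul_ee hr2.1.le, indicator_of_notMem hr, lintegral_zero, mul_zero]
  rw [lintegral_eq_zero_iff hmeas] at h0
  filter_upwards [h0] with z hz
  by_contra hcon
  have : ‖z‖ ∈ N := subset_toMeasurable _ _ hcon
  simp [this] at hz

lemma wn_aem {w : ℝ → ℝ} (hw : IsRadialWeight w) :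
    AEMeasurable (fun z : ℂ => w ‖z‖) (volume.restrict (ball (0:ℂ) 1)) :=
  ⟨fun z => (w_aem hw).mk w ‖z‖, (w_aem hw).measurable_mk.comp measurable_norm,
    ae_ball_of_ae (w_aem hw).ae_eq_mk⟩

lemma polar_lam {w : ℝ → ℝ} (hw : IsRadialWeight w) {G : ℂ → ℝ≥0∞} (hG : Measurable G) :
    ∫⁻ z, G z ∂(lamw w) =
      ∫⁻ r, (∫⁻ θ in Ioo (-Real.pi) Real.pi, G (r * ee θ)) ∂(muw w) := by
  unfold lamw muw
  rw [lintegral_withDensity_eq_lintegral_mul_non_measurable₀ _ (wn_aem hw).ennreal_ofReal (by simp),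
    lintegral_withDensity_eq_lintegral_mul_non_measurable₀ _ (dens_aem hw) (by simp)]
  set w' := (w_aem hw).mk w with hw'
  have hm : Measurable w' := (w_aem hw).measurable_mk
  have hae := (w_aem hw).ae_eq_mk
  have hae2 := ae_ball_of_ae hae
  have e1 : ∫⁻ z in ball (0:ℂ) 1, ((fun z : ℂ => ENNReal.ofReal (w ‖z‖)) * fun z => G z) z =
      ∫⁻ z in ball (0:ℂ) 1, ENNReal.ofReal (w' ‖z‖) * G z := by
    refine lintegral_congr_ae ?_
    filter_upwards [hae2] with z hz
    simp only [Pi.mul_apply]; rw [hz]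
  rw [e1, polar_ball (H := fun z => ENNReal.ofReal (w' ‖z‖) * G z)
    ((hm.comp measurable_norm).ennreal_ofReal.mul hG)]
  refine lintegral_congr_ae ?_
  filter_upwards [hae, ae_restrict_mem measurableSet_Ioo] with r hr hr2
  simp only [Pi.mul_apply, norm_mul_ee hr2.1.le]
  rw [lintegral_const_mul' _ _ ENNReal.ofReal_ne_top, ← mul_assoc, ← ENNReal.ofReal_mul hr2.1.le, hr]

/-- The modulus of the kernel, cut off to the disc. -/
def kk (μ : Measure ℝ) (ξ : ℂ) : ℝ≥0∞ :=
  (ball (0:ℂ) 1).indicator (fun ξ => ENNReal.ofReal ‖bk μ ξ‖) ξ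

lemma kk_meas {μ : Measure ℝ} (h : Good μ) : Measurable (kk μ) := by
  classical
  have h1 : ContinuousOn (fun ξ => ENNReal.ofReal ‖bk μ ξ‖) (ball 0 1) :=
    ENNReal.continuous_ofReal.comp_continuousOn (continuousOn_bk h).norm
  have := h1.measurable_piecewise (g := 0) continuousOn_const measurableSet_ball
  rwa [piecewise_eq_indicator] at this

lemma kk_of_mem {μ : Measure ℝ} {ξ : ℂ} (h : ‖ξ‖ < 1) : kk μ ξ = ENNReal.ofReal ‖bk μ ξ‖ := by
  rw [kk, indicator_of_mem]
  simpa using h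

lemma bk_conj {μ : Measure ℝ} (ξ : ℂ) : bk μ ((starRingEnd ℂ) ξ) = (starRingEnd ℂ) (bk μ ξ) := by
  unfold bk
  rw [Complex.conj_tsum]
  refine tsum_congr fun n => ?_
  simp

lemma kk_conj {μ : Measure ℝ} (ξ : ℂ) : kk μ ((starRingEnd ℂ) ξ) = kk μ ξ := by
  unfold kk
  by_cases h : ‖ξ‖ < 1
  · rw [indicator_of_mem (by simpa using h), indicator_of_mem (by simpa using h), bk_conj, RCLike.norm_conj]
  · rw [indicator_of_notMem (by simpa using h), indicator_of_notMem (by simpa using h)]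

lemma kk_circle {μ : Measure ℝ} (h : Good μ) {z : ℂ} (hz : ‖z‖ < 1) {s : ℝ} (hs0 : 0 ≤ s) (hs : s < 1) :
    ∫⁻ θ in Ioo (-Real.pi) Real.pi, kk μ ((starRingEnd ℂ) z * (s * ee θ)) =
      ENNReal.ofReal (IM μ (‖z‖ * s)) := by
  have hx0 : 0 ≤ ‖z‖ * s := by positivity
  have hx : ‖z‖ * s < 1 := by nlinarith [norm_nonneg z]
  have hz' : ∀ θ, (starRingEnd ℂ) z * (s * ee θ) = ((‖z‖ * s : ℝ) : ℂ) * ee (θ - z.arg) := by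
    intro θ
    conv_lhs => rw [← Complex.norm_mul_exp_arg_mul_I z]
    rw [map_mul, Complex.conj_ofReal, ← ee, conj_ee]
    have : ee (θ - z.arg) = ee θ * (ee z.arg)⁻¹ := by
      unfold ee
      rw [← Complex.exp_neg, ← Complex.exp_add]; congr 1; push_cast; ring
    rw [this]; push_cast; ring
  have hcont := continuous_bk_circle h hx0 hx
  have e1 : ∀ θ, kk μ ((starRingEnd ℂ) z * (s * ee θ)) =
      ENNReal.ofReal ‖bk μ (((‖z‖ * s : ℝ) : ℂ) * ee (θ - z.arg))‖ := by
    intro θ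
    rw [hz', kk_of_mem]
    rw [norm_mul_ee hx0]; exact hx
  simp only [e1]
  have hc2 : Continuous fun θ => ‖bk μ (((‖z‖ * s : ℝ) : ℂ) * ee (θ - z.arg))‖ :=
    (hcont.comp (continuous_id.sub continuous_const)).norm
  rw [Measure.restrict_congr_set Ioo_ae_eq_Ioc, ← ofReal_integral_eq_lintegral_ofReal]
  · rw [← intervalIntegral.integral_of_le (by linarith [Real.pi_pos]),
      intervalIntegral.integral_comp_sub_right (fun θ => ‖bk μ (((‖z‖ * s : ℝ) : ℂ) * ee θ)‖),
      ← IM_shift _ (-Real.pi - z.arg)]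
    congr 2; ring
  · exact (hc2.intervalIntegrable (-Real.pi) Real.pi).1
  · exact Filter.Eventually.of_forall fun _ => norm_nonneg _

lemma kernel_radial {w : ℝ → ℝ} (hw : IsRadialWeight w) {z : ℂ} (hz : ‖z‖ < 1) {φ : ℝ → ℝ≥0∞}
    (hφ : Measurable φ) :
    ∫⁻ ζ, kk (muw w) ((starRingEnd ℂ) z * ζ) * φ ‖ζ‖ ∂(lamw w) =
      ∫⁻ s, ENNReal.ofReal (IM (muw w) (‖z‖ * s)) * φ s ∂(muw w) := by
  have hg := good_muw hw
  rw [polar_lam hw (G := fun ζ => kk (muw w) ((starRingEnd ℂ) z * ζ) * φ ‖ζ‖)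
    (((kk_meas hg).comp (measurable_const_mul _)).mul (hφ.comp measurable_norm))]
  refine lintegral_congr_ae ?_
  filter_upwards [hg.supp] with s hs
  simp only [Pi.mul_apply, Function.comp_apply, norm_mul_ee hs.1.le]
  rw [lintegral_mul_const, kk_circle hg hz hs.1.le hs.2]
  refine (kk_meas hg).comp ?_
  have : Continuous fun θ => (starRingEnd ℂ) z * (s * ee θ) := by fun_prop
  exact this.measurable

lemma schur {X : Type*} [MeasurableSpace X] (l : Measure X) [SFinite l] {p α γ : ℝ} (hp : 1 < p)
    {k : X → X → ℝ≥0∞} (hk : Measurable (Function.uncurry k)) {U : X → ℝ≥0∞} (hU : Measurable U)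
    (hU0 : ∀ᵐ x ∂l, U x ≠ 0) (hUt : ∀ᵐ x ∂l, U x ≠ ⊤) {C1 C2 : ℝ≥0∞}
    (H1 : ∀ᵐ z ∂l, ∫⁻ ζ, k z ζ * U ζ ^ (-(γ * (p / (p - 1)))) ∂l ≤ C1 * U z ^ (-(γ * (p / (p - 1)))))
    (H2 : ∀ᵐ ζ ∂l, ∫⁻ z, k z ζ * U z ^ (α - γ * p) ∂l ≤ C2 * U ζ ^ (α - γ * p))
    {g : X → ℝ≥0∞} (hg : Measurable g) :
    ∫⁻ z, (∫⁻ ζ, k z ζ * g ζ ∂l) ^ p * U z ^ α ∂l ≤ C1 ^ (p - 1) * C2 * ∫⁻ z, g z ^ p * U z ^ α ∂l := by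
  have hp0 : 0 < p := by linarith
  have hp1 : 0 < p - 1 := by linarith
  have hpq : p.HolderConjugate (p / (p - 1)) := Real.HolderConjugate.conjExponent hp
  set q := p / (p - 1) with hq
  have hq0 : 0 < q := hpq.symm.pos
  have hpt : ∀ᵐ z ∂l, (∫⁻ ζ, k z ζ * g ζ ∂l) ^ p * U z ^ α ≤
      C1 ^ (p - 1) * ∫⁻ ζ, (k z ζ * U z ^ (α - γ * p)) * (g ζ ^ p * U ζ ^ (γ * p)) ∂l := by
    filter_upwards [H1, hU0, hUt] with z hz hz0 hzt
    have hkz : Measurable (k z) := hk.of_uncurry_left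
    have hold := ENNReal.lintegral_mul_le_Lp_mul_Lq l hpq
      (f := fun ζ => k z ζ ^ (1 / p) * (g ζ * U ζ ^ γ)) (g := fun ζ => k z ζ ^ (1 / q) * U ζ ^ (-γ))
      (by fun_prop) (by fun_prop)
    have e1 : ∫⁻ ζ, k z ζ * g ζ ∂l = ∫⁻ ζ, ((fun ζ => k z ζ ^ (1 / p) * (g ζ * U ζ ^ γ)) *
        (fun ζ => k z ζ ^ (1 / q) * U ζ ^ (-γ))) ζ ∂l := by
      refine lintegral_congr_ae ?_
      filter_upwards [hU0, hUt] with ζ h0 ht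
      simp only [Pi.mul_apply]
      have a1 : k z ζ ^ (1 / p) * k z ζ ^ (1 / q) = k z ζ := by
        rw [← ENNReal.rpow_add_of_nonneg _ _ (by positivity) (by positivity), one_div, one_div,
          hpq.inv_add_inv_eq_one, ENNReal.rpow_one]
      have a2 : U ζ ^ γ * U ζ ^ (-γ) = 1 := by
        rw [← ENNReal.rpow_add _ _ h0 ht, add_neg_cancel, ENNReal.rpow_zero]
      calc k z ζ * g ζ = (k z ζ ^ (1 / p) * k z ζ ^ (1 / q)) * g ζ * (U ζ ^ γ * U ζ ^ (-γ)) := by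
            rw [a1, a2, mul_one]
        _ = _ := by ring
    rw [← e1] at hold
    have e2 : ∀ ζ, (k z ζ ^ (1 / p) * (g ζ * U ζ ^ γ)) ^ p = k z ζ * (g ζ ^ p * U ζ ^ (γ * p)) := by
      intro ζ
      rw [ENNReal.mul_rpow_of_nonneg _ _ hp0.le, ENNReal.mul_rpow_of_nonneg _ _ hp0.le,
        ← ENNReal.rpow_mul, ← ENNReal.rpow_mul, one_div_mul_cancel hp0.ne', ENNReal.rpow_one]
    have e3 : ∀ ζ, (k z ζ ^ (1 / q) * U ζ ^ (-γ)) ^ q = k z ζ * U ζ ^ (-(γ * q)) := by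
      intro ζ
      rw [ENNReal.mul_rpow_of_nonneg _ _ hq0.le,
        ← ENNReal.rpow_mul, ← ENNReal.rpow_mul, one_div_mul_cancel hq0.ne', ENNReal.rpow_one, neg_mul]
    simp only [e2, e3] at hold
    have h3 := ENNReal.rpow_le_rpow hold hp0.le
    rw [ENNReal.mul_rpow_of_nonneg _ _ hp0.le, ← ENNReal.rpow_mul, ← ENNReal.rpow_mul,
      one_div_mul_cancel hp0.ne', ENNReal.rpow_one] at h3
    have hqp : 1 / q * p = p - 1 := by rw [hq]; field_simp
    rw [hqp] at h3
    have h4 := ENNReal.rpow_le_rpow hz hp1.le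
    rw [ENNReal.mul_rpow_of_nonneg _ _ hp1.le, ← ENNReal.rpow_mul] at h4
    have hx : -(γ * q) * (p - 1) = -(γ * p) := by rw [hq]; field_simp
    rw [hx] at h4
    calc (∫⁻ ζ, k z ζ * g ζ ∂l) ^ p * U z ^ α
        ≤ ((∫⁻ ζ, k z ζ * (g ζ ^ p * U ζ ^ (γ * p)) ∂l) * (C1 ^ (p - 1) * U z ^ (-(γ * p)))) * U z ^ α :=
          mul_le_mul_left (h3.trans (mul_le_mul_right h4 _)) _
      _ = C1 ^ (p - 1) * ((U z ^ α * U z ^ (-(γ * p))) * ∫⁻ ζ, k z ζ * (g ζ ^ p * U ζ ^ (γ * p)) ∂l) := by ring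
      _ = _ := by
          rw [← ENNReal.rpow_add _ _ hz0 hzt, ← sub_eq_add_neg, ← lintegral_const_mul _ (by fun_prop)]
          congr 1
          refine lintegral_congr fun ζ => ?_
          ring
  refine (lintegral_mono_ae hpt).trans ?_
  have hm : Measurable (Function.uncurry fun z ζ => (k z ζ * U z ^ (α - γ * p)) * (g ζ ^ p * U ζ ^ (γ * p))) := by
    refine Measurable.mul (Measurable.mul hk ?_) ?_ <;> fun_prop
  have hm2 : Measurable fun z => ∫⁻ ζ, (k z ζ * U z ^ (α - γ * p)) * (g ζ ^ p * U ζ ^ (γ * p)) ∂l :=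
    hm.lintegral_prod_right'
  rw [lintegral_const_mul (C1 ^ (p - 1)) hm2, lintegral_lintegral_swap hm.aemeasurable, mul_assoc]
  refine mul_le_mul_right ?_ _
  rw [← lintegral_const_mul _ (by fun_prop)]
  refine lintegral_mono_ae ?_
  filter_upwards [H2, hU0, hUt] with ζ hζ h0 ht
  have hkz : Measurable (fun z => k z ζ) := hk.of_uncurry_right
  rw [lintegral_mul_const _ (by fun_prop)]
  refine (mul_le_mul_left hζ _).trans ?_
  have : U ζ ^ (α - γ * p) * U ζ ^ (γ * p) = U ζ ^ α := by
    rw [← ENNReal.rpow_add _ _ h0 ht]; congr 1; ring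
  rw [← this]
  apply le_of_eq
  ring

/-- `ω̂₁(|z|)` as an extended nonnegative real. -/
def UU (w : ℝ → ℝ) (z : ℂ) : ℝ≥0∞ := ENNReal.ofReal (FF (muw w) ‖z‖)

/-- The maximal operator with the measure `ω dA` (no normalisation). -/
def TT (w : ℝ → ℝ) (f : ℂ → ℂ) (z : ℂ) : ℝ≥0∞ :=
  ∫⁻ ζ, kk (muw w) ((starRingEnd ℂ) z * ζ) * ENNReal.ofReal ‖f ζ‖ ∂(lamw w)

lemma lam_supp (w : ℝ → ℝ) : ∀ᵐ z ∂(lamw w), ‖z‖ < 1 := by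
  refine (withDensity_absolutelyContinuous _ _).ae_le ?_
  filter_upwards [ae_restrict_mem measurableSet_ball] with z hz
  simpa using hz

lemma UU_meas {w : ℝ → ℝ} (hw : IsRadialWeight w) : Measurable (UU w) :=
  ((FF_measurable (good_muw hw)).comp measurable_norm).ennreal_ofReal

lemma UU_pos {w : ℝ → ℝ} (hw : IsRadialWeight w) {z : ℂ} (hz : ‖z‖ < 1) : UU w z ≠ 0 := by
  rw [UU]
  exact (ENNReal.ofReal_pos.2 ((good_muw hw).pos _ hz)).ne'

lemma UU_rpow {w : ℝ → ℝ} (hw : IsRadialWeight w) {z : ℂ} (hz : ‖z‖ < 1) (a : ℝ) :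
    UU w z ^ a = ENNReal.ofReal (FF (muw w) ‖z‖ ^ a) := by
  rw [UU, ENNReal.ofReal_rpow_of_pos ((good_muw hw).pos _ hz)]

lemma norm_conv {w : ℝ → ℝ} (hw : IsRadialWeight w) {p : ℝ} (hp : 0 < p) (α : ℝ) {g : ℂ → ℝ} (hg : ∀ z, 0 ≤ g z) :
    ∫⁻ z in ball (0:ℂ) 1, ENNReal.ofReal (g z ^ p * (w ‖z‖ * hat1 w ‖z‖ ^ α)) =
      ∫⁻ z, ENNReal.ofReal (g z) ^ p * UU w z ^ α ∂(lamw w) := by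
  unfold lamw
  rw [lintegral_withDensity_eq_lintegral_mul_non_measurable₀ _ (wn_aem hw).ennreal_ofReal (by simp)]
  refine setLIntegral_congr_fun measurableSet_ball fun z hz => ?_
  have hz : ‖z‖ < 1 := by simpa using hz
  simp only [Pi.mul_apply]
  have h0 := hw.1 ‖z‖ ⟨norm_nonneg _, hz⟩
  rw [UU_rpow hw hz, ENNReal.ofReal_rpow_of_nonneg (hg z) hp.le, FF_muw hw (norm_nonneg _),
    ← ENNReal.ofReal_mul (Real.rpow_nonneg (hg z) _), ← ENNReal.ofReal_mul h0]
  congr 1; ring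

lemma TT_eq {w : ℝ → ℝ} (hw : IsRadialWeight w) (f : ℂ → ℂ) {z : ℂ} (hz : ‖z‖ < 1) :
    (∫⁻ ζ in ball (0:ℂ) 1, ENNReal.ofReal (‖f ζ‖ * ‖Bker w z ζ‖ * w ‖ζ‖)) = TT w f z := by
  unfold TT lamw
  rw [lintegral_withDensity_eq_lintegral_mul_non_measurable₀ _ (wn_aem hw).ennreal_ofReal (by simp)]
  refine setLIntegral_congr_fun measurableSet_ball fun ζ hζ => ?_
  have hζ : ‖ζ‖ < 1 := by simpa using hζ
  simp only [Pi.mul_apply]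
  have hm : ‖(starRingEnd ℂ) z * ζ‖ < 1 := by
    rw [norm_mul, RCLike.norm_conj]; nlinarith [norm_nonneg z, norm_nonneg ζ]
  have h0 := hw.1 ‖ζ‖ ⟨norm_nonneg _, hζ⟩
  rw [kk_of_mem hm, Bker_eq hw, ← ENNReal.ofReal_mul (norm_nonneg _), ← ENNReal.ofReal_mul h0]
  congr 1; ring

lemma Pplus_nonneg {w : ℝ → ℝ} (hw : IsRadialWeight w) (f : ℂ → ℂ) (z : ℂ) : 0 ≤ Pplus w f z := by
  refine div_nonneg ?_ Real.pi_pos.le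
  refine setIntegral_nonneg measurableSet_ball fun ζ hζ => ?_
  have h0 := hw.1 ‖ζ‖ ⟨norm_nonneg _, by simpa using hζ⟩
  positivity

lemma Pplus_eq {w : ℝ → ℝ} (hw : IsRadialWeight w) {f : ℂ → ℂ} (hf : Measurable f) {z : ℂ} (hz : ‖z‖ < 1)
    (hfin : TT w f z < ⊤) :
    ENNReal.ofReal |Pplus w f z| = TT w f z / ENNReal.ofReal Real.pi := by
  rw [abs_of_nonneg (Pplus_nonneg hw f z), Pplus, ENNReal.ofReal_div_of_pos Real.pi_pos]
  congr 1
  rw [integral_eq_lintegral_of_nonneg_ae, TT_eq hw f hz, ENNReal.ofReal_toReal hfin.ne]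
  · filter_upwards [ae_restrict_mem measurableSet_ball] with ζ hζ
    have h0 := hw.1 ‖ζ‖ ⟨norm_nonneg _, by simpa using hζ⟩
    simp only [Pi.zero_apply]
    positivity
  · refine AEStronglyMeasurable.mul (AEStronglyMeasurable.mul hf.norm.aestronglyMeasurable ?_)
      (wn_aem hw).aestronglyMeasurable
    have : ContinuousOn (fun ζ => ‖Bker w z ζ‖) (ball (0:ℂ) 1) := by
      simp only [Bker_eq hw]
      refine ((continuousOn_bk (good_muw hw)).comp (by fun_prop) ?_).norm
      intro ζ hζ
      have hζ : ‖ζ‖ < 1 := by simpa using hζ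
      rw [mem_ball_zero_iff, norm_mul, RCLike.norm_conj]
      nlinarith [norm_nonneg z, norm_nonneg ζ]
    exact this.aestronglyMeasurable measurableSet_ball

lemma ker_bound {w : ℝ → ℝ} (hw : IsRadialWeight w) {C : ℝ} (hC : 0 < C)
    (hIM : ∀ x : ℝ, 0 ≤ x → x < 1 → IM (muw w) x ≤ C * (FF (muw w) x)⁻¹)
    {β : ℝ} (hb0 : 0 < β) (hb1 : β < 1) {z : ℂ} (hz : ‖z‖ < 1) :
    ∫⁻ ζ, kk (muw w) ((starRingEnd ℂ) z * ζ) * UU w ζ ^ (-β) ∂(lamw w) ≤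
      ENNReal.ofReal (C * (1 / (1 - β) + 1 / β)) * UU w z ^ (-β) := by
  have hg := good_muw hw
  have hx := hg.pos _ hz
  have h1b : 0 < 1 - β := by linarith
  have e := kernel_radial hw hz (φ := fun s => ENNReal.ofReal (FF (muw w) s) ^ (-β))
    ((FF_measurable hg).ennreal_ofReal.pow_const _)
  have e' : ∫⁻ ζ, kk (muw w) ((starRingEnd ℂ) z * ζ) * UU w ζ ^ (-β) ∂(lamw w) =
    ∫⁻ s, ENNReal.ofReal (IM (muw w) (‖z‖ * s)) * ENNReal.ofReal (FF (muw w) s) ^ (-β) ∂(muw w) := e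
  rw [e']
  calc _ ≤ ∫⁻ s, ENNReal.ofReal C *
        ENNReal.ofReal (FF (muw w) s ^ (-β) * (max (FF (muw w) ‖z‖) (FF (muw w) s))⁻¹) ∂(muw w) := by
        refine lintegral_mono_ae ?_
        filter_upwards [hg.supp] with s hs
        have hs1 := hg.pos _ hs.2
        have hzs0 : 0 ≤ ‖z‖ * s := mul_nonneg (norm_nonneg _) hs.1.le
        have hzs : ‖z‖ * s < 1 := by nlinarith [norm_nonneg z, hs.1, hs.2]
        have hm : max (FF (muw w) ‖z‖) (FF (muw w) s) ≤ FF (muw w) (‖z‖ * s) := by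
          refine max_le (FF_anti hg ?_) (FF_anti hg ?_)
          · exact mul_le_of_le_one_right (norm_nonneg _) hs.2.le
          · exact mul_le_of_le_one_left hs.1.le hz.le
        have hm0 : 0 < max (FF (muw w) ‖z‖) (FF (muw w) s) := lt_of_lt_of_le hx (le_max_left _ _)
        rw [ENNReal.ofReal_rpow_of_pos hs1, ← ENNReal.ofReal_mul (IM_nonneg _), ← ENNReal.ofReal_mul hC.le]
        refine ENNReal.ofReal_le_ofReal ?_
        have h2 : IM (muw w) (‖z‖ * s) ≤ C * (max (FF (muw w) ‖z‖) (FF (muw w) s))⁻¹ :=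
          (hIM _ hzs0 hzs).trans (mul_le_mul_of_nonneg_left (inv_anti₀ hm0 hm) hC.le)
        calc _ ≤ (C * (max (FF (muw w) ‖z‖) (FF (muw w) s))⁻¹) * FF (muw w) s ^ (-β) :=
              mul_le_mul_of_nonneg_right h2 (Real.rpow_nonneg hs1.le _)
          _ = _ := by ring
    _ ≤ ENNReal.ofReal C * ENNReal.ofReal (FF (muw w) ‖z‖ ^ (-β) * (1 / (1 - β) + 1 / β)) := by
        rw [lintegral_const_mul' _ _ ENNReal.ofReal_ne_top]
        exact mul_le_mul_right (hardy_max hg hb0 hb1 hx) _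
    _ = _ := by
        rw [UU_rpow hw hz, ← ENNReal.ofReal_mul hC.le, ← ENNReal.ofReal_mul (by positivity)]
        congr 1; ring

lemma radial_lam {w : ℝ → ℝ} (hw : IsRadialWeight w) {φ : ℝ → ℝ≥0∞} (hφ : Measurable φ) :
    ∫⁻ z, φ ‖z‖ ∂(lamw w) = ENNReal.ofReal (2 * Real.pi) * ∫⁻ s, φ s ∂(muw w) := by
  rw [polar_lam hw (G := fun z => φ ‖z‖) (hφ.comp measurable_norm), ← lintegral_const_mul _ hφ]
  refine lintegral_congr_ae ?_
  filter_upwards [(good_muw hw).supp] with s hs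
  simp only [norm_mul_ee hs.1.le, lintegral_const, Measure.restrict_apply_univ,
    Real.volume_Ioo]
  rw [mul_comm]; congr 2; ring

lemma TT_fin {w : ℝ → ℝ} (hw : IsRadialWeight w) {p α : ℝ} (hp : 1 < p) (hap : α < p - 1)
    {f : ℂ → ℂ} (hf : Measurable f)
    (hfin : ∫⁻ z, ENNReal.ofReal ‖f z‖ ^ p * UU w z ^ α ∂(lamw w) < ⊤) {z : ℂ} (hz : ‖z‖ < 1) :
    TT w f z < ⊤ := by
  have hg := good_muw hw
  have hp0 : 0 < p := by linarith
  have hp1 : 0 < p - 1 := by linarith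
  have hUm := UU_meas hw
  have hpq : p.HolderConjugate (p / (p - 1)) := Real.HolderConjugate.conjExponent hp
  set q := p / (p - 1) with hq
  have hq0 : 0 < q := hpq.symm.pos
  have h1 : ∫⁻ ζ, ENNReal.ofReal ‖f ζ‖ ∂(lamw w) < ⊤ := by
    have hold := ENNReal.lintegral_mul_le_Lp_mul_Lq (lamw w) hpq
      (f := fun ζ => ENNReal.ofReal ‖f ζ‖ * UU w ζ ^ (α / p)) (g := fun ζ => UU w ζ ^ (-(α / p)))
      (by fun_prop) (by fun_prop)
    have e1 : ∫⁻ ζ, ENNReal.ofReal ‖f ζ‖ ∂(lamw w) = ∫⁻ ζ, ((fun ζ => ENNReal.ofReal ‖f ζ‖ * UU w ζ ^ (α / p)) *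
        (fun ζ => UU w ζ ^ (-(α / p)))) ζ ∂(lamw w) := by
      refine lintegral_congr_ae ?_
      filter_upwards [lam_supp w] with ζ hζ
      simp only [Pi.mul_apply]
      rw [mul_assoc, ← ENNReal.rpow_add _ _ (UU_pos hw hζ) ENNReal.ofReal_ne_top, add_neg_cancel,
        ENNReal.rpow_zero, mul_one]
    rw [e1]
    refine lt_of_le_of_lt hold (ENNReal.mul_lt_top ?_ ?_)
    · refine ENNReal.rpow_lt_top_of_nonneg (by positivity) ?_
      have : ∀ ζ, (ENNReal.ofReal ‖f ζ‖ * UU w ζ ^ (α / p)) ^ p = ENNReal.ofReal ‖f ζ‖ ^ p * UU w ζ ^ α := by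
        intro ζ
        rw [ENNReal.mul_rpow_of_nonneg _ _ hp0.le, ← ENNReal.rpow_mul, div_mul_cancel₀ _ hp0.ne']
      simp only [this]
      exact hfin.ne
    · refine ENNReal.rpow_lt_top_of_nonneg (by positivity) ?_
      have e3 : ∀ ζ, (UU w ζ ^ (-(α / p))) ^ q =
          (fun s => ENNReal.ofReal (FF (muw w) s) ^ (-(α / (p - 1)))) ‖ζ‖ := by
        intro ζ
        rw [← ENNReal.rpow_mul, UU]
        congr 1; rw [hq]; field_simp
      simp only [e3]
      rw [radial_lam hw (φ := fun s => ENNReal.ofReal (FF (muw w) s) ^ (-(α / (p - 1))))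
        ((FF_measurable hg).ennreal_ofReal.pow_const _),
        lint_FF hg (G := fun y => ENNReal.ofReal y ^ (-(α / (p - 1)))) (by fun_prop)]
      have e4 : ∫⁻ y in Ioc 0 (FF (muw w) 0), ENNReal.ofReal y ^ (-(α / (p - 1))) =
          ∫⁻ y in Ioc 0 (FF (muw w) 0), ENNReal.ofReal (y ^ (-(α / (p - 1)))) := by
        refine setLIntegral_congr_fun measurableSet_Ioc fun y hy => ?_
        rw [ENNReal.ofReal_rpow_of_pos hy.1]
      rw [e4, lint_pow _ (FF_nonneg _)]
      · exact ENNReal.mul_ne_top ENNReal.ofReal_ne_top ENNReal.ofReal_ne_top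
      · have : α / (p - 1) < 1 := by rw [div_lt_one hp1]; exact hap
        linarith
  obtain ⟨M, hM⟩ := (isCompact_closedBall (0:ℂ) ‖z‖).exists_bound_of_continuousOn
    ((continuousOn_bk hg).mono (fun ξ hξ => by
      rw [mem_ball_zero_iff]; exact lt_of_le_of_lt (by simpa using hξ) hz))
  refine lt_of_le_of_lt (b := ENNReal.ofReal M * ∫⁻ ζ, ENNReal.ofReal ‖f ζ‖ ∂(lamw w)) ?_
    (ENNReal.mul_lt_top ENNReal.ofReal_lt_top h1)
  rw [← lintegral_const_mul' _ _ ENNReal.ofReal_ne_top]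
  refine lintegral_mono_ae ?_
  filter_upwards [lam_supp w] with ζ hζ
  refine mul_le_mul_left ?_ _
  have hm : ‖(starRingEnd ℂ) z * ζ‖ ≤ ‖z‖ := by
    rw [norm_mul, RCLike.norm_conj]; exact mul_le_of_le_one_right (norm_nonneg _) hζ.le
  rw [kk_of_mem (lt_of_le_of_lt hm hz)]
  exact ENNReal.ofReal_le_ofReal (hM _ (by simpa using hm))

lemma sufficiency {w : ℝ → ℝ} (hw : IsRadialWeight w) {p α : ℝ} (hp : 1 < p) (hα : -1 < α) (hap : α < p - 1)
    {C : ℝ} (hC : 0 < C)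
    (hIM : ∀ x : ℝ, 0 ≤ x → x < 1 → IM (muw w) x ≤ C * (FF (muw w) x)⁻¹) :
    PplusBounded p w (fun s => w s * hat1 w s ^ α) := by
  have hg := good_muw hw
  have hp0 : 0 < p := by linarith
  have hp1 : 0 < p - 1 := by linarith
  obtain ⟨c, hc1, hc2⟩ : ∃ c, max 0 α < c ∧ c < min (p - 1) (1 + α) := by
    refine exists_between ?_
    rw [max_lt_iff, lt_min_iff, lt_min_iff]
    exact ⟨⟨hp1, by linarith⟩, ⟨hap, by linarith⟩⟩
  rw [max_lt_iff] at hc1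
  rw [lt_min_iff] at hc2
  have hcp : c / p * p = c := div_mul_cancel₀ _ hp0.ne'
  have hcq : c / p * (p / (p - 1)) = c / (p - 1) := by field_simp
  have hb1 : 0 < c / (p - 1) := div_pos hc1.1 hp1
  have hb2 : c / (p - 1) < 1 := by rw [div_lt_one hp1]; exact hc2.1
  set C1 := ENNReal.ofReal (C * (1 / (1 - c / (p - 1)) + 1 / (c / (p - 1)))) with hC1
  set C2 := ENNReal.ofReal (C * (1 / (1 - (c - α)) + 1 / (c - α))) with hC2
  have hsf : SFinite (lamw w) := by unfold lamw; infer_instance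
  have hsch : ∀ f : ℂ → ℂ, Measurable f → ∫⁻ z, TT w f z ^ p * UU w z ^ α ∂(lamw w) ≤
      C1 ^ (p - 1) * C2 * ∫⁻ z, ENNReal.ofReal ‖f z‖ ^ p * UU w z ^ α ∂(lamw w) := by
    intro f hf
    refine schur (lamw w) (γ := c / p) hp (k := fun z ζ => kk (muw w) ((starRingEnd ℂ) z * ζ)) ?_ (UU_meas hw)
      ?_ ?_ ?_ ?_ hf.norm.ennreal_ofReal
    · refine (kk_meas hg).comp ?_
      have : Continuous fun x : ℂ × ℂ => (starRingEnd ℂ) x.1 * x.2 := by fun_prop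
      exact this.measurable
    · filter_upwards [lam_supp w] with z hz using UU_pos hw hz
    · exact Filter.Eventually.of_forall fun z => ENNReal.ofReal_ne_top
    · filter_upwards [lam_supp w] with z hz
      rw [hcq]
      exact ker_bound hw hC hIM hb1 hb2 hz
    · filter_upwards [lam_supp w] with ζ hζ
      rw [hcp, show α - c = -(c - α) by ring]
      have := ker_bound hw hC hIM (β := c - α) (by linarith) (by linarith) hζ
      refine le_trans (le_of_eq ?_) this
      refine lintegral_congr fun z => ?_
      rw [← kk_conj]
      simp [mul_comm]
  set C3 := C1 ^ (p - 1) * C2 with hC3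
  have hC3t : C3 ≠ ⊤ := ENNReal.mul_ne_top
    (ENNReal.rpow_ne_top_of_nonneg hp1.le ENNReal.ofReal_ne_top) ENNReal.ofReal_ne_top
  have hC3t' : C3 ^ (1 / p) ≠ ⊤ := ENNReal.rpow_ne_top_of_nonneg (by positivity) hC3t
  refine ⟨(C3 ^ (1 / p)).toReal + 1, by positivity, fun f hf hfin => ?_⟩
  have hpi : ENNReal.ofReal Real.pi ≠ 0 := (ENNReal.ofReal_pos.2 Real.pi_pos).ne'
  have hconv := norm_conv hw hp0 α (g := fun z => ‖f z‖) (fun _ => norm_nonneg _)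
  have hfin' : ∫⁻ z, ENNReal.ofReal ‖f z‖ ^ p * UU w z ^ α ∂(lamw w) < ⊤ := by
    rw [← hconv]
    by_contra hcon
    rw [not_lt, top_le_iff] at hcon
    simp only [LpC, hcon] at hfin
    rw [ENNReal.top_div_of_ne_top ENNReal.ofReal_ne_top, ENNReal.top_rpow_of_pos (by positivity)] at hfin
    exact lt_irrefl _ hfin
  refine ⟨?_, ?_⟩
  · filter_upwards [ae_restrict_mem measurableSet_ball] with z hz
    have hz : ‖z‖ < 1 := by simpa using hz
    rw [TT_eq hw f hz]
    exact TT_fin hw hp hap hf hfin' hz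
  · unfold LpR LpC
    rw [hconv, norm_conv hw hp0 α (g := fun z => |Pplus w f z|) (fun _ => abs_nonneg _)]
    have hle : ENNReal.ofReal ((C3 ^ (1 / p)).toReal + 1) ≥ C3 ^ (1 / p) := by
      rw [ge_iff_le, ENNReal.le_ofReal_iff_toReal_le hC3t' (by positivity)]; linarith
    refine le_trans ?_ (mul_le_mul_left hle _)
    rw [← ENNReal.mul_rpow_of_nonneg _ _ (by positivity)]
    refine ENNReal.rpow_le_rpow ?_ (by positivity)
    rw [← mul_div_assoc]
    refine ENNReal.div_le_div_right ?_ _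
    refine le_trans ?_ (hsch f hf)
    refine lintegral_mono_ae ?_
    filter_upwards [lam_supp w] with z hz
    refine mul_le_mul_left (ENNReal.rpow_le_rpow ?_ hp0.le) _
    rw [Pplus_eq hw hf hz (TT_fin hw hp hap hf hfin' hz)]
    refine ENNReal.div_le_of_le_mul ?_
    refine le_mul_of_one_le_right (zero_le) ?_
    rw [ENNReal.one_le_ofReal]
    linarith [Real.pi_gt_three]

lemma tail_conv {w : ℝ → ℝ} (hw : IsRadialWeight w) {r : ℝ} (hr : 0 ≤ r) (g : ℝ → ℝ≥0∞) :
    ∫⁻ s in Ioi r, g s ∂(muw w) = ∫⁻ s in Ioo r 1, ENNReal.ofReal (s * w s) * g s := by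
  unfold muw
  rw [restrict_withDensity measurableSet_Ioi, Measure.restrict_restrict measurableSet_Ioi]
  have : Ioi r ∩ Ioo (0:ℝ) 1 = Ioo r 1 := by
    ext s; constructor
    · rintro ⟨h1, h2⟩; exact ⟨h1, h2.2⟩
    · rintro ⟨h1, h2⟩; exact ⟨h1, ⟨lt_of_le_of_lt hr h1, h2⟩⟩
  rw [this, lintegral_withDensity_eq_lintegral_mul_non_measurable₀ _ _ (by simp)]
  · rfl
  · exact (dens_aem hw).mono_set (Ioo_subset_Ioo_left hr)

lemma nu_tail {w : ℝ → ℝ} (hw : IsRadialWeight w) {α : ℝ} {r : ℝ} (hr : 0 ≤ r) :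
    ∫⁻ s in Ioo r 1, ENNReal.ofReal (s * (w s * hat1 w s ^ α)) =
      ∫⁻ y in Ioc 0 (FF (muw w) r), ENNReal.ofReal (y ^ α) := by
  rw [← lint_FF_tail (good_muw hw) (G := fun y => ENNReal.ofReal (y ^ α)) (by fun_prop) hr, tail_conv hw hr]
  refine setLIntegral_congr_fun measurableSet_Ioo fun s hs => ?_
  have hs0 : 0 ≤ s := hr.trans hs.1.le
  rw [← ENNReal.ofReal_mul (mul_nonneg hs0 (hw.1 s ⟨hs0, hs.2⟩)), FF_muw hw hs0, mul_assoc]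

lemma sigma_tail {w : ℝ → ℝ} (hw : IsRadialWeight w) {p α : ℝ} (hp : 1 < p) {r : ℝ} (hr : 0 ≤ r) :
    ∫⁻ s in Ioo r 1, ENNReal.ofReal s * sigmaE p w (fun s => w s * hat1 w s ^ α) s =
      ∫⁻ y in Ioc 0 (FF (muw w) r), ENNReal.ofReal (y ^ (-(α / (p - 1)))) := by
  have hp0 : 0 < p := by linarith
  have hp1 : 0 < p - 1 := by linarith
  rw [← lint_FF_tail (good_muw hw) (G := fun y => ENNReal.ofReal (y ^ (-(α / (p - 1))))) (by fun_prop) hr,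
    tail_conv hw hr]
  refine setLIntegral_congr_fun measurableSet_Ioo fun s hs => ?_
  have hs0 : 0 ≤ s := hr.trans hs.1.le
  have hw0 := hw.1 s ⟨hs0, hs.2⟩
  rw [ENNReal.ofReal_mul hs0, mul_assoc]
  congr 1
  unfold sigmaE
  have hF : 0 < FF (muw w) s := (good_muw hw).pos s hs.2
  beta_reduce
  rw [← FF_muw hw hs0]
  set F := FF (muw w) s with hFdef
  rcases hw0.eq_or_lt with h0 | h0
  · simp only [← h0, ENNReal.ofReal_zero, ENNReal.zero_div, zero_mul]
    rw [ENNReal.zero_rpow_of_pos (by positivity)]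
  · have hv : 0 < w s * F ^ α := by positivity
    rw [ENNReal.ofReal_rpow_of_pos hv, ← ENNReal.ofReal_div_of_pos (by positivity),
      ENNReal.ofReal_rpow_of_pos (by positivity), ← ENNReal.ofReal_mul hw0]
    congr 1
    rw [Real.mul_rpow hw0 (by positivity), ← Real.rpow_mul hF.le, Real.div_rpow hw0 (by positivity),
      Real.mul_rpow (by positivity) (by positivity), ← Real.rpow_mul hw0, ← Real.rpow_mul hF.le,
      ← div_div, ← Real.rpow_sub h0, div_eq_mul_inv, ← Real.rpow_neg hF.le]
    have e1 : p / (p - 1) - 1 / p * (p / (p - 1)) = 1 := by field_simp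
    have e2 : α * (1 / p) * (p / (p - 1)) = α / (p - 1) := by field_simp
    rw [e1, e2, Real.rpow_one]

lemma ApE_iff {w : ℝ → ℝ} (hw : IsRadialWeight w) {p α : ℝ} (hp : 1 < p) (hα : -1 < α) :
    ApE p w (fun s => w s * hat1 w s ^ α) < ⊤ ↔ α < p - 1 := by
  have hp0 : 0 < p := by linarith
  have hp1 : 0 < p - 1 := by linarith
  have hg := good_muw hw
  have hpp : 0 < 1 - 1 / p := by
    have : 1 / p < 1 := by rw [div_lt_one hp0]; exact hp
    linarith
  have ha1 : 0 < α + 1 := by linarith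
  constructor
  · intro h
    by_contra hcon
    rw [not_lt] at hcon
    have hb : -(α / (p - 1)) ≤ -1 := by
      have : 1 ≤ α / (p - 1) := by rw [le_div_iff₀ hp1]; linarith
      linarith
    have h0 := hg.pos 0 one_pos
    have hle : ⊤ ≤ ApE p w (fun s => w s * hat1 w s ^ α) := by
      refine le_trans ?_ (le_iSup₂ (0:ℝ) (⟨le_rfl, one_pos⟩ : (0:ℝ) ∈ Ico (0:ℝ) 1))
      rw [nu_tail hw le_rfl, sigma_tail hw hp le_rfl, lint_pow hα (FF_nonneg _), lint_pow_top hb h0,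
        ENNReal.top_rpow_of_pos hpp, ENNReal.mul_top, ENNReal.top_div_of_ne_top ENNReal.ofReal_ne_top]
      rw [ENNReal.ofReal_rpow_of_pos (by positivity)]
      exact (ENNReal.ofReal_pos.2 (by positivity)).ne'
    exact absurd h (not_lt.2 hle)
  · intro h
    have hb : -1 < -(α / (p - 1)) := by
      have : α / (p - 1) < 1 := by rw [div_lt_one hp1]; exact h
      linarith
    set b := -(α / (p - 1)) with hbdef
    have hb1 : 0 < b + 1 := by linarith
    refine lt_of_le_of_lt (b := ENNReal.ofReal ((1 / (α + 1)) ^ (1 / p) * (1 / (b + 1)) ^ (1 - 1 / p))) ?_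
      ENNReal.ofReal_lt_top
    refine iSup₂_le fun r hr => ?_
    rw [nu_tail hw hr.1, sigma_tail hw hp hr.1, lint_pow hα (FF_nonneg _), lint_pow hb (FF_nonneg _),
      ← FF_muw hw hr.1]
    have hx := hg.pos r hr.2
    set x := FF (muw w) r
    rw [ENNReal.ofReal_rpow_of_pos (by positivity), ENNReal.ofReal_rpow_of_pos (by positivity),
      ← ENNReal.ofReal_mul (by positivity), ← ENNReal.ofReal_div_of_pos hx]
    refine ENNReal.ofReal_le_ofReal (le_of_eq ?_)
    rw [div_eq_mul_one_div (x ^ (α + 1)), div_eq_mul_one_div (x ^ (b + 1)),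
      Real.mul_rpow (by positivity) (by positivity), Real.mul_rpow (by positivity) (by positivity),
      ← Real.rpow_mul hx.le, ← Real.rpow_mul hx.le]
    have e : x ^ ((α + 1) * (1 / p)) * x ^ ((b + 1) * (1 - 1 / p)) = x := by
      rw [← Real.rpow_add hx]
      have : (α + 1) * (1 / p) + (b + 1) * (1 - 1 / p) = 1 := by
        rw [hbdef]; field_simp; ring
      rw [this, Real.rpow_one]
    rw [div_eq_iff hx.ne']
    conv_rhs => rw [← e]
    ring

lemma radial_test {w : ℝ → ℝ} (hw : IsRadialWeight w) {p α : ℝ} (hp : 1 < p) {C : ℝ} (hC : 0 < C)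
    (hB : ∀ f : ℂ → ℂ, Measurable f → LpC p (fun s => w s * hat1 w s ^ α) f < ⊤ →
      (∀ᵐ z ∂(volume.restrict (ball (0:ℂ) 1)),
        (∫⁻ ζ in ball (0:ℂ) 1, ENNReal.ofReal (‖f ζ‖ * ‖Bker w z ζ‖ * w ‖ζ‖)) < ⊤) ∧
      LpR p (fun s => w s * hat1 w s ^ α) (Pplus w f) ≤
        ENNReal.ofReal C * LpC p (fun s => w s * hat1 w s ^ α) f)
    {φ : ℝ → ℝ} (hφ : Measurable φ) (hφ0 : ∀ s, 0 ≤ φ s)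
    (hfin : ∫⁻ s, ENNReal.ofReal (φ s) ^ p * ENNReal.ofReal (FF (muw w) s) ^ α ∂(muw w) < ⊤)
    {ψ : ℝ → ℝ≥0∞} (hψ : Measurable ψ)
    (hle : ∀ r ∈ Ico (0:ℝ) 1, ψ r ≤ ∫⁻ s, ENNReal.ofReal (IM (muw w) (r * s)) * ENNReal.ofReal (φ s) ∂(muw w)) :
    ∫⁻ r, ψ r ^ p * ENNReal.ofReal (FF (muw w) r) ^ α ∂(muw w) ≤
      ENNReal.ofReal (C * Real.pi) ^ p *
        ∫⁻ s, ENNReal.ofReal (φ s) ^ p * ENNReal.ofReal (FF (muw w) s) ^ α ∂(muw w) := by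
  have hg := good_muw hw
  have hp0 : 0 < p := by linarith
  have hFm := FF_measurable hg
  have hpi0 : ENNReal.ofReal Real.pi ≠ 0 := (ENNReal.ofReal_pos.2 Real.pi_pos).ne'
  have hpit : ENNReal.ofReal Real.pi ≠ ⊤ := ENNReal.ofReal_ne_top
  set f : ℂ → ℂ := fun z => (φ ‖z‖ : ℂ) with hf
  have hfm : Measurable f := by fun_prop
  have hfn : ∀ z, ‖f z‖ = φ ‖z‖ := by
    intro z; rw [hf]; simp only [Complex.norm_real, Real.norm_eq_abs, abs_of_nonneg (hφ0 _)]
  have hconv := norm_conv hw hp0 α (g := fun z => ‖f z‖) (fun _ => norm_nonneg _)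
  have hI := radial_lam hw (φ := fun s => ENNReal.ofReal (φ s) ^ p * ENNReal.ofReal (FF (muw w) s) ^ α)
    (by fun_prop)
  have hI' : ∫⁻ z, ENNReal.ofReal ‖f z‖ ^ p * UU w z ^ α ∂(lamw w) = ENNReal.ofReal (2 * Real.pi) *
      ∫⁻ s, ENNReal.ofReal (φ s) ^ p * ENNReal.ofReal (FF (muw w) s) ^ α ∂(muw w) := by
    rw [← hI]; simp only [hfn]; rfl
  rw [hI'] at hconv
  have hLp : LpC p (fun s => w s * hat1 w s ^ α) f < ⊤ := by
    unfold LpC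
    rw [hconv]
    exact ENNReal.rpow_lt_top_of_nonneg (by positivity)
      (ENNReal.div_ne_top (ENNReal.mul_ne_top ENNReal.ofReal_ne_top hfin.ne) hpi0)
  obtain ⟨h1, h2⟩ := hB f hfm hLp
  have h1' : ∀ᵐ z ∂(lamw w), TT w f z < ⊤ := by
    refine (withDensity_absolutelyContinuous _ _).ae_le ?_
    filter_upwards [h1, ae_restrict_mem measurableSet_ball] with z hz hz2
    rwa [TT_eq hw f (by simpa using hz2)] at hz
  unfold LpR LpC at h2
  rw [hconv, norm_conv hw hp0 α (g := fun z => |Pplus w f z|) (fun _ => abs_nonneg _)] at h2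
  have h3 := ENNReal.rpow_le_rpow h2 hp0.le
  rw [ENNReal.mul_rpow_of_nonneg _ _ hp0.le, ← ENNReal.rpow_mul, ← ENNReal.rpow_mul,
    one_div_mul_cancel hp0.ne', ENNReal.rpow_one, ENNReal.rpow_one, ← mul_div_assoc] at h3
  rw [ENNReal.div_le_iff hpi0 hpit, ENNReal.div_mul_cancel hpi0 hpit] at h3
  have h4 : ENNReal.ofReal (2 * Real.pi) * ∫⁻ r, (ψ r / ENNReal.ofReal Real.pi) ^ p *
      ENNReal.ofReal (FF (muw w) r) ^ α ∂(muw w) ≤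
      ∫⁻ z, ENNReal.ofReal |Pplus w f z| ^ p * UU w z ^ α ∂(lamw w) := by
    rw [← radial_lam hw (φ := fun r => (ψ r / ENNReal.ofReal Real.pi) ^ p *
      ENNReal.ofReal (FF (muw w) r) ^ α) (by fun_prop)]
    refine lintegral_mono_ae ?_
    filter_upwards [lam_supp w, h1'] with z hz hz2
    refine mul_le_mul_left (ENNReal.rpow_le_rpow ?_ hp0.le) _
    rw [Pplus_eq hw hfm hz hz2]
    refine ENNReal.div_le_div_right ?_ _
    refine (hle _ ⟨norm_nonneg _, hz⟩).trans (le_of_eq ?_)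
    rw [← kernel_radial hw hz (φ := fun s => ENNReal.ofReal (φ s)) (by fun_prop)]
    unfold TT
    simp only [hfn]
  have h5 := h4.trans h3
  have h2pi0 : ENNReal.ofReal (2 * Real.pi) ≠ 0 := (ENNReal.ofReal_pos.2 (by positivity)).ne'
  have h6 : ∫⁻ r, (ψ r / ENNReal.ofReal Real.pi) ^ p *
      ENNReal.ofReal (FF (muw w) r) ^ α ∂(muw w) ≤ ENNReal.ofReal C ^ p *
        ∫⁻ s, ENNReal.ofReal (φ s) ^ p * ENNReal.ofReal (FF (muw w) s) ^ α ∂(muw w) := by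
    refine (ENNReal.mul_le_mul_iff_right h2pi0 ENNReal.ofReal_ne_top).1 (h5.trans (le_of_eq ?_))
    ring
  calc _ = ENNReal.ofReal Real.pi ^ p * ∫⁻ r, (ψ r / ENNReal.ofReal Real.pi) ^ p *
      ENNReal.ofReal (FF (muw w) r) ^ α ∂(muw w) := by
        rw [← lintegral_const_mul _ (by fun_prop)]
        refine lintegral_congr fun r => ?_
        rw [← mul_assoc, ← ENNReal.mul_rpow_of_nonneg _ _ hp0.le, ENNReal.mul_div_cancel hpi0 hpit]
    _ ≤ ENNReal.ofReal Real.pi ^ p * (ENNReal.ofReal C ^ p *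
        ∫⁻ s, ENNReal.ofReal (φ s) ^ p * ENNReal.ofReal (FF (muw w) s) ^ α ∂(muw w)) := mul_le_mul_right h6 _
    _ = _ := by
        rw [← mul_assoc, ← ENNReal.mul_rpow_of_nonneg _ _ hp0.le, ENNReal.ofReal_mul hC.le,
          mul_comm (ENNReal.ofReal Real.pi)]

lemma lint_inv {a b : ℝ} (ha : 0 < a) (hab : a ≤ b) :
    ∫⁻ y in Ioc a b, ENNReal.ofReal y⁻¹ = ENNReal.ofReal (Real.log (b / a)) := by
  have hi : IntervalIntegrable (fun y : ℝ => y⁻¹) volume a b := by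
    refine intervalIntegral.intervalIntegrable_inv (fun x hx => ?_) continuousOn_id
    rw [uIcc_of_le hab] at hx
    exact (lt_of_lt_of_le ha hx.1).ne'
  rw [← ofReal_integral_eq_lintegral_ofReal hi.1, ← intervalIntegral.integral_of_le hab,
    integral_inv_of_pos ha (lt_of_lt_of_le ha hab)]
  filter_upwards [ae_restrict_mem measurableSet_Ioc] with y hy
  exact inv_nonneg.2 (ha.trans hy.1).le

lemma nec_alpha {w : ℝ → ℝ} (hw : IsRadialWeight w) {p α : ℝ} (hp : 1 < p) (hα : -1 < α)
    (hB : PplusBounded p w (fun s => w s * hat1 w s ^ α)) : α < p - 1 := by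
  obtain ⟨C, hC, hB⟩ := hB
  by_contra hcon
  rw [not_lt] at hcon
  have hg := good_muw hw
  have hp0 : 0 < p := by linarith
  have hp1 : 0 < p - 1 := by linarith
  have hFm := FF_measurable hg
  have hX := hg.pos 0 one_pos
  set X := FF (muw w) 0 with hXdef
  have ha1 : 0 < α + 1 := by linarith
  have hc := ac_pos hg 0
  set c := 2 * Real.pi * ac (muw w) 0 with hcdef
  have hc0 : 0 < c := by have := Real.pi_pos; positivity
  set κ := X ^ (α + 1) / (α + 1) with hκ
  have hκ0 : 0 < κ := by positivity
  set M := X ^ (α - p + 1) with hM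
  have hM0 : 0 < M := by positivity
  have key : ∀ L : ℝ, 0 < L → (c * L) ^ p * κ ≤ (C * Real.pi) ^ p * (M * L) := by
    intro L hL
    set δ := X * Real.exp (-L) with hδ
    have hδ0 : 0 < δ := by positivity
    have hδX : δ ≤ X := by
      rw [hδ]; exact mul_le_of_le_one_right hX.le (Real.exp_le_one_iff.2 (by linarith))
    have hlog : Real.log (X / δ) = L := by
      rw [hδ, div_mul_cancel_left₀ hX.ne', ← Real.exp_neg, neg_neg, Real.log_exp]
    set Φ : ℝ → ℝ := (Ioi δ).indicator (fun y => y⁻¹) with hΦ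
    have hΦm : Measurable Φ := by
      rw [hΦ]; exact measurable_inv.indicator measurableSet_Ioi
    have hΦ0 : ∀ y, 0 ≤ Φ y := by
      intro y; rw [hΦ]; refine indicator_nonneg (fun y hy => ?_) y
      exact inv_nonneg.2 (hδ0.trans hy).le
    have hset : Ioc 0 X ∩ Ioi δ = Ioc δ X := by
      ext y; constructor
      · rintro ⟨h1, h2⟩; exact ⟨h2, h1.2⟩
      · rintro ⟨h1, h2⟩; exact ⟨⟨hδ0.trans h1, h2⟩, h1⟩
    have hset' : Ioi δ ∩ Ioc 0 X = Ioc δ X := by rw [inter_comm, hset]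
    have i1 : ∫⁻ s, ENNReal.ofReal (Φ (FF (muw w) s)) ∂(muw w) = ENNReal.ofReal L := by
      rw [lint_FF hg (G := fun y => ENNReal.ofReal (Φ y)) (by fun_prop), ← hXdef, ← hlog, ← lint_inv hδ0 hδX,
        ← hset', ← Measure.restrict_restrict measurableSet_Ioi, ← lintegral_indicator measurableSet_Ioi]
      refine lintegral_congr fun y => ?_
      by_cases hy : y ∈ Ioi δ
      · simp only [hΦ, indicator_of_mem hy]
      · simp only [hΦ, indicator_of_notMem hy, ENNReal.ofReal_zero]
    have i2 : ∫⁻ s, ENNReal.ofReal (Φ (FF (muw w) s)) ^ p * ENNReal.ofReal (FF (muw w) s) ^ α ∂(muw w) ≤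
        ENNReal.ofReal (M * L) := by
      rw [lint_FF hg (G := fun y => ENNReal.ofReal (Φ y) ^ p * ENNReal.ofReal y ^ α) (by fun_prop), ← hXdef,
        ENNReal.ofReal_mul hM0.le, ← hlog, ← lint_inv hδ0 hδX,
        ← hset', ← Measure.restrict_restrict measurableSet_Ioi, ← lintegral_indicator measurableSet_Ioi,
        ← lintegral_const_mul' _ _ ENNReal.ofReal_ne_top]
      refine setLIntegral_mono' measurableSet_Ioc fun y hy0 => ?_
      by_cases hy : y ∈ Ioi δ
      · simp only [hΦ, indicator_of_mem hy]
        have hy1 : 0 < y := hy0.1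
        rw [ENNReal.ofReal_rpow_of_pos (inv_pos.2 hy1), ENNReal.ofReal_rpow_of_pos hy1,
          ← ENNReal.ofReal_mul (by positivity), ← ENNReal.ofReal_mul hM0.le]
        refine ENNReal.ofReal_le_ofReal ?_
        have : (y⁻¹) ^ p * y ^ α = y ^ (α - p + 1) * y⁻¹ := by
          rw [Real.inv_rpow hy1.le, ← Real.rpow_neg hy1.le, ← Real.rpow_neg_one y, ← Real.rpow_add hy1,
            ← Real.rpow_add hy1]
          congr 1; ring
        rw [this]
        refine mul_le_mul_of_nonneg_right ?_ (inv_nonneg.2 hy1.le)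
        exact Real.rpow_le_rpow hy1.le hy0.2 (by linarith)
      · simp only [hΦ, indicator_of_notMem hy, ENNReal.ofReal_zero]
        rw [ENNReal.zero_rpow_of_pos hp0, zero_mul]
        exact zero_le
    have ht := radial_test hw hp hC hB (φ := fun s => Φ (FF (muw w) s)) (by fun_prop) (fun s => hΦ0 _)
      (lt_of_le_of_lt i2 ENNReal.ofReal_lt_top) (ψ := fun _ => ENNReal.ofReal (c * L)) measurable_const (by
        intro r hr
        rw [ENNReal.ofReal_mul hc0.le, ← i1, ← lintegral_const_mul' _ _ ENNReal.ofReal_ne_top]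
        refine lintegral_mono_ae ?_
        filter_upwards [hg.supp] with s hs
        refine mul_le_mul_left (ENNReal.ofReal_le_ofReal ?_) _
        exact IM_ge_zero hg (mul_nonneg hr.1 hs.1.le) (by nlinarith [hr.1, hr.2, hs.1, hs.2]))
    have ht2 := ht.trans (mul_le_mul_right i2 _)
    rw [lintegral_const_mul _ (by fun_prop),
      lint_FF hg (G := fun y => ENNReal.ofReal y ^ α) (by fun_prop), ← hXdef] at ht2
    have e4 : ∫⁻ y in Ioc 0 X, ENNReal.ofReal y ^ α = ENNReal.ofReal κ := by
      rw [hκ, ← lint_pow hα hX.le]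
      refine setLIntegral_congr_fun measurableSet_Ioc fun y hy => ?_
      rw [ENNReal.ofReal_rpow_of_pos hy.1]
    have hCp : 0 < C * Real.pi := mul_pos hC Real.pi_pos
    rw [e4, ENNReal.ofReal_rpow_of_pos (by positivity), ENNReal.ofReal_rpow_of_pos hCp,
      ← ENNReal.ofReal_mul (by positivity), ← ENNReal.ofReal_mul (by positivity),
      ENNReal.ofReal_le_ofReal_iff (by positivity)] at ht2
    exact ht2
  have hCp : 0 < C * Real.pi := mul_pos hC Real.pi_pos
  set B := (C * Real.pi) ^ p * M / (c ^ p * κ) with hBdef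
  have hB0 : 0 < B := by positivity
  have hL := key ((B + 1) ^ (1 / (p - 1))) (by positivity)
  set L := (B + 1) ^ (1 / (p - 1)) with hLdef
  have hL0 : 0 < L := by positivity
  have hLp : L ^ p = (B + 1) * L := by
    have : L ^ (p - 1) = B + 1 := by
      rw [hLdef, ← Real.rpow_mul (by positivity), one_div_mul_cancel hp1.ne', Real.rpow_one]
    rw [← this, ← Real.rpow_add_one hL0.ne']; congr 1; ring
  rw [Real.mul_rpow hc0.le hL0.le, hLp] at hL
  have hcp : 0 < c ^ p * κ := by positivity
  have hBe : (C * Real.pi) ^ p * M = B * (c ^ p * κ) := by rw [hBdef, div_mul_cancel₀ _ hcp.ne']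
  have : (c ^ p * κ) * (B + 1) * L ≤ (c ^ p * κ) * B * L := by
    calc _ = c ^ p * ((B + 1) * L) * κ := by ring
      _ ≤ _ := hL
      _ = ((C * Real.pi) ^ p * M) * L := by ring
      _ = _ := by rw [hBe]; ring
  nlinarith [mul_pos hcp hL0]

lemma nec_sum {w : ℝ → ℝ} (hw : IsRadialWeight w) {p α : ℝ} (hp : 1 < p) (hα : -1 < α)
    (hB : PplusBounded p w (fun s => w s * hat1 w s ^ α)) :
    ∃ B > 0, ∀ ρ, 0 < ρ → ρ < 1 → ∀ t : Finset ℕ,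
      (2 * ∑ n ∈ t, ac (muw w) n * (ρ ^ 2) ^ n * (1 / n)) * FF (muw w) ρ ≤ B := by
  obtain ⟨C, hC, hB⟩ := hB
  have hg := good_muw hw
  have hp0 : 0 < p := by linarith
  have hFm := FF_measurable hg
  have hCp : 0 < C * Real.pi := mul_pos hC Real.pi_pos
  refine ⟨C * Real.pi, hCp, fun ρ h0 h1 t => ?_⟩
  have hF := hg.pos ρ h1
  have ha1 : 0 < α + 1 := by linarith
  set S := 2 * ∑ n ∈ t, ac (muw w) n * (ρ ^ 2) ^ n * (1 / n) with hS
  have hS0 : 0 ≤ S := by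
    refine mul_nonneg zero_le_two (Finset.sum_nonneg fun n _ => ?_)
    have := (ac_pos hg n).le
    positivity
  set V := FF (muw w) ρ ^ (α + 1) / (α + 1) with hV
  have hV0 : 0 < V := by positivity
  have iV : ∫⁻ s in Ioi ρ, ENNReal.ofReal (FF (muw w) s) ^ α ∂(muw w) = ENNReal.ofReal V := by
    rw [lint_FF_tail hg (G := fun y => ENNReal.ofReal y ^ α) (by fun_prop) h0.le, hV, ← lint_pow hα hF.le]
    refine setLIntegral_congr_fun measurableSet_Ioc fun y hy => ?_
    rw [ENNReal.ofReal_rpow_of_pos hy.1]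
  set φ : ℝ → ℝ := (Ioi ρ).indicator (fun _ => 1) with hφ
  have hφm : Measurable φ := measurable_const.indicator measurableSet_Ioi
  have gen : ∀ A : ℝ, 0 ≤ A → ∫⁻ s, ((Ioi ρ).indicator (fun _ => ENNReal.ofReal A) s) ^ p *
      ENNReal.ofReal (FF (muw w) s) ^ α ∂(muw w) = ENNReal.ofReal (A ^ p * V) := by
    intro A hA
    rw [ENNReal.ofReal_mul (by positivity), ← iV, ← lintegral_const_mul' _ _ ENNReal.ofReal_ne_top,
      ← lintegral_indicator measurableSet_Ioi]
    refine lintegral_congr fun s => ?_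
    by_cases hs : s ∈ Ioi ρ
    · rw [indicator_of_mem hs, indicator_of_mem hs, ENNReal.ofReal_rpow_of_nonneg hA hp0.le]
    · rw [indicator_of_notMem hs, indicator_of_notMem hs, ENNReal.zero_rpow_of_pos hp0, zero_mul]
  have hφe : ∀ s, ENNReal.ofReal (φ s) = (Ioi ρ).indicator (fun _ => ENNReal.ofReal 1) s := by
    intro s
    by_cases hs : s ∈ Ioi ρ
    · rw [hφ, indicator_of_mem hs, indicator_of_mem hs]
    · rw [hφ, indicator_of_notMem hs, indicator_of_notMem hs, ENNReal.ofReal_zero]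
  have i2 : ∫⁻ s, ENNReal.ofReal (φ s) ^ p * ENNReal.ofReal (FF (muw w) s) ^ α ∂(muw w) = ENNReal.ofReal V := by
    simp only [hφe]
    rw [gen 1 zero_le_one, Real.one_rpow, one_mul]
  have ht := radial_test hw hp hC hB (φ := φ) hφm
    (fun s => indicator_nonneg (fun _ _ => zero_le_one) s)
    (by rw [i2]; exact ENNReal.ofReal_lt_top)
    (ψ := (Ioi ρ).indicator (fun _ => ENNReal.ofReal (S * FF (muw w) ρ)))
    (measurable_const.indicator measurableSet_Ioi) (by
      intro r hr
      by_cases hs : r ∈ Ioi ρ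
      · rw [indicator_of_mem hs, ENNReal.ofReal_mul hS0, FF_ofReal hg]
        have hrρ : ρ < r := hs
        have e : ENNReal.ofReal S * (muw w) (Ioi ρ) =
            ∫⁻ s, (Ioi ρ).indicator (fun _ => ENNReal.ofReal S) s ∂(muw w) := by
          rw [lintegral_indicator measurableSet_Ioi, lintegral_const, Measure.restrict_apply_univ]
        rw [e]
        refine lintegral_mono_ae ?_
        filter_upwards [hg.supp] with s hs1
        by_cases hs : s ∈ Ioi ρ
        · rw [indicator_of_mem hs, hφ, indicator_of_mem hs, ENNReal.ofReal_one, mul_one]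
          have hsρ : ρ < s := hs
          refine ENNReal.ofReal_le_ofReal ?_
          refine le_trans ?_ (IM_hardy hg (mul_nonneg hr.1 hs1.1.le)
            (by nlinarith [hr.1, hr.2, hs1.1, hs1.2]) t)
          rw [hS]
          refine mul_le_mul_of_nonneg_left (Finset.sum_le_sum fun n _ => ?_) zero_le_two
          have := (ac_pos hg n).le
          have h2 : ρ ^ 2 ≤ r * s := by nlinarith
          gcongr
        · rw [indicator_of_notMem hs]; exact zero_le
      · rw [indicator_of_notMem hs]; exact zero_le)
  rw [i2, gen _ (mul_nonneg hS0 hF.le), ENNReal.ofReal_rpow_of_pos hCp, ← ENNReal.ofReal_mul (by positivity),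
    ENNReal.ofReal_le_ofReal_iff (by positivity)] at ht
  have h3 := le_of_mul_le_mul_right ht hV0
  exact (Real.rpow_le_rpow_iff (mul_nonneg hS0 hF.le) hCp.le hp0).1 h3

lemma harmonic_dyadic (N : ℕ) (hN : 1 ≤ N) (j : ℕ) :
    (j : ℝ) / 2 ≤ ∑ n ∈ Finset.Ioc N (2 ^ j * N), (1 : ℝ) / n := by
  induction j with
  | zero => simp
  | succ j ih =>
    have hle : N ≤ 2 ^ j * N := Nat.le_mul_of_pos_left _ (by positivity)
    have hle2 : 2 ^ j * N ≤ 2 ^ (j + 1) * N := Nat.mul_le_mul_right _ (Nat.pow_le_pow_right (by norm_num) (by omega))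
    rw [← Finset.sum_Ioc_consecutive (fun n : ℕ => (1:ℝ) / n) hle hle2]
    have hN0 : (0:ℝ) < N := by exact_mod_cast hN
    have : (1:ℝ) / 2 ≤ ∑ n ∈ Finset.Ioc (2 ^ j * N) (2 ^ (j + 1) * N), (1 : ℝ) / n := by
      have h1 : ∑ n ∈ Finset.Ioc (2 ^ j * N) (2 ^ (j + 1) * N), (1 : ℝ) / (2 ^ (j + 1) * N) ≤
          ∑ n ∈ Finset.Ioc (2 ^ j * N) (2 ^ (j + 1) * N), (1 : ℝ) / n := by
        refine Finset.sum_le_sum fun n hn => ?_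
        rw [Finset.mem_Ioc] at hn
        have hn0 : (0:ℝ) < n := by
          have : 0 < n := by omega
          exact_mod_cast this
        refine one_div_le_one_div_of_le hn0 ?_
        exact_mod_cast hn.2
      refine le_trans (le_of_eq ?_) h1
      rw [Finset.sum_const, Nat.card_Ioc, nsmul_eq_mul]
      have : 2 ^ (j + 1) * N - 2 ^ j * N = 2 ^ j * N := by
        have e : 2 ^ (j+1) * N = 2 ^ j * N + 2 ^ j * N := by ring
        rw [e, Nat.add_sub_cancel]
      rw [this]; push_cast
      rw [pow_succ]; field_simp
    push_cast
    linarith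

lemma nec_dcheck {w : ℝ → ℝ} (hw : IsRadialWeight w) (hwD : Dhat w) {B : ℝ} (hB0 : 0 < B)
    (hB : ∀ ρ, 0 < ρ → ρ < 1 → ∀ t : Finset ℕ,
      (2 * ∑ n ∈ t, ac (muw w) n * (ρ ^ 2) ^ n * (1 / n)) * FF (muw w) ρ ≤ B) : Dcheck w := by
  obtain ⟨C0, hC0, -, hcomp, hdoub⟩ := hatw_comp hw hwD
  have hg := good_muw hw
  obtain ⟨C, hC, hmom⟩ := mom_upper hg hC0.le hdoub
  obtain ⟨j, hj⟩ := exists_nat_ge (2 * (C0 * (4 * C * B)) + 1)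
  have hj0 : (0:ℝ) < j := lt_of_lt_of_le (by positivity) hj
  have hK1 : (1:ℝ) < 2 ^ (j + 3) := one_lt_pow₀ (by norm_num) (by omega)
  refine ⟨2 ^ (j + 3), hK1, 2, by norm_num, fun r hr => ?_⟩
  set K : ℝ := 2 ^ (j + 3) with hK
  have h1r : 0 < 1 - r := by linarith [hr.2]
  have hK8 : (8:ℝ) ≤ K := by
    rw [hK, pow_add]
    have : (1:ℝ) ≤ 2 ^ j := one_le_pow₀ (by norm_num)
    linarith
  set ρ := 1 - (1 - r) / K with hρ
  have hq : (1 - r) / K ≤ 1 / 8 := by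
    rw [div_le_div_iff₀ (by linarith) (by norm_num)]
    nlinarith [hr.1]
  have hq0 : 0 < (1 - r) / K := by positivity
  have hρ0 : 0 < ρ := by linarith
  have hρ1 : ρ < 1 := by linarith
  set N := ⌈1 / (1 - r)⌉₊ with hN
  have hN1 : 1 / (1 - r) ≤ N := Nat.le_ceil _
  have hone : 1 ≤ 1 / (1 - r) := by rw [le_div_iff₀ h1r]; linarith [hr.1]
  have hN2 : (N:ℝ) ≤ 2 / (1 - r) := by
    have := Nat.ceil_lt_add_one (show 0 ≤ 1 / (1 - r) by positivity)
    have e : 2 / (1 - r) = 1 / (1 - r) + 1 / (1 - r) := by ring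
    rw [e]; linarith
  have hNn : 1 ≤ N := by exact_mod_cast hone.trans hN1
  have hFr := hg.pos r hr.2
  have hFρ := hg.pos ρ hρ1
  have hmain := hB ρ hρ0 hρ1 (Finset.Ioc N (2 ^ j * N))
  have hlow : (j:ℝ) / (4 * C * FF (muw w) r) ≤
      2 * ∑ n ∈ Finset.Ioc N (2 ^ j * N), ac (muw w) n * (ρ ^ 2) ^ n * (1 / n) := by
    have hterm : ∀ n ∈ Finset.Ioc N (2 ^ j * N), (1 / (4 * C * FF (muw w) r)) * (1 / (n:ℝ)) ≤
        ac (muw w) n * (ρ ^ 2) ^ n * (1 / n) := by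
      intro n hn
      rw [Finset.mem_Ioc] at hn
      have hn1 : 1 ≤ n := by omega
      have hnN : (N:ℝ) ≤ n := by exact_mod_cast hn.1.le
      have hn0 : (0:ℝ) < n := by exact_mod_cast hn1
      have hnU : (n:ℝ) ≤ 2 ^ j * N := by exact_mod_cast hn.2
      refine mul_le_mul_of_nonneg_right ?_ (by positivity)
      have hA : 1 / (2 * C * FF (muw w) r) ≤ ac (muw w) n := by
        rw [ac, ← one_div]
        refine one_div_le_one_div_of_le (by have := mom_pos hg n; positivity) ?_
        have h2 : FF (muw w) (1 - 1 / n) ≤ FF (muw w) r := by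
          refine FF_anti hg ?_
          have : 1 / (n:ℝ) ≤ 1 - r := by
            rw [div_le_iff₀ hn0]
            have := hN1.trans hnN
            rw [div_le_iff₀ h1r] at this
            linarith
          linarith
        have h3 := hmom n hn1
        have h4 := mul_le_mul_of_nonneg_left h2 hC.le
        linarith
      have hP : (1:ℝ) / 2 ≤ (ρ ^ 2) ^ n := by
        have hb := one_add_mul_le_pow (show (-2:ℝ) ≤ -((1 - r) / K) by linarith) (2 * n)
        rw [← sub_eq_add_neg, ← hρ, pow_mul] at hb
        refine le_trans ?_ hb
        push_cast
        have : (n:ℝ) * ((1 - r) / K) ≤ 1 / 4 := by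
          have h5 : (n:ℝ) ≤ 2 ^ j * (2 / (1 - r)) :=
            hnU.trans (mul_le_mul_of_nonneg_left hN2 (by positivity))
          calc (n:ℝ) * ((1 - r) / K) ≤ (2 ^ j * (2 / (1 - r))) * ((1 - r) / K) :=
                mul_le_mul_of_nonneg_right h5 hq0.le
            _ = 1 / 4 := by rw [hK, pow_add]; field_simp; norm_num
        linarith
      calc 1 / (4 * C * FF (muw w) r) = 1 / (2 * C * FF (muw w) r) * (1 / 2) := by field_simp; norm_num
        _ ≤ _ := mul_le_mul hA hP (by norm_num) (ac_pos hg n).le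
    have hs := Finset.sum_le_sum hterm
    rw [← Finset.mul_sum] at hs
    have hh := harmonic_dyadic N hNn j
    have h6 : (1 / (4 * C * FF (muw w) r)) * ((j:ℝ) / 2) ≤
      (1 / (4 * C * FF (muw w) r)) * ∑ n ∈ Finset.Ioc N (2 ^ j * N), (1 : ℝ) / n :=
      mul_le_mul_of_nonneg_left hh (by positivity)
    calc (j:ℝ) / (4 * C * FF (muw w) r) = 2 * ((1 / (4 * C * FF (muw w) r)) * ((j:ℝ) / 2)) := by ring
      _ ≤ _ := mul_le_mul_of_nonneg_left (h6.trans hs) zero_le_two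
  have h7 := (mul_le_mul_of_nonneg_right hlow hFρ.le).trans hmain
  have h8 : j * FF (muw w) ρ ≤ (4 * C * B) * FF (muw w) r := by
    rw [div_mul_eq_mul_div, div_le_iff₀ (by positivity)] at h7
    linarith
  have h9 : j * hatw w ρ ≤ C0 * (4 * C * B) * hatw w r := by
    have a1 := hcomp ρ ⟨hρ0.le, hρ1⟩
    have a2 : FF (muw w) r ≤ hatw w r := by rw [FF_muw hw hr.1]; exact hat1_le hw hr.1
    calc j * hatw w ρ ≤ j * (C0 * FF (muw w) ρ) := mul_le_mul_of_nonneg_left a1 hj0.le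
      _ = C0 * (j * FF (muw w) ρ) := by ring
      _ ≤ C0 * ((4 * C * B) * FF (muw w) r) := mul_le_mul_of_nonneg_left h8 hC0.le
      _ ≤ C0 * ((4 * C * B) * hatw w r) := by gcongr
      _ = _ := by ring
  have hwr := hw.2.2 r hr
  have h10 : 2 * (C0 * (4 * C * B)) * hatw w r ≤ j * hatw w r :=
    mul_le_mul_of_nonneg_right (by linarith) hwr.le
  have : j * (2 * hatw w ρ) ≤ j * hatw w r := by linarith
  exact le_of_mul_le_mul_left this hj0

theorem main_aux (p α : ℝ) (hp : 1 < p) (hα : -1 < α) (w : ℝ → ℝ)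
    (hw : IsRadialWeight w) (hwD : Dhat w) :
    PplusBounded p w (fun s => w s * hat1 w s ^ α) ↔
      (ApE p w (fun s => w s * hat1 w s ^ α) < ⊤ ∧ Dhat w ∧ Dcheck w) := by
  rw [ApE_iff hw hp hα]
  constructor
  · intro h
    obtain ⟨B, hB0, hB⟩ := nec_sum hw hp hα h
    exact ⟨nec_alpha hw hp hα h, hwD, nec_dcheck hw hwD hB0 hB⟩
  · rintro ⟨hap, -, K, hK, C, hC, hH⟩
    have hg := good_muw hw
    obtain ⟨C0, hC0, -, hcomp, hdoub⟩ := hatw_comp hw hwD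
    obtain ⟨A, hA0, hA⟩ := dcheck_sum (hatw w) hw.2.2
      (fun r hr s _ hrs => hatw_anti hw hr.1 hrs) K hK C hC hH
    have hmem : ∀ k : ℕ, (1 - 1 / 2 ^ k : ℝ) ∈ Ico (0:ℝ) 1 := by
      intro k
      have h1 : (1:ℝ) / 2 ^ k ≤ 1 := by
        rw [div_le_one (by positivity)]; exact one_le_pow₀ (by norm_num)
      have h2 : (0:ℝ) < 1 / 2 ^ k := by positivity
      exact ⟨by linarith, by linarith⟩
    have hA' : ∀ m : ℕ, ∑ k ∈ Finset.range (m+1), (FF (muw w) (1 - 1 / 2 ^ k))⁻¹ ≤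
        (C0 * A) * (FF (muw w) (1 - 1 / 2 ^ m))⁻¹ := by
      intro m
      have a1 : ∀ k : ℕ, (FF (muw w) (1 - 1 / 2 ^ k))⁻¹ ≤ C0 * (hatw w (1 - 1 / 2 ^ k))⁻¹ := by
        intro k
        have h1 := hcomp _ (hmem k)
        have h2 := hw.2.2 _ (hmem k)
        have h3 := hg.pos _ (hmem k).2
        rw [← div_eq_mul_inv, inv_eq_one_div, div_le_div_iff₀ h3 h2]
        linarith
      have a2 : (hatw w (1 - 1 / 2 ^ m))⁻¹ ≤ (FF (muw w) (1 - 1 / 2 ^ m))⁻¹ := by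
        refine inv_anti₀ (hg.pos _ (hmem m).2) ?_
        rw [FF_muw hw (hmem m).1]; exact hat1_le hw (hmem m).1
      calc _ ≤ ∑ k ∈ Finset.range (m+1), C0 * (hatw w (1 - 1 / 2 ^ k))⁻¹ :=
            Finset.sum_le_sum fun k _ => a1 k
        _ = C0 * ∑ k ∈ Finset.range (m+1), (hatw w (1 - 1 / 2 ^ k))⁻¹ := by rw [Finset.mul_sum]
        _ ≤ C0 * (A * (hatw w (1 - 1 / 2 ^ m))⁻¹) := mul_le_mul_of_nonneg_left (hA m) hC0.le
        _ ≤ C0 * (A * (FF (muw w) (1 - 1 / 2 ^ m))⁻¹) := by gcongr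
        _ = _ := by ring
    obtain ⟨C1, hC1, hIM⟩ := IM_upper hg hC0.le hdoub (C0 * A) (by positivity) hA'
    exact sufficiency hw hp hα hap hC1 hIM

/-- Theorem 1, second part. Let `1 < p < ∞`, `-1 < α < ∞`, `ω ∈ D̂` a radial
weight and `ν = ω ω̂₁^α`. Then `P⁺_ω` is bounded on `L^p_ν` if and only if `A_p(ω,ν) < ∞` and
`ω ∈ 𝒟 = D̂ ∩ Ď`. -/
theorem maximal_projection_bounded_iff (p α : ℝ) (hp : 1 < p) (hα : -1 < α) (w : ℝ → ℝ)
    (hw : IsRadialWeight w) (hwD : Dhat w) :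
    PplusBounded p w (fun s => w s * hat1 w s ^ α) ↔
      (ApE p w (fun s => w s * hat1 w s ^ α) < ⊤ ∧ Dhat w ∧ Dcheck w) := by
  exact main_aux p α hp hα w hw hwD

end
end

section
/- Let 1 < p < ∞ and α > 1, and consider the radial weights ω ≡ 1 and ν(s) = (1−s²)^{−1} (log(e/(1−s²)))^{−α}. Then ν ∉ Ď, M_p(ω,ν) < ∞, and A_p(ω,ν) = ∞. -/
open MeasureTheory Set Metric
open scoped ENNReal NNReal

noncomputable section

/-- The quantity `M_p(ω,ν) = sup_{0<r<1} (∫₀^r s ν(s)/ω̂₁(s)^p ds + 1)^{1/p} σ̂₁(r)^{1/p'}`. -/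
def MpE (p : ℝ) (w v : ℝ → ℝ) : ℝ≥0∞ :=
  ⨆ r ∈ Set.Ioo (0:ℝ) 1,
    ((∫⁻ s in Set.Ioo 0 r, ENNReal.ofReal (s * v s) / ENNReal.ofReal (hat1 w s) ^ p) + 1) ^ (1 / p) *
      (∫⁻ s in Set.Ioo r 1, ENNReal.ofReal s * sigmaE p w v s) ^ (1 - 1 / p)

open Filter Topology

/-- The logarithm in the weight. -/
def LL (s : ℝ) : ℝ := Real.log (Real.exp 1 / (1 - s ^ 2))

/-- The weight. -/
def vv (α s : ℝ) : ℝ := (1 - s ^ 2)⁻¹ * LL s ^ (-α)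

lemma u_pos {s : ℝ} (h0 : 0 ≤ s) (h1 : s < 1) : 0 < 1 - s ^ 2 := by nlinarith

lemma LL_eq {s : ℝ} (h0 : 0 ≤ s) (h1 : s < 1) : LL s = 1 - Real.log (1 - s ^ 2) := by
  have := u_pos h0 h1
  rw [LL, Real.log_div (Real.exp_pos 1).ne' this.ne', Real.log_exp]

lemma LL_ge {s : ℝ} (h0 : 0 ≤ s) (h1 : s < 1) : 1 ≤ LL s := by
  have := u_pos h0 h1
  rw [LL_eq h0 h1]
  have := Real.log_nonpos this.le (by nlinarith)
  linarith

lemma LL_mono {r s : ℝ} (h0 : 0 ≤ r) (hrs : r ≤ s) (h1 : s < 1) : LL r ≤ LL s := by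
  have := u_pos (h0.trans hrs) h1
  rw [LL_eq h0 (by linarith), LL_eq (by linarith) h1]
  have := Real.log_le_log this (show 1 - s ^ 2 ≤ 1 - r ^ 2 by nlinarith)
  linarith

lemma vv_pos (α : ℝ) {s : ℝ} (h0 : 0 ≤ s) (h1 : s < 1) : 0 < vv α s := by
  have := u_pos h0 h1
  have := LL_ge h0 h1
  unfold vv
  positivity

lemma vv_almost {α r s : ℝ} (hα : 1 < α) (h0 : 0 ≤ r) (hrs : r ≤ s) (h1 : s < 1) :
    vv α r ≤ (1 + α) ^ α * vv α s := by
  have hs := u_pos (h0.trans hrs) h1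
  have hr := u_pos h0 (hrs.trans_lt h1)
  have hLr := LL_ge h0 (hrs.trans_lt h1)
  have hLs := LL_ge (h0.trans hrs) h1
  have hx : 1 ≤ (1 - r ^ 2) / (1 - s ^ 2) := by
    rw [one_le_div hs]; nlinarith
  set x := (1 - r ^ 2) / (1 - s ^ 2) with hxd
  have hlog : Real.log x = LL s - LL r := by
    rw [hxd, Real.log_div hr.ne' hs.ne', LL_eq h0 (hrs.trans_lt h1), LL_eq (h0.trans hrs) h1]
    ring
  have hl2 : Real.log x ≤ α * x ^ (1 / α) := by
    have := Real.log_le_rpow_div (x := x) (ε := 1 / α) (by linarith) (by positivity)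
    calc _ ≤ _ := this
      _ = _ := by field_simp
  have hx1 : 1 ≤ x ^ (1 / α) := Real.one_le_rpow hx (by positivity)
  have hl0 : 0 ≤ Real.log x := Real.log_nonneg hx
  have key : LL s ≤ LL r * ((1 + α) * x ^ (1 / α)) := by
    have : LL s ≤ LL r * (1 + Real.log x) := by nlinarith
    refine this.trans ?_
    gcongr
    nlinarith
  have key2 : LL s ^ α ≤ LL r ^ α * ((1 + α) ^ α * x) := by
    calc LL s ^ α ≤ (LL r * ((1 + α) * x ^ (1 / α))) ^ α := by
          apply Real.rpow_le_rpow (by linarith) key (by linarith)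
      _ = _ := by
          rw [Real.mul_rpow (by linarith) (by positivity),
            Real.mul_rpow (by linarith) (by positivity), ← Real.rpow_mul (by linarith)]
          rw [one_div_mul_cancel (by linarith), Real.rpow_one]
  unfold vv
  rw [Real.rpow_neg (by linarith), Real.rpow_neg (by linarith)]
  have hA : 0 < LL s ^ α := by positivity
  have hB : 0 < LL r ^ α := by positivity
  rw [← mul_inv, ← mul_inv, ← div_eq_mul_inv, ← one_div, div_le_div_iff₀ (by positivity) (by positivity)]
  have : x * (1 - s ^ 2) = 1 - r ^ 2 := by rw [hxd]; field_simp
  calc 1 * ((1 - s ^ 2) * LL s ^ α) ≤ (1 - s ^ 2) * (LL r ^ α * ((1 + α) ^ α * x)) := by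
        rw [one_mul]; gcongr
    _ = (1 + α) ^ α * ((x * (1 - s ^ 2)) * LL r ^ α) := by ring
    _ = _ := by rw [this]

lemma ftc {a b : ℝ} (hab : a ≤ b) {G g : ℝ → ℝ} (hc : ContinuousOn G (Icc a b))
    (hd : ∀ x ∈ Ioo a b, HasDerivAt G (g x) x) (h0 : ∀ x ∈ Ioo a b, 0 ≤ g x) :
    IntegrableOn g (Ioo a b) ∧ ∫ x in Ioo a b, g x = G b - G a ∧
      ∫⁻ x in Ioo a b, ENNReal.ofReal (g x) = ENNReal.ofReal (G b - G a) := by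
  have hi : IntegrableOn g (Ioc a b) :=
    intervalIntegral.integrableOn_deriv_of_nonneg hc hd h0
  have hi' : IntegrableOn g (Ioo a b) := hi.mono_set Ioo_subset_Ioc_self
  have he : ∫ x in Ioo a b, g x = G b - G a := by
    rw [← integral_Ioc_eq_integral_Ioo, ← intervalIntegral.integral_of_le hab]
    apply intervalIntegral.integral_eq_sub_of_hasDerivAt_of_le hab hc hd
    rwa [intervalIntegrable_iff_integrableOn_Ioc_of_le hab]
  refine ⟨hi', he, ?_⟩
  rw [← he, ofReal_integral_eq_lintegral_ofReal hi']
  filter_upwards [ae_restrict_mem measurableSet_Ioo] with x hx using h0 x hx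

lemma hasDeriv_u (s : ℝ) : HasDerivAt (fun s : ℝ => 1 - s ^ 2) (-(2 * s)) s := by
  have := (hasDerivAt_pow 2 s).const_sub 1
  simpa using this

lemma hasDeriv_LL {s : ℝ} (h0 : 0 < s) (h1 : s < 1) :
    HasDerivAt LL (2 * s / (1 - s ^ 2)) s := by
  have hu := u_pos h0.le h1
  have h := ((hasDeriv_u s).log hu.ne').const_sub 1
  have h2 : HasDerivAt LL (-(-(2 * s) / (1 - s ^ 2))) s := by
    refine h.congr_of_eventuallyEq ?_
    filter_upwards [Ioo_mem_nhds h0 h1] with x hx using LL_eq hx.1.le hx.2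
  convert h2 using 1
  ring

lemma tendsto_LL : Tendsto LL (𝓝[<] 1) atTop := by
  have h1 : Tendsto (fun s : ℝ => 1 - s ^ 2) (𝓝[<] 1) (𝓝[>] 0) := by
    rw [tendsto_nhdsWithin_iff]
    constructor
    · have : Tendsto (fun s : ℝ => 1 - s ^ 2) (𝓝 1) (𝓝 (1 - 1 ^ 2)) :=
        (Continuous.tendsto (by fun_prop) 1)
      simp only [one_pow, sub_self] at this
      exact this.mono_left nhdsWithin_le_nhds
    · filter_upwards [Ioo_mem_nhdsLT (show (0:ℝ) < 1 by norm_num)] with x hx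
      exact u_pos hx.1.le hx.2
  have h2 : Tendsto (fun s : ℝ => 1 + -Real.log (1 - s ^ 2)) (𝓝[<] 1) atTop :=
    tendsto_atTop_add_const_left _ _
      (tendsto_neg_atBot_atTop.comp (Real.tendsto_log_nhdsGT_zero.comp h1))
  refine h2.congr' ?_
  filter_upwards [Ioo_mem_nhdsLT (show (0:ℝ) < 1 by norm_num)] with x hx
  rw [LL_eq hx.1.le hx.2]; ring

lemma sv_int {α r : ℝ} (hα : 1 < α) (h0 : 0 < r) (h1 : r < 1) :
    IntegrableOn (fun s => s * vv α s) (Ioo r 1) ∧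
      ∫ s in Ioo r 1, s * vv α s = LL r ^ (1 - α) / (2 * (α - 1)) ∧
      ∫⁻ s in Ioo r 1, ENNReal.ofReal (s * vv α s)
        = ENNReal.ofReal (LL r ^ (1 - α) / (2 * (α - 1))) := by
  have hL1 : LL 1 = 0 := by simp [LL]
  have hG1 : -(LL 1 ^ (1 - α) / (2 * (α - 1))) = 0 := by
    rw [hL1, Real.zero_rpow (by linarith)]; simp
  have hder : ∀ x, 0 < x → x < 1 →
      HasDerivAt (fun s => -(LL s ^ (1 - α) / (2 * (α - 1)))) (x * vv α x) x := by
    intro x hx0 hx1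
    have hL := LL_ge hx0.le hx1
    have hu := u_pos hx0.le hx1
    have := (((hasDeriv_LL hx0 hx1).rpow_const (p := 1 - α) (Or.inl (by linarith))).div_const
      (2 * (α - 1))).fun_neg
    refine this.congr_deriv (Eq.symm ?_)
    rw [vv, show 1 - α - 1 = -α by ring]
    have : α - 1 ≠ 0 := by linarith
    field_simp
    ring
  have := ftc (a := r) (b := 1) h1.le (G := fun s => -(LL s ^ (1 - α) / (2 * (α - 1))))
    (g := fun s => s * vv α s) ?_ ?_ ?_
  · simp only [hG1, zero_sub, neg_neg] at this
    exact this
  · intro x hx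
    rcases hx.2.lt_or_eq with h | h
    · exact (hder x (h0.trans_le hx.1) h).continuousAt.continuousWithinAt
    · subst h
      rw [continuousWithinAt_Icc_iff_Iic h1, ← continuousWithinAt_Iio_iff_Iic]
      unfold ContinuousWithinAt
      simp only [hG1]
      have := (tendsto_rpow_neg_atTop (y := α - 1) (by linarith)).comp tendsto_LL
      have := (this.div_const (2 * (α - 1))).neg
      simpa [Function.comp_def] using this
  · intro x hx
    exact hder x (h0.trans hx.1) hx.2
  · intro x hx
    exact mul_nonneg (h0.trans hx.1).le (vv_pos α (h0.trans hx.1).le hx.2).le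

lemma hat1_one {r : ℝ} (h1 : r < 1) : hat1 (fun _ => (1:ℝ)) r = (1 - r ^ 2) / 2 := by
  unfold hat1
  rw [← integral_Ioc_eq_integral_Ioo, ← intervalIntegral.integral_of_le h1.le]
  simp

lemma lint_s {r : ℝ} (h0 : 0 ≤ r) (h1 : r < 1) :
    ∫⁻ s in Ioo r 1, ENNReal.ofReal s = ENNReal.ofReal ((1 - r ^ 2) / 2) := by
  have := (ftc (a := r) (b := 1) h1.le (G := fun s => s ^ 2 / 2) (g := fun s => s)
    (by fun_prop) ?_ ?_).2.2
  · rw [this]; congr 1; ring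
  · intro x _
    have := (hasDerivAt_pow 2 x).div_const 2
    simpa using this
  · intro x hx; exact h0.trans hx.1.le

lemma lint_u_beta {r β : ℝ} (hβ : 0 < β) (h0 : 0 ≤ r) (h1 : r < 1) :
    ∫⁻ s in Ioo r 1, ENNReal.ofReal (s * (1 - s ^ 2) ^ β)
      = ENNReal.ofReal ((1 - r ^ 2) ^ (1 + β) / (2 * (1 + β))) := by
  have := (ftc (a := r) (b := 1) h1.le (G := fun s => -((1 - s ^ 2) ^ (1 + β) / (2 * (1 + β))))
    (g := fun s => s * (1 - s ^ 2) ^ β) ?_ ?_ ?_).2.2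
  · rw [this]; congr 1
    have : (1 : ℝ) + β ≠ 0 := by positivity
    simp [Real.zero_rpow this]
  · apply Continuous.continuousOn
    have : Continuous fun s : ℝ => (1 - s ^ 2) ^ (1 + β) :=
      Continuous.rpow_const (by fun_prop) (fun _ => Or.inr (by positivity))
    fun_prop
  · intro x hx
    have := (((hasDeriv_u x).rpow_const (p := 1 + β)
      (Or.inl (u_pos (h0.trans hx.1.le) hx.2).ne')).div_const (2 * (1 + β))).fun_neg
    refine this.congr_deriv (Eq.symm ?_)
    rw [show 1 + β - 1 = β by ring]
    field_simp
  · intro x hx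
    have := u_pos (h0.trans hx.1.le) hx.2
    have := h0.trans hx.1.le
    positivity

lemma lint_u_p {r p : ℝ} (hp : 1 < p) (h0 : 0 ≤ r) (h1 : r < 1) :
    ∫⁻ s in Ioo 0 r, ENNReal.ofReal (s * (1 - s ^ 2) ^ (-p))
      ≤ ENNReal.ofReal ((1 - r ^ 2) ^ (1 - p) / (2 * (p - 1))) := by
  have hp' : p - 1 ≠ 0 := by linarith
  have hder : ∀ x ∈ Icc 0 r, HasDerivAt (fun s : ℝ => (1 - s ^ 2) ^ (1 - p) / (2 * (p - 1)))
      (x * (1 - x ^ 2) ^ (-p)) x := by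
    intro x hx
    have := ((hasDeriv_u x).rpow_const (p := 1 - p)
      (Or.inl (u_pos hx.1 (hx.2.trans_lt h1)).ne')).div_const (2 * (p - 1))
    refine this.congr_deriv (Eq.symm ?_)
    rw [show 1 - p - 1 = -p by ring]
    field_simp
    ring
  have := (ftc h0 (G := fun s : ℝ => (1 - s ^ 2) ^ (1 - p) / (2 * (p - 1)))
    (g := fun s => s * (1 - s ^ 2) ^ (-p))
    (fun x hx => (hder x hx).continuousAt.continuousWithinAt)
    (fun x hx => hder x (Ioo_subset_Icc_self hx)) ?_).2.2
  · rw [this]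
    apply ENNReal.ofReal_le_ofReal
    have : 0 < p - 1 := by linarith
    have h2 : 0 ≤ (1 - (0:ℝ) ^ 2) ^ (1 - p) / (2 * (p - 1)) := by
      simp only [ne_eq, OfNat.ofNat_ne_zero, not_false_eq_true, zero_pow, sub_zero, Real.one_rpow]
      positivity
    linarith
  · intro x hx
    have := u_pos hx.1.le (hx.2.trans h1)
    have := hx.1
    positivity

lemma sigma_eq {p : ℝ} (hp : 1 < p) {v : ℝ → ℝ} {s : ℝ} (hv : 0 < v s) :
    sigmaE p (fun _ => (1:ℝ)) v s = ENNReal.ofReal (v s ^ (-(1 / (p - 1)))) := by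
  have hp' : 0 < p - 1 := by linarith
  unfold sigmaE
  rw [ENNReal.ofReal_rpow_of_pos hv, ← ENNReal.ofReal_div_of_pos (by positivity),
    ENNReal.ofReal_rpow_of_pos (by positivity)]
  congr 1
  rw [one_div (v s ^ (1 / p)), ← Real.rpow_neg hv.le, ← Real.rpow_mul hv.le]
  congr 1
  field_simp

lemma not_D {α : ℝ} (hα : 1 < α) : ¬ Dcheck (vv α) := by
  rintro ⟨K, hK, C, hC, h⟩
  have hmeas : Measurable (vv α) := by unfold vv LL; fun_prop
  have hint : ∀ r : ℝ, 0 < r → r < 1 → IntegrableOn (vv α) (Ioo r 1) := by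
    intro r h0 h1
    refine Integrable.mono' ((sv_int hα h0 h1).1.const_mul (1 / r))
      hmeas.aestronglyMeasurable ?_
    filter_upwards [ae_restrict_mem measurableSet_Ioo] with x hx
    have hv := vv_pos α (h0.trans hx.1).le hx.2
    rw [Real.norm_of_nonneg hv.le, ← mul_assoc]
    have : 1 ≤ 1 / r * x := by rw [one_div_mul_eq_div, one_le_div h0]; exact hx.1.le
    nlinarith
  have hup : ∀ r : ℝ, 0 < r → r < 1 →
      hatw (vv α) r ≤ 1 / r * (LL r ^ (1 - α) / (2 * (α - 1))) := by
    intro r h0 h1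
    rw [← (sv_int hα h0 h1).2.1, ← integral_const_mul]
    unfold hatw
    refine setIntegral_mono_on (hint r h0 h1) ((sv_int hα h0 h1).1.const_mul (1 / r))
      measurableSet_Ioo ?_
    intro x hx
    have hv := vv_pos α (h0.trans hx.1).le hx.2
    rw [← mul_assoc]
    have : 1 ≤ 1 / r * x := by rw [one_div_mul_eq_div, one_le_div h0]; exact hx.1.le
    nlinarith
  have hlo : ∀ r : ℝ, 0 < r → r < 1 →
      LL r ^ (1 - α) / (2 * (α - 1)) ≤ hatw (vv α) r := by
    intro r h0 h1
    rw [← (sv_int hα h0 h1).2.1]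
    unfold hatw
    refine setIntegral_mono_on (sv_int hα h0 h1).1 (hint r h0 h1) measurableSet_Ioo ?_
    intro x hx
    have hv := vv_pos α (h0.trans hx.1).le hx.2
    nlinarith [hx.2]
  have hα' : 0 < α - 1 := by linarith
  have main : ∀ r : ℝ, 0 < r → r < 1 →
      C * r ≤ (1 + Real.log (2 * K) / LL r) ^ (α - 1) := by
    intro r h0 h1
    have hr' : 0 < (1 - r) / K := div_pos (by linarith) (by linarith)
    have hr'' : (1 - r) / K < 1 - r := div_lt_self (by linarith) hK
    set R := 1 - (1 - r) / K with hR
    have hR0 : 0 < R := by linarith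
    have hR1 : R < 1 := by linarith
    have hr := h r ⟨h0.le, h1⟩
    have h3 := (mul_le_mul_of_nonneg_left (hlo R hR0 hR1) (by linarith : 0 ≤ C)).trans
      (hr.trans (hup r h0 h1))
    have hLr := LL_ge h0.le h1
    have hLR := LL_ge hR0.le hR1
    have h4 : C * r ≤ (LL R / LL r) ^ (α - 1) := by
      rw [show 1 - α = -(α - 1) by ring, Real.rpow_neg (by linarith),
        Real.rpow_neg (by linarith)] at h3
      rw [Real.div_rpow (by linarith) (by linarith)]
      have hA : 0 < LL R ^ (α - 1) := by positivity
      have hB : 0 < LL r ^ (α - 1) := by positivity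
      rw [le_div_iff₀ hB]
      have h5 := mul_le_mul_of_nonneg_left h3
        (show 0 ≤ r * LL R ^ (α - 1) * LL r ^ (α - 1) * (2 * (α - 1)) by positivity)
      have e1 : r * LL R ^ (α - 1) * LL r ^ (α - 1) * (2 * (α - 1)) *
        (C * ((LL R ^ (α - 1))⁻¹ / (2 * (α - 1)))) = C * r * LL r ^ (α - 1) := by
        field_simp
      have e2 : r * LL R ^ (α - 1) * LL r ^ (α - 1) * (2 * (α - 1)) *
        (1 / r * ((LL r ^ (α - 1))⁻¹ / (2 * (α - 1)))) = LL R ^ (α - 1) := by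
        field_simp
      rwa [e1, e2] at h5
    refine h4.trans (Real.rpow_le_rpow (by positivity) ?_ hα'.le)
    rw [div_le_iff₀ (by linarith), add_mul, div_mul_cancel₀ _ (by linarith), one_mul,
      LL_eq hR0.le hR1, LL_eq h0.le h1]
    have hu := u_pos h0.le h1
    have hU := u_pos hR0.le hR1
    have : Real.log (1 - r ^ 2) ≤ Real.log (2 * K * (1 - R ^ 2)) := by
      apply Real.log_le_log hu
      have e : K * (1 - R) = 1 - r := by rw [hR]; field_simp; ring
      have : 1 - R ≤ 1 - R ^ 2 := by nlinarith
      nlinarith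
    rw [Real.log_mul (by positivity) hU.ne'] at this
    linarith
  have t1 : Tendsto (fun r : ℝ => C * r) (𝓝[<] 1) (𝓝 (C * 1)) :=
    (Continuous.tendsto (by fun_prop) 1).mono_left nhdsWithin_le_nhds
  have t2 : Tendsto (fun r : ℝ => (1 + Real.log (2 * K) / LL r) ^ (α - 1)) (𝓝[<] 1)
      (𝓝 ((1 + 0) ^ (α - 1))) :=
    ((tendsto_LL.const_div_atTop _).const_add 1).rpow_const (Or.inr hα'.le)
  have := le_of_tendsto_of_tendsto t1 t2 (by
    filter_upwards [Ioo_mem_nhdsLT (show (0:ℝ) < 1 by norm_num)] with x hx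
      using main x hx.1 hx.2)
  simp at this
  linarith

lemma M_fin {p α : ℝ} (hp : 1 < p) (hα : 1 < α) : MpE p (fun _ => (1:ℝ)) (vv α) < ⊤ := by
  have hp' : 0 < p - 1 := by linarith
  set C := (1 + α) ^ α with hC
  have hC0 : 0 < C := by positivity
  set K1 := C * 2 ^ p / (2 * (p - 1)) with hK1
  have hK10 : 0 < K1 := by positivity
  set K2 := C ^ (1 / (p - 1)) / 2 with hK2
  have hK20 : 0 < K2 := by positivity
  have hq : 0 < 1 - 1 / p := by rw [sub_pos, div_lt_one] <;> linarith
  refine lt_of_le_of_lt (b := ENNReal.ofReal ((K1 + C) ^ (1 / p) * K2 ^ (1 - 1 / p))) ?_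
    ENNReal.ofReal_lt_top
  unfold MpE
  refine iSup₂_le fun r hr => ?_
  have hu := u_pos hr.1.le hr.2
  have hv := vv_pos α hr.1.le hr.2
  have b1 : ∫⁻ s in Set.Ioo 0 r, ENNReal.ofReal (s * vv α s) /
      ENNReal.ofReal (hat1 (fun _ => (1:ℝ)) s) ^ p
      ≤ ENNReal.ofReal (K1 * vv α r * (1 - r ^ 2) ^ (1 - p)) := by
    calc _ ≤ ∫⁻ s in Set.Ioo 0 r, ENNReal.ofReal (C * 2 ^ p * vv α r) *
            ENNReal.ofReal (s * (1 - s ^ 2) ^ (-p)) := by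
          refine setLIntegral_mono' measurableSet_Ioo fun s hs => ?_
          have hs1 := hs.2.trans hr.2
          have hus := u_pos hs.1.le hs1
          have hs0 := hs.1
          rw [hat1_one hs1, ENNReal.ofReal_rpow_of_pos (by positivity),
            ← ENNReal.ofReal_div_of_pos (by positivity), ← ENNReal.ofReal_mul (by positivity)]
          apply ENNReal.ofReal_le_ofReal
          have := vv_almost hα hs.1.le hs.2.le hr.2
          rw [Real.div_rpow hus.le (by norm_num), Real.rpow_neg hus.le, div_div_eq_mul_div,
            div_eq_mul_inv]
          calc s * vv α s * 2 ^ p * ((1 - s ^ 2) ^ p)⁻¹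
              ≤ s * (C * vv α r) * 2 ^ p * ((1 - s ^ 2) ^ p)⁻¹ := by gcongr
            _ = _ := by ring
      _ = ENNReal.ofReal (C * 2 ^ p * vv α r) *
            ∫⁻ s in Set.Ioo 0 r, ENNReal.ofReal (s * (1 - s ^ 2) ^ (-p)) := by
          rw [lintegral_const_mul' _ _ ENNReal.ofReal_ne_top]
      _ ≤ ENNReal.ofReal (C * 2 ^ p * vv α r) *
            ENNReal.ofReal ((1 - r ^ 2) ^ (1 - p) / (2 * (p - 1))) := by
          gcongr
          exact lint_u_p hp hr.1.le hr.2
      _ = _ := by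
          rw [← ENNReal.ofReal_mul (by positivity)]
          congr 1
          rw [hK1]; ring
  have b2 : (1 : ℝ≥0∞) ≤ ENNReal.ofReal (C * vv α r * (1 - r ^ 2) ^ (1 - p)) := by
    rw [ENNReal.one_le_ofReal]
    have h1 := vv_almost hα le_rfl hr.1.le hr.2
    have h2 : vv α 0 = 1 := by simp [vv, LL]
    have h3 : 1 ≤ (1 - r ^ 2) ^ (1 - p) :=
      Real.one_le_rpow_of_pos_of_le_one_of_nonpos hu (by nlinarith) (by linarith)
    rw [h2] at h1
    nlinarith
  have b3 : ∫⁻ s in Set.Ioo r 1, ENNReal.ofReal s * sigmaE p (fun _ => (1:ℝ)) (vv α) s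
      ≤ ENNReal.ofReal (K2 * vv α r ^ (-(1 / (p - 1))) * (1 - r ^ 2)) := by
    calc _ ≤ ∫⁻ s in Set.Ioo r 1, ENNReal.ofReal s *
            ENNReal.ofReal (C ^ (1 / (p - 1)) * vv α r ^ (-(1 / (p - 1)))) := by
          refine setLIntegral_mono' measurableSet_Ioo fun s hs => ?_
          have hs0 := hr.1.trans hs.1
          have hvs := vv_pos α hs0.le hs.2
          rw [sigma_eq hp hvs]
          gcongr
          have := vv_almost hα hr.1.le hs.1.le hs.2
          have h2 := Real.rpow_le_rpow hv.le this (show 0 ≤ 1 / (p - 1) by positivity)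
          rw [Real.mul_rpow hC0.le hvs.le] at h2
          rw [Real.rpow_neg hvs.le, Real.rpow_neg hv.le, ← div_eq_mul_inv,
            le_div_iff₀ (by positivity), inv_mul_le_iff₀ (by positivity)]
          linarith
      _ = ENNReal.ofReal ((1 - r ^ 2) / 2) *
            ENNReal.ofReal (C ^ (1 / (p - 1)) * vv α r ^ (-(1 / (p - 1)))) := by
          rw [lintegral_mul_const' _ _ ENNReal.ofReal_ne_top, lint_s hr.1.le hr.2]
      _ = _ := by
          rw [← ENNReal.ofReal_mul (by positivity)]
          congr 1
          rw [hK2]; ring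
  have b12 := add_le_add b1 b2
  rw [← ENNReal.ofReal_add (by positivity) (by positivity)] at b12
  refine (mul_le_mul' (ENNReal.rpow_le_rpow b12 (by positivity))
    (ENNReal.rpow_le_rpow b3 hq.le)).trans ?_
  rw [ENNReal.ofReal_rpow_of_pos (by positivity), ENNReal.ofReal_rpow_of_pos (by positivity),
    ← ENNReal.ofReal_mul (by positivity)]
  apply ENNReal.ofReal_le_ofReal
  apply le_of_eq
  rw [← add_mul, ← add_mul]
  rw [Real.mul_rpow (by positivity) (by positivity), Real.mul_rpow (by positivity) (by positivity),
    Real.mul_rpow (by positivity) (by positivity), Real.mul_rpow (by positivity) (by positivity),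
    ← Real.rpow_mul hu.le, ← Real.rpow_mul hv.le]
  have e1 : vv α r ^ (1 / p) * vv α r ^ (-(1 / (p - 1)) * (1 - 1 / p)) = 1 := by
    rw [← Real.rpow_add hv, show 1 / p + -(1 / (p - 1)) * (1 - 1 / p) = 0 by field_simp; ring,
      Real.rpow_zero]
  have e2 : (1 - r ^ 2) ^ ((1 - p) * (1 / p)) * (1 - r ^ 2) ^ (1 - 1 / p) = 1 := by
    rw [← Real.rpow_add hu, show (1 - p) * (1 / p) + (1 - 1 / p) = 0 by field_simp; ring,
      Real.rpow_zero]
  calc _ = (K1 + C) ^ (1 / p) * K2 ^ (1 - 1 / p) *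
        (vv α r ^ (1 / p) * vv α r ^ (-(1 / (p - 1)) * (1 - 1 / p))) *
        ((1 - r ^ 2) ^ ((1 - p) * (1 / p)) * (1 - r ^ 2) ^ (1 - 1 / p)) := by ring
    _ = _ := by rw [e1, e2]; ring

lemma A_top {p α : ℝ} (hp : 1 < p) (hα : 1 < α) : ApE p (fun _ => (1:ℝ)) (vv α) = ⊤ := by
  have hp' : 0 < p - 1 := by linarith
  have hα' : 0 < α - 1 := by linarith
  have hq : 0 < 1 - 1 / p := by rw [sub_pos, div_lt_one] <;> linarith
  set β := 1 / (p - 1) with hβ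
  have hβ0 : 0 < β := by positivity
  set c := (1 / (2 * (α - 1))) ^ (1 / p) * (1 / (2 * (1 + β))) ^ (1 - 1 / p) * 2 with hc
  have hc0 : 0 < c := by positivity
  have main : ∀ r : ℝ, 0 < r → r < 1 →
      ENNReal.ofReal (c * LL r ^ (1 / p)) ≤ ApE p (fun _ => (1:ℝ)) (vv α) := by
    intro r h0 h1
    have hu := u_pos h0.le h1
    have hL := LL_ge h0.le h1
    have hLp : 0 < LL r := by linarith
    unfold ApE
    refine le_trans ?_ (le_iSup₂ (f := fun (r : ℝ) (_ : r ∈ Set.Ico (0:ℝ) 1) =>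
      (∫⁻ s in Set.Ioo r 1, ENNReal.ofReal (s * vv α s)) ^ (1 / p) *
      (∫⁻ s in Set.Ioo r 1, ENNReal.ofReal s * sigmaE p (fun _ => (1:ℝ)) (vv α) s) ^ (1 - 1 / p) /
      ENNReal.ofReal (hat1 (fun _ => (1:ℝ)) r)) r ⟨h0.le, h1⟩)
    have b : ENNReal.ofReal (LL r ^ (α * β) * ((1 - r ^ 2) ^ (1 + β) / (2 * (1 + β)))) ≤
        ∫⁻ s in Set.Ioo r 1, ENNReal.ofReal s * sigmaE p (fun _ => (1:ℝ)) (vv α) s := by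
      rw [ENNReal.ofReal_mul (by positivity), ← lint_u_beta hβ0 h0.le h1,
        ← lintegral_const_mul' _ _ ENNReal.ofReal_ne_top]
      refine setLIntegral_mono' measurableSet_Ioo fun s hs => ?_
      have hs0 := h0.trans hs.1
      have hvs := vv_pos α hs0.le hs.2
      have hus := u_pos hs0.le hs.2
      have hLs := LL_ge hs0.le hs.2
      rw [sigma_eq hp hvs, ← ENNReal.ofReal_mul (by positivity), ← ENNReal.ofReal_mul hs0.le]
      apply ENNReal.ofReal_le_ofReal
      have e : vv α s ^ (-(1 / (p - 1))) = (1 - s ^ 2) ^ β * LL s ^ (α * β) := by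
        rw [← hβ, vv, Real.mul_rpow (by positivity) (by positivity),
          ← Real.rpow_mul (by linarith), Real.inv_rpow hus.le, Real.rpow_neg hus.le, inv_inv]
        congr 2
        ring
      rw [e]
      calc LL r ^ (α * β) * (s * (1 - s ^ 2) ^ β) ≤ LL s ^ (α * β) * (s * (1 - s ^ 2) ^ β) := by
            gcongr
            exact LL_mono h0.le hs.1.le hs.2
        _ = _ := by ring
    rw [(sv_int hα h0 h1).2.2, hat1_one h1]
    refine le_trans ?_ (ENNReal.div_le_div_right
      (mul_le_mul' le_rfl (ENNReal.rpow_le_rpow b hq.le)) _)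
    rw [ENNReal.ofReal_rpow_of_pos (by positivity), ENNReal.ofReal_rpow_of_pos (by positivity),
      ← ENNReal.ofReal_mul (by positivity), ← ENNReal.ofReal_div_of_pos (by positivity)]
    apply ENNReal.ofReal_le_ofReal
    apply le_of_eq
    rw [div_eq_mul_one_div (LL r ^ (1 - α)), div_eq_mul_one_div ((1 - r ^ 2) ^ (1 + β)),
      Real.mul_rpow (by positivity) (by positivity), Real.mul_rpow (by positivity) (by positivity),
      Real.mul_rpow (by positivity) (by positivity), ← Real.rpow_mul hLp.le,
      ← Real.rpow_mul hLp.le, ← Real.rpow_mul hu.le]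
    have e1 : LL r ^ ((1 - α) * (1 / p)) * LL r ^ (α * β * (1 - 1 / p)) = LL r ^ (1 / p) := by
      rw [← Real.rpow_add hLp]
      congr 1
      rw [hβ]; field_simp; ring
    have e2 : (1 - r ^ 2) ^ ((1 + β) * (1 - 1 / p)) = 1 - r ^ 2 := by
      rw [show (1 + β) * (1 - 1 / p) = 1 by rw [hβ]; field_simp; ring, Real.rpow_one]
    rw [e2, ← e1, hc]
    field_simp
  apply ENNReal.eq_top_of_forall_nnreal_le
  intro M
  have t : Tendsto (fun r => c * LL r ^ (1 / p)) (𝓝[<] 1) atTop :=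
    ((tendsto_rpow_atTop (show 0 < 1 / p by positivity)).comp tendsto_LL).const_mul_atTop hc0
  obtain ⟨r, hr, hM⟩ := (Filter.Eventually.and
    (Ioo_mem_nhdsLT (show (0:ℝ) < 1 by norm_num)) (t.eventually_ge_atTop (M : ℝ))).exists
  refine le_trans ?_ (main r hr.1 hr.2)
  rw [← ENNReal.ofReal_coe_nnreal]
  exact ENNReal.ofReal_le_ofReal hM

/-- Let `1 < p < ∞` and `α > 1`, and consider `ω ≡ 1` and
`ν(s) = (1-s²)⁻¹ (log(e/(1-s²)))^{-α}`. Then `ν ∉ Ď`, `M_p(ω,ν) < ∞` and `A_p(ω,ν) = ∞`. -/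
theorem log_weight_example (p α : ℝ) (hp : 1 < p) (hα : 1 < α) :
    ¬ Dcheck (fun s => (1 - s ^ 2)⁻¹ * Real.log (Real.exp 1 / (1 - s ^ 2)) ^ (-α)) ∧
    MpE p (fun _ => (1:ℝ))
      (fun s => (1 - s ^ 2)⁻¹ * Real.log (Real.exp 1 / (1 - s ^ 2)) ^ (-α)) < ⊤ ∧
    ApE p (fun _ => (1:ℝ))
      (fun s => (1 - s ^ 2)⁻¹ * Real.log (Real.exp 1 / (1 - s ^ 2)) ^ (-α)) = ⊤ := by
  exact ⟨not_D hα, M_fin hp hα, A_top hp hα⟩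

end
end
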